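/- Let X be a non-empty subshift of edge-to-edge rhombus tilings (on a finite shapeset 𝒯) that is shape uniformly recurrent. Then the decision problem Domino(X) — given a finite 𝒯-tileset 𝐓, decide whether there exists a valid 𝐓-tiling x with π(x) ∈ X — is Π⁰₁-hard: every co-computably enumerable decision problem many-one reduces to Domino(X). In particular, Domino(X) is undecidable. -/

import Mathlib

open Set Metric

noncomputable section

/-- Points of the euclidean plane. -/
abbrev Pt : Type := EuclideanSpace ℝ (Fin 2)

/-- A rhombus tile in the plane, given by a position (a distinguished vertex)
and its two edge vectors. -/
structure Rhombus where
  pos : Pt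
  u : Pt
  v : Pt

namespace Rhombus

/-- A genuine rhombus: linearly independent edge vectors of equal euclidean length. -/
def IsValid (r : Rhombus) : Prop :=
  LinearIndependent ℝ ![r.u, r.v] ∧ ‖r.u‖ = ‖r.v‖

/-- The support of a rhombus: the closed parallelogram it spans. -/
def support (r : Rhombus) : Set Pt :=
  {x | ∃ s t : ℝ, s ∈ Icc (0 : ℝ) 1 ∧ t ∈ Icc (0 : ℝ) 1 ∧ x = r.pos + s • r.u + t • r.v}

/-- The four vertices of a rhombus. -/
def vertices (r : Rhombus) : Set Pt :=
  {r.pos, r.pos + r.u, r.pos + r.v, r.pos + r.u + r.v}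

/-- The four (closed) edges of a rhombus, indexed as in the paper:
edge `0` from `pos` to `pos + u`, edge `1` from `pos + u` to `pos + u + v`,
edge `2` from `pos + u + v` to `pos + v`, edge `3` from `pos + v` to `pos`. -/
def edge (r : Rhombus) : Fin 4 → Set Pt :=
  ![segment ℝ r.pos (r.pos + r.u),
    segment ℝ (r.pos + r.u) (r.pos + r.u + r.v),
    segment ℝ (r.pos + r.u + r.v) (r.pos + r.v),
    segment ℝ (r.pos + r.v) r.pos]

/-- The set of edges of a rhombus. -/
def edges (r : Rhombus) : Set (Set Pt) := Set.range r.edge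

/-- Translation of a rhombus by a vector. -/
def translate (r : Rhombus) (w : Pt) : Rhombus := ⟨r.pos + w, r.u, r.v⟩

/-- The center of a rhombus. -/
def center (r : Rhombus) : Pt := r.pos + (2⁻¹ : ℝ) • r.u + (2⁻¹ : ℝ) • r.v

/-- Two rhombi are translates of each other (same shape up to translation). -/
def SameShape (r s : Rhombus) : Prop := r.u = s.u ∧ r.v = s.v

/-- `w` is one of the two edge directions of `r` (up to sign). -/
def HasEdgeDir (r : Rhombus) (w : Pt) : Prop :=
  r.u = w ∨ r.u = -w ∨ r.v = w ∨ r.v = -w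

end Rhombus

/-- Two rhombi are in edge-to-edge position: they are disjoint, share exactly one
common vertex, or share exactly one full common edge. -/
def EdgeToEdgePair (r s : Rhombus) : Prop :=
  r.support ∩ s.support = ∅ ∨
  (∃ p, p ∈ r.vertices ∧ p ∈ s.vertices ∧ r.support ∩ s.support = {p}) ∨
  (∃ e, e ∈ r.edges ∧ e ∈ s.edges ∧ r.support ∩ s.support = e)

/-- An edge-to-edge rhombus tiling of the plane: a covering of the plane
without overlap where any two tiles are disjoint, share exactly one vertex or
share a full common edge. -/
def IsTiling (x : Set Rhombus) : Prop :=
  (∀ r ∈ x, r.IsValid) ∧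
  (⋃ r ∈ x, r.support) = univ ∧
  ∀ r ∈ x, ∀ s ∈ x, r ≠ s → EdgeToEdgePair r s

/-- Every tile of `x` is a translate of a shape of the shapeset `T`. -/
def UsesShapes (T : Set Rhombus) (x : Set Rhombus) : Prop :=
  ∀ r ∈ x, ∃ s ∈ T, r.SameShape s

/-- An edge-to-edge tiling whose tiles are translates of shapes of `T`. -/
def IsTilingOn (T : Set Rhombus) (x : Set Rhombus) : Prop :=
  IsTiling x ∧ UsesShapes T x

/-- Support of a patch. -/
def PatchSupport (P : Set Rhombus) : Set Pt := ⋃ r ∈ P, r.support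

/-- A patch: a finite nonempty edge-to-edge set of rhombi whose support is
simply connected (no holes). -/
def IsPatch (P : Set Rhombus) : Prop :=
  P.Finite ∧ P.Nonempty ∧ (∀ r ∈ P, r.IsValid) ∧
  (∀ r ∈ P, ∀ s ∈ P, r ≠ s → EdgeToEdgePair r s) ∧
  SimplyConnectedSpace (PatchSupport P)

/-- Translation of a set of rhombi. -/
def translatePatch (P : Set Rhombus) (w : Pt) : Set Rhombus :=
  (fun r => r.translate w) '' P

/-- The pattern `f` appears in `x`: some translate of `f` is a sub-collection of `x`. -/
def Appears (f : Set Rhombus) (x : Set Rhombus) : Prop :=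
  ∃ w : Pt, translatePatch f w ⊆ x

/-- Vertices of a patch. -/
def PatchVertices (P : Set Rhombus) : Set Pt := ⋃ r ∈ P, r.vertices

/-- The support of `P` contains a disk of radius `ρ` centered at a vertex of `P`. -/
def HasRadius (P : Set Rhombus) (ρ : ℝ) : Prop :=
  ∃ c ∈ PatchVertices P, closedBall c ρ ⊆ PatchSupport P

/-- `P` has minimal radius `ρ`: its support contains a disk of radius `ρ` centered
at one of its vertices, and removing any tile breaks this property. -/
def MinimalRadius (P : Set Rhombus) (ρ : ℝ) : Prop :=
  HasRadius P ρ ∧ ∀ r ∈ P, ¬ HasRadius (P \ {r}) ρ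

/-- A rhombus Wang tile: a rhombus with a colour (a natural number) on each edge. -/
structure ColoredRhombus where
  shape : Rhombus
  color : Fin 4 → ℕ

namespace ColoredRhombus

def translate (t : ColoredRhombus) (w : Pt) : ColoredRhombus :=
  ⟨t.shape.translate w, t.color⟩

/-- Two coloured tiles are equal up to translation. -/
def SameTile (t s : ColoredRhombus) : Prop :=
  t.shape.SameShape s.shape ∧ t.color = s.color

end ColoredRhombus

/-- The colour-erasing operator `π`. -/
def eraseColors (x : Set ColoredRhombus) : Set Rhombus := ColoredRhombus.shape '' x

def translateColoredPatch (P : Set ColoredRhombus) (w : Pt) : Set ColoredRhombus :=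
  (fun t => t.translate w) '' P

/-- Any two tiles sharing an edge carry the same colour on the shared edge. -/
def ColorMatching (x : Set ColoredRhombus) : Prop :=
  ∀ t ∈ x, ∀ s ∈ x, t.shape ≠ s.shape →
    ∀ i j : Fin 4, t.shape.edge i = s.shape.edge j → t.color i = s.color j

/-- No two distinct coloured tiles occupy the same rhombus. -/
def ShapeInjective (x : Set ColoredRhombus) : Prop :=
  ∀ t ∈ x, ∀ s ∈ x, t.shape = s.shape → t = s

/-- A valid tiling by rhombus Wang tiles. -/
def IsColoredTiling (x : Set ColoredRhombus) : Prop :=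
  IsTiling (eraseColors x) ∧ ShapeInjective x ∧ ColorMatching x

/-- A valid patch of rhombus Wang tiles. -/
def IsColoredPatch (x : Set ColoredRhombus) : Prop :=
  IsPatch (eraseColors x) ∧ ShapeInjective x ∧ ColorMatching x

/-- All tiles of `x` are translates of tiles of the tileset `T`. -/
def TilesFrom (T : Set ColoredRhombus) (x : Set ColoredRhombus) : Prop :=
  ∀ t ∈ x, ∃ s ∈ T, t.SameTile s

/-- A subshift on the shapeset `T`: a set of `T`-tilings that is invariant under
translation and closed for the tiling topology (a tiling all of whose finite
patterns appear in tilings of `X` belongs to `X`). -/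
def IsSubshift (T : Set Rhombus) (X : Set (Set Rhombus)) : Prop :=
  (∀ x ∈ X, IsTilingOn T x) ∧
  (∀ x ∈ X, ∀ w : Pt, translatePatch x w ∈ X) ∧
  (∀ x, IsTilingOn T x →
    (∀ P, P ⊆ x → P.Finite → P.Nonempty → ∃ y ∈ X, Appears P y) → x ∈ X)

/-- The shape `r` is uniformly recurrent in the tiling `x`: for some `R > 0`,
every disk of radius `R` contains an occurrence (a translate) of `r`. -/
def UniformlyRecurrentIn (r : Rhombus) (x : Set Rhombus) : Prop :=
  ∃ R : ℝ, 0 < R ∧ ∀ p : Pt, ∃ s ∈ x, s.SameShape r ∧ s.support ⊆ closedBall p R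

/-- A shape uniformly recurrent subshift: every shape appearing somewhere in `X`
is uniformly recurrent in every tiling of `X`. -/
def ShapeUniformlyRecurrent (X : Set (Set Rhombus)) : Prop :=
  ∀ r : Rhombus, (∃ y ∈ X, ∃ s ∈ y, s.SameShape r) →
    ∀ x ∈ X, UniformlyRecurrentIn r x

/-- The restriction of `X` to the tilings using only shapes of `T'`. -/
def restrictShapes (T' : Set Rhombus) (X : Set (Set Rhombus)) : Set (Set Rhombus) :=
  {x ∈ X | UsesShapes T' x}

/-- The subshift on `T` defined by the sequence `F` of forbidden patterns. -/
def SubshiftOfForbidden (T : Set Rhombus) (F : ℕ → Set Rhombus) : Set (Set Rhombus) :=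
  {x | IsTilingOn T x ∧ ∀ n : ℕ, ¬ Appears (F n) x}

/-- A chain of rhombuses of normal vector `w` in the tiling `x`: a bi-infinite
sequence of tiles in which any two consecutive tiles share a full common edge of
direction `w`, the chain crossing each of its tiles from one of its two
`w`-edges to the other one. -/
structure Chain (x : Set Rhombus) (w : Pt) where
  seq : ℤ → Rhombus
  mem : ∀ n : ℤ, seq n ∈ x
  shares : ∀ n : ℤ, ∃ a : Pt,
    segment ℝ a (a + w) ∈ (seq n).edges ∧
    segment ℝ a (a + w) ∈ (seq (n + 1)).edges ∧
    (seq n).support ∩ (seq (n + 1)).support = segment ℝ a (a + w)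
  progress : ∀ n : ℤ,
    (seq (n - 1)).support ∩ (seq n).support ≠ (seq n).support ∩ (seq (n + 1)).support

/-- The set of tiles of a chain. -/
def Chain.tiles {x : Set Rhombus} {w : Pt} (c : Chain x w) : Set Rhombus :=
  Set.range c.seq

/-- A symbolic Wang tile on the shapeset indexed by `Fin k`: a shape index
together with the four edge colours `(a₀, a₁, a₂, a₃)`. -/
abbrev SymbTile (k : ℕ) : Type := Fin k × ℕ × ℕ × ℕ × ℕ

/-- The colours of a symbolic tile, as a function on edge indices. -/
def SymbTile.colors {k : ℕ} (t : SymbTile k) : Fin 4 → ℕ :=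
  ![t.2.1, t.2.2.1, t.2.2.2.1, t.2.2.2.2]

/-- The geometric coloured tile `t` is a translate of the symbolic tile `p`. -/
def Realizes {k : ℕ} (shapes : Fin k → Rhombus) (t : ColoredRhombus) (p : SymbTile k) :
    Prop :=
  t.shape.SameShape (shapes p.1) ∧ t.color = SymbTile.colors p

/-- The Domino problem on the subshift `X`: given a tileset `T`, decide whether
there is a valid tiling by translates of tiles of `T` whose colour-erased image
belongs to `X`. -/
def DominoPred {k : ℕ} (shapes : Fin k → Rhombus) (X : Set (Set Rhombus))
    (T : List (SymbTile k)) : Prop :=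
  ∃ x : Set ColoredRhombus, IsColoredTiling x ∧
    (∀ t ∈ x, ∃ p ∈ T, Realizes shapes t p) ∧ eraseColors x ∈ X

/-- A displacement code: a formal integer combination of edge vectors of the shapes. -/
abbrev Disp (k : ℕ) : Type := List (Fin k × ℤ × ℤ)

/-- The vector coded by a displacement code. -/
def dispVec {k : ℕ} (shapes : Fin k → Rhombus) (d : Disp k) : Pt :=
  (d.map (fun e => (e.2.1 : ℝ) • (shapes e.1).u + (e.2.2 : ℝ) • (shapes e.1).v)).sum

/-- A code for a pattern of (uncoloured) shapes: each entry is a shape index and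
the displacement of the corresponding tile. -/
abbrev PatternCode (k : ℕ) : Type := List (Fin k × Disp k)

/-- The pattern coded by a pattern code. -/
def decodePattern {k : ℕ} (shapes : Fin k → Rhombus) (c : PatternCode k) : Set Rhombus :=
  {r | ∃ e ∈ c, r = (shapes e.1).translate (dispVec shapes e.2)}

/-- A code for a pattern of coloured tiles. -/
abbrev ColoredCode (k : ℕ) : Type := List (SymbTile k × Disp k)

/-- The coloured pattern coded by a coloured pattern code. -/
def decodeColored {k : ℕ} (shapes : Fin k → Rhombus) (c : ColoredCode k) :
    Set ColoredRhombus :=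
  {t | ∃ e ∈ c,
    t = ColoredRhombus.mk ((shapes e.1.1).translate (dispVec shapes e.2))
          (SymbTile.colors e.1)}

/-- A decision problem is `Π⁰₁` (co-computably enumerable): there is a total
computable `f` such that `A x ↔ ∀ n, f x n = true`. -/
def Pi01 {α : Type} [Primcodable α] (A : α → Prop) : Prop :=
  ∃ f : α → ℕ → Bool, Computable₂ f ∧ ∀ a, A a ↔ ∀ n : ℕ, f a n = true

/-- A decision problem is `Π⁰₁`-hard: every `Π⁰₁` problem many-one reduces to it. -/
def Pi01Hard {α : Type} [Primcodable α] (A : α → Prop) : Prop :=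
  ∀ (β : Type) [Primcodable β], ∀ B : β → Prop, Pi01 B → ManyOneReducible B A

namespace Hier

/-- Edge labels of the hierarchical tile set. -/
structure Lab (A : Type) where
  b : Bool
  r : Fin 8
  f : Bool
  m : Fin 4
  tf : Bool
  tm : Fin 4
  d : A

def stp (odd : Prop) [Decidable odd] : ℕ := if odd then 2 else 1

/-- Half of the conditions in a cell in which column and row have the same level. -/
def EqHalf {A : Type} (cy : Prop) [Decidable cy] (w e s : Lab A) : Prop :=
  (w.r.val = 1 ∨ w.r.val = 5) ∧ e.r.val = (w.r.val + stp cy) % 8 ∧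
  (s.b = true ↔ w.r.val = 5) ∧
  (s.m.val = (w.tm.val + (if s.f = true then 1 else 0)) % 4) ∧
  e.tf = s.f ∧ e.tm = s.m

def EqCell {A : Type} (C : Bool → Bool → A → A → A → A → Prop) (cx cy : Prop) [Decidable cx]
    [Decidable cy] (w e s n : Lab A) : Prop :=
  EqHalf cy w e s ∧ EqHalf cx s n w ∧ C s.f w.f w.d e.d s.d n.d

def LtCell {A : Type} (cx : Prop) [Decidable cx] (w e s n : Lab A) : Prop :=
  n.r.val = (s.r.val + stp cx) % 8 ∧
  ((s.r.val = 3 ∧ w.r.val % 2 = 0 ∧ e.r.val = w.r.val + 1 ∧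
      (w.f = true ↔ (s.tf = true ∧ s.tm.val = 0))) ∨
   (s.r.val = 7 ∧ e.r = w.r ∧ ¬ (s.tf = true ∧ s.tm.val = 0))) ∧
  e.tf = w.tf ∧ e.tm = w.tm ∧ n.tf = s.tf ∧ n.tm = s.tm ∧ e.d = w.d ∧ n.d = s.d

def Cell {A : Type} (C : Bool → Bool → A → A → A → A → Prop) (cx cy : Prop) [Decidable cx]
    [Decidable cy] (w e s n : Lab A) : Prop :=
  (e.b = w.b ∧ e.f = w.f ∧ e.m = w.m ∧ n.b = s.b ∧ n.f = s.f ∧ n.m = s.m) ∧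
  ((EqCell C cx cy w e s n ∧ (cx ↔ cy)) ∨ (LtCell cx w e s n ∧ ¬ cy) ∨
    (LtCell cy s n w e ∧ ¬ cx))

def Good {A : Type} (C : Bool → Bool → A → A → A → A → Prop) (h v : ℤ → ℤ → Lab A) : Prop :=
  ∀ x y : ℤ, Cell C (x % 2 = 1) (y % 2 = 1) (h x y) (h (x + 1) y) (v x y) (v x (y + 1))

def tr {A : Type} (C : Bool → Bool → A → A → A → A → Prop) :
    Bool → Bool → A → A → A → A → Prop := fun fx fy w e s n => C fy fx s n w e

theorem Good.transp {A : Type} {C : Bool → Bool → A → A → A → A → Prop} {h v : ℤ → ℤ → Lab A}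
    (H : Good C h v) : Good (tr C) (fun x y => v y x) (fun x y => h y x) := by
  intro x y
  obtain ⟨h1, h2⟩ := H y x
  refine ⟨?_, ?_⟩
  · tauto
  · rcases h2 with ⟨⟨a, b, c⟩, h⟩ | h | h
    · exact Or.inl ⟨⟨b, a, c⟩, h.symm⟩
    · exact Or.inr (Or.inr h)
    · exact Or.inr (Or.inl h)

section
variable {A : Type} {C : Bool → Bool → A → A → A → A → Prop} {h v : ℤ → ℤ → Lab A}

theorem Good.oo (H : Good C h v) (i j : ℤ) :
    EqCell C True True (h (2*i+1) (2*j+1)) (h (2*i+2) (2*j+1)) (v (2*i+1) (2*j+1))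
      (v (2*i+1) (2*j+2)) := by
  obtain ⟨h1, h2⟩ := H (2*i+1) (2*j+1)
  have e1 : (2*i+1) % 2 = 1 := by omega
  have e2 : (2*j+1) % 2 = 1 := by omega
  have e3 : 2*i+1+1 = 2*i+2 := by ring
  have e4 : 2*j+1+1 = 2*j+2 := by ring
  rw [e3, e4] at h2
  rcases h2 with ⟨h, _⟩ | h | h
  · simpa [EqCell, EqHalf, stp, e1, e2] using h
  · exact absurd e2 h.2
  · exact absurd e1 h.2

theorem Good.oe (H : Good C h v) (i j : ℤ) :
    LtCell True (h (2*i+1) (2*j)) (h (2*i+2) (2*j)) (v (2*i+1) (2*j))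
      (v (2*i+1) (2*j+1)) := by
  obtain ⟨h1, h2⟩ := H (2*i+1) (2*j)
  have e1 : (2*i+1) % 2 = 1 := by omega
  have e2 : ¬ ((2*j) % 2 = 1) := by omega
  have e3 : 2*i+1+1 = 2*i+2 := by ring
  rw [e3] at h2
  rcases h2 with ⟨_, h⟩ | h | h
  · tauto
  · simpa [LtCell, stp, e1] using h.1
  · exact absurd e1 h.2

theorem Good.eo (H : Good C h v) (i j : ℤ) :
    LtCell True (v (2*i) (2*j+1)) (v (2*i) (2*j+2)) (h (2*i) (2*j+1))
      (h (2*i+1) (2*j+1)) := H.transp.oe j i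

/-- Row labels are constant. -/
theorem Good.rowconst (H : Good C h v) (x y x' : ℤ) :
    (h x y).b = (h x' y).b ∧ (h x y).f = (h x' y).f ∧ (h x y).m = (h x' y).m := by
  have key : ∀ x : ℤ, (h x y).b = (h 0 y).b ∧ (h x y).f = (h 0 y).f ∧ (h x y).m = (h 0 y).m := by
    intro x
    induction x using Int.induction_on with
    | zero => simp
    | succ i ih =>
      obtain ⟨⟨a, b, c, _⟩, _⟩ := H i y
      simp_all
    | pred i ih =>
      obtain ⟨⟨a, b, c, _⟩, _⟩ := H (-i-1) y
      simp_all
  have := key x; have := key x'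
  simp_all

theorem Good.rind (H : Good C h v) (i i' j : ℤ) :
    (v (2*i+1) (2*j)).r = (v (2*i'+1) (2*j)).r := by
  have a := H.oe i j
  have b := H.oe i' j
  have a2 := H.oo i j
  have b2 := H.oo i' j
  have c := (H.rowconst (2*i+1) (2*j+1) (2*i'+1)).1
  simp only [EqCell, EqHalf, LtCell, stp, if_true] at a b a2 b2
  obtain ⟨_, ⟨_, _, a3, _⟩, _⟩ := a2
  obtain ⟨_, ⟨_, _, b3, _⟩, _⟩ := b2
  rw [c] at a3
  have := a3.symm.trans b3
  apply Fin.ext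
  omega

theorem Good.rstep (H : Good C h v) (i j : ℤ) :
    ((v (2*i+1) (2*j)).r.val = 3 ∨ (v (2*i+1) (2*j)).r.val = 7) ∧
    ((v (2*i+1) (2*(j+1))).r.val = 3 ↔ (v (2*i+1) (2*j)).r.val = 7) := by
  have a := H.oe i j
  have b := H.oe i (j+1)
  have a2 := H.oo i j
  have e : 2*(j+1) = 2*j+2 := by ring
  rw [e] at b ⊢
  simp only [EqCell, EqHalf, LtCell, stp, if_true] at a b a2
  omega

theorem Good.ralt (H : Good C h v) : ∃ ε : ℤ, ∀ i j : ℤ,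
    ((v (2*i+1) (2*(j+ε))).r.val = 3 ∧ j % 2 = 1) ∨
    ((v (2*i+1) (2*(j+ε))).r.val = 7 ∧ j % 2 = 0) := by
  have key : ∀ (e : ℤ), (v 1 (2*e)).r.val = 7 → ∀ j : ℤ,
      ((v 1 (2*(j+e))).r.val = 3 ↔ j % 2 = 1) := by
    intro e he j
    induction j using Int.induction_on with
    | zero => simp [he]
    | succ j ih =>
      have a := H.rstep 0 (j+e)
      have a' := H.rstep 0 (j+1+e)
      have e1 : (j:ℤ)+e+1 = j+1+e := by ring
      rw [e1] at a
      simp at a a'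
      omega
    | pred j ih =>
      have a := H.rstep 0 (-j-1+e)
      have a' := H.rstep 0 (-j+e)
      have e1 : -(j:ℤ)-1+e+1 = -j+e := by ring
      rw [e1] at a
      simp at a a'
      omega
  have : ∃ e : ℤ, (v 1 (2*e)).r.val = 7 := by
    have a := H.rstep 0 0
    have b := H.rstep 0 1
    simp only [mul_zero, zero_add, mul_one] at a b
    rcases a.1 with a1 | a1
    · refine ⟨1, ?_⟩
      rw [mul_one]
      omega
    · exact ⟨0, by simpa using a1⟩
  obtain ⟨e, he⟩ := this
  refine ⟨e, fun i j => ?_⟩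
  have a := key e he j
  have b := H.rind i 0 (j+e)
  have c := H.rstep i (j+e)
  simp at b
  rw [← b] at a
  omega

theorem local_coarse (oi oj : Prop) [Decidable oi] [Decidable oj]
    (w e s n e' n' w0 s0 sR nR sL nL wU eU wD eD : Lab A)
    (hc : Cell C False False w e s n)
    (hR : LtCell True e e' sR nR) (hU : LtCell True n n' wU eU)
    (hL : LtCell True w0 w sL nL) (hD : LtCell True s0 s wD eD)
    (fR : e'.b = e.b ∧ e'.f = e.f ∧ e'.m = e.m) (fU : n'.b = n.b ∧ n'.f = n.f ∧ n'.m = n.m)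
    (kR : (sR.r.val = 3 ∧ oj) ∨ (sR.r.val = 7 ∧ ¬ oj))
    (kL : (sL.r.val = 3 ∧ oj) ∨ (sL.r.val = 7 ∧ ¬ oj))
    (kU : (wU.r.val = 3 ∧ oi) ∨ (wU.r.val = 7 ∧ ¬ oi))
    (kD : (wD.r.val = 3 ∧ oi) ∨ (wD.r.val = 7 ∧ ¬ oi)) :
    (e'.b = w.b ∧ e'.f = w.f ∧ e'.m = w.m ∧ n'.b = s.b ∧ n'.f = s.f ∧ n'.m = s.m) ∧
    (EqCell C oi oj w e' s n' ∨ (LtCell oi w e' s n' ∧ ¬ oj) ∨ (LtCell oj s n' w e' ∧ ¬ oi)) := by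
  obtain ⟨⟨a1, a2, a3, a4, a5, a6⟩, hk⟩ := hc
  obtain ⟨r1, r2, r3, r4, r5, r6, r7, r8⟩ := hR
  obtain ⟨u1, u2, u3, u4, u5, u6, u7, u8⟩ := hU
  obtain ⟨l1, l2, -⟩ := hL
  obtain ⟨d1, d2, -⟩ := hD
  obtain ⟨f1, f2, f3⟩ := fR
  obtain ⟨g1, g2, g3⟩ := fU
  have R2 : (oj ∧ w.r.val % 2 = 1 ∧ e.r.val % 2 = 0 ∧ e'.r.val = e.r.val + 1) ∨
      (¬ oj ∧ e'.r = e.r) := by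
    rcases r2 with ⟨q1, q2, q3, -⟩ | ⟨q1, q2, -⟩
    · left
      rcases l2 with ⟨p1, p2, p3, -⟩ | ⟨p1, p2, -⟩
      · refine ⟨?_, ?_, q2, q3⟩
        · rcases kR with k | k
          · exact k.2
          · omega
        · omega
      · exfalso
        rcases kR with k | k <;> rcases kL with k' | k' <;> first | omega | exact k'.2 k.2
    · right
      refine ⟨?_, q2⟩
      rcases kR with k | k
      · omega
      · exact k.2
  have U2 : (oi ∧ s.r.val % 2 = 1 ∧ n.r.val % 2 = 0 ∧ n'.r.val = n.r.val + 1) ∨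
      (¬ oi ∧ n'.r = n.r) := by
    rcases u2 with ⟨q1, q2, q3, -⟩ | ⟨q1, q2, -⟩
    · left
      rcases d2 with ⟨p1, p2, p3, -⟩ | ⟨p1, p2, -⟩
      · refine ⟨?_, ?_, q2, q3⟩
        · rcases kU with k | k
          · exact k.2
          · omega
        · omega
      · exfalso
        rcases kU with k | k <;> rcases kD with k' | k' <;> first | omega | exact k'.2 k.2
    · right
      refine ⟨?_, q2⟩
      rcases kU with k | k
      · omega
      · exact k.2
  refine ⟨⟨by rw [f1, a1], by rw [f2, a2], by rw [f3, a3], by rw [g1, a4], by rw [g2, a5],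
    by rw [g3, a6]⟩, ?_⟩
  clear r1 r2 u1 u2 l1 l2 d1 d2 kR kL kU kD
  rcases hk with ⟨⟨⟨p1, p2, p3, p4, p5, p6⟩, ⟨q1, q2, q3, q4, q5, q6⟩, hC⟩, -⟩ |
    ⟨⟨p1, p2, p3, p4, p5, p6, p7, p8⟩, -⟩ | ⟨⟨p1, p2, p3, p4, p5, p6, p7, p8⟩, -⟩
  · left
    simp only [stp, if_false] at p2 q2
    refine ⟨⟨p1, ?_, p3, p4, by rw [r3, p5], by rw [r4, p6]⟩,
      ⟨q1, ?_, q3, q4, by rw [u3, q5], by rw [u4, q6]⟩, by rwa [r7, u7]⟩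
    · rcases R2 with ⟨o, o2, o3, o4⟩ | ⟨o, o2⟩ <;> simp only [stp, o, if_true, if_false]
      · omega
      · rw [o2]; exact p2
    · rcases U2 with ⟨o, o2, o3, o4⟩ | ⟨o, o2⟩ <;> simp only [stp, o, if_true, if_false]
      · omega
      · rw [o2]; exact q2
  · right; left
    simp only [stp, if_false] at p1
    have hoj : ¬ oj ∧ e'.r = e.r := by
      rcases R2 with ⟨o, o2, o3, o4⟩ | o
      · exfalso; rcases p2 with ⟨k1, k2, k3, -⟩ | ⟨k1, k2, -⟩
        · omega
        · rw [k2] at o3; omega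
      · exact o
    refine ⟨⟨?_, ?_, by rw [r3, p3], by rw [r4, p4], by rw [u3, p5], by rw [u4, p6],
      by rw [r7, p7], by rw [u7, p8]⟩, hoj.1⟩
    · rcases U2 with ⟨o, o2, o3, o4⟩ | ⟨o, o2⟩ <;> simp only [stp, o, if_true, if_false]
      · omega
      · rw [o2]; exact p1
    · rw [hoj.2]; exact p2
  · right; right
    simp only [stp, if_false] at p1
    have hoj : ¬ oi ∧ n'.r = n.r := by
      rcases U2 with ⟨o, o2, o3, o4⟩ | o
      · exfalso; rcases p2 with ⟨k1, k2, k3, -⟩ | ⟨k1, k2, -⟩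
        · omega
        · rw [k2] at o3; omega
      · exact o
    refine ⟨⟨?_, ?_, by rw [u3, p3], by rw [u4, p4], by rw [r3, p5], by rw [r4, p6],
      by rw [u7, p7], by rw [r7, p8]⟩, hoj.1⟩
    · rcases R2 with ⟨o, o2, o3, o4⟩ | ⟨o, o2⟩ <;> simp only [stp, o, if_true, if_false]
      · omega
      · rw [o2]; exact p1
    · rw [hoj.2]; exact p2

/-- The coarse configuration is good again. -/
theorem Good.coarse (H : Good C h v) (δ ε : ℤ)
    (he : ∀ i j : ℤ, ((v (2*i+1) (2*(j+ε))).r.val = 3 ∧ j % 2 = 1) ∨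
      ((v (2*i+1) (2*(j+ε))).r.val = 7 ∧ j % 2 = 0))
    (hd : ∀ j i : ℤ, ((h (2*(i+δ)) (2*j+1)).r.val = 3 ∧ i % 2 = 1) ∨
      ((h (2*(i+δ)) (2*j+1)).r.val = 7 ∧ i % 2 = 0)) :
    Good C (fun i j => h (2*(i+δ)) (2*(j+ε))) (fun i j => v (2*(i+δ)) (2*(j+ε))) := by
  have he' : ∀ i j : ℤ, ((v (2*i+1) (2*(j+ε))).r.val = 3 ∧ j % 2 = 1) ∨
      ((v (2*i+1) (2*(j+ε))).r.val = 7 ∧ ¬ (j % 2 = 1)) := by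
    intro i j; have := he i j; omega
  have hd' : ∀ j i : ℤ, ((h (2*(i+δ)) (2*j+1)).r.val = 3 ∧ i % 2 = 1) ∨
      ((h (2*(i+δ)) (2*j+1)).r.val = 7 ∧ ¬ (i % 2 = 1)) := by
    intro i j; have := hd i j; omega
  have key : ∀ i j : ℤ, _ := fun i j =>
    local_coarse (C := C) (i % 2 = 1) (j % 2 = 1)
    (h (2*(i+δ)) (2*(j+ε))) (h (2*(i+δ)+1) (2*(j+ε))) (v (2*(i+δ)) (2*(j+ε)))
    (v (2*(i+δ)) (2*(j+ε)+1)) (h (2*(i+δ)+2) (2*(j+ε))) (v (2*(i+δ)) (2*(j+ε)+2))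
    (h (2*(i+δ-1)+1) (2*(j+ε))) (v (2*(i+δ)) (2*(j+ε-1)+1))
    (v (2*(i+δ)+1) (2*(j+ε))) (v (2*(i+δ)+1) (2*(j+ε)+1))
    (v (2*(i+δ-1)+1) (2*(j+ε))) (v (2*(i+δ-1)+1) (2*(j+ε)+1))
    (h (2*(i+δ)) (2*(j+ε)+1)) (h (2*(i+δ)+1) (2*(j+ε)+1))
    (h (2*(i+δ)) (2*(j+ε-1)+1)) (h (2*(i+δ)+1) (2*(j+ε-1)+1))
    (by
      have := H (2*(i+δ)) (2*(j+ε))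
      have e1 : ¬ ((2*(i+δ)) % 2 = 1) := by omega
      have e2 : ¬ ((2*(j+ε)) % 2 = 1) := by omega
      simpa [Cell, EqCell, EqHalf, LtCell, stp, e1, e2] using this)
    (H.oe (i+δ) (j+ε)) (H.eo (i+δ) (j+ε))
    (by
      have := H.oe (i+δ-1) (j+ε)
      have e : 2*(i+δ-1)+2 = 2*(i+δ) := by ring
      rwa [e] at this)
    (by
      have := H.eo (i+δ) (j+ε-1)
      have e : 2*(j+ε-1)+2 = 2*(j+ε) := by ring
      rwa [e] at this)
    (H.rowconst _ _ _) (H.transp.rowconst _ _ _)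
    (he' _ _) (he' _ _) (hd' _ _) (hd' _ _)
  intro i j
  have e1 : 2*(i+1+δ) = 2*(i+δ)+2 := by ring
  have e2 : 2*(j+1+ε) = 2*(j+ε)+2 := by ring
  simp only [e1, e2]
  obtain ⟨k1, k2⟩ := key i j
  refine ⟨k1, ?_⟩
  rcases k2 with k | k | k
  · left
    refine ⟨k, ?_⟩
    by_contra hij
    by_cases hi : i % 2 = 1
    · have hj : ¬ (j % 2 = 1) := by tauto
      have hj' : (j - 1) % 2 = 1 := by omega
      obtain ⟨-, kk⟩ := key i (j-1)
      rcases kk with kk | kk | kk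
      · have e3 : 2*(j-1+ε)+2 = 2*(j+ε) := by ring
        have a := kk.2.1.2.1
        have a1 := kk.2.1.1
        have b := k.2.1.1
        rw [e3] at a
        simp only [stp, hi, if_true] at a
        omega
      · exact kk.2 hj'
      · exact kk.2 hi
    · have hj : (j % 2 = 1) := by tauto
      have hi' : (i - 1) % 2 = 1 := by omega
      obtain ⟨-, kk⟩ := key (i-1) j
      rcases kk with kk | kk | kk
      · have e3 : 2*(i-1+δ)+2 = 2*(i+δ) := by ring
        have a := kk.1.2.1
        have a1 := kk.1.1
        have b := k.1.1
        rw [e3] at a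
        simp only [stp, hj, if_true] at a
        omega
      · exact kk.2 hj
      · exact kk.2 hi'
  · exact Or.inr (Or.inl k)
  · exact Or.inr (Or.inr k)

/-- The columns flagged as first are the ones congruent to `a` modulo `s`. -/
def FirstCol (v : ℤ → ℤ → Lab A) (s a : ℤ) : Prop :=
  ∀ i y : ℤ, (v (2*i+1) y).f = true ↔ s ∣ i - a

theorem Good.num (H : Good C h v) (i : ℤ) :
    (v (2*(i+1)+1) 1).m.val =
      ((v (2*i+1) 1).m.val + (if (v (2*(i+1)+1) 1).f = true then 1 else 0)) % 4 := by
  have a := H.oo i 0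
  have b := H.eo (i+1) 0
  have c := H.oo (i+1) 0
  have e : 2*(i+1) = 2*i+2 := by ring
  rw [e] at b c
  rw [e]
  simp only [mul_zero, zero_add] at a b c
  have a1 := a.1.2.2.2.2.2
  have b1 := b.2.2.2.2.2.1
  have c1 := c.1.2.2.2.1
  rw [c1, b1, a1]

theorem Good.num_first (H : Good C h v) {s a : ℤ} (hs : 0 < s) (hf : FirstCol v s a) :
    ∃ A : ℤ, ∀ i : ℤ, (((v (2*i+1) 1).f = true ∧ (v (2*i+1) 1).m.val = 0) ↔ 4 * s ∣ i - A) := by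
  set N : ℤ → ℕ := fun i => (v (2*i+1) 1).m.val with hN
  have hlt : ∀ i, N i < 4 := fun i => (v (2*i+1) 1).m.isLt
  have stepN : ∀ i, (N (i+1) : ℤ) = (N i + (if s ∣ i + 1 - a then 1 else 0)) % 4 := by
    intro i
    have := H.num i
    simp only [hf (i+1) 1] at this
    have t2 : N (i+1) = (N i + (if s ∣ i + 1 - a then 1 else 0)) % 4 := this
    rw [t2]
    push_cast
    rfl
  -- N i ≡ N a + floor((i-a)/s) mod 4
  have key : ∀ i : ℤ, (N (a + i) : ℤ) = (N a + i / s) % 4 := by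
    have fl : ∀ i : ℤ, (i+1) / s = i / s + (if s ∣ i + 1 then 1 else 0) := by
      intro i
      have p1 := Int.emod_add_mul_ediv i s
      have p2 := Int.emod_nonneg i hs.ne'
      have p3 := Int.emod_lt_of_pos i hs
      split_ifs with hdv
      · obtain ⟨q, hq⟩ := hdv
        rw [hq, Int.mul_ediv_cancel_left _ hs.ne']
        have h5 : s * q = s * (i / s) + (i % s + 1) := by linarith
        have h6 : s ∣ i % s + 1 := ⟨q - i / s, by linarith [mul_sub s q (i/s)]⟩
        have h7 := Int.le_of_dvd (by omega) h6
        have h8 : i % s + 1 = s := by omega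
        rw [h8] at h5
        have : s * q = s * (i / s + 1) := by rw [h5]; ring
        exact mul_left_cancel₀ hs.ne' this
      · have hne : i % s + 1 ≠ s := by
          intro h9
          exact hdv ⟨i / s + 1, by rw [mul_add, mul_one]; linarith⟩
        have : i + 1 = (i % s + 1) + s * (i / s) := by linarith
        rw [this, Int.add_mul_ediv_left _ _ hs.ne', Int.ediv_eq_zero_of_lt (by omega) (by omega)]
        omega
    intro i
    induction i using Int.induction_on with
    | zero => simp; have := hlt a; omega
    | succ i ih =>
      have t := stepN (a + i)
      have e : a + (i:ℤ) + 1 - a = i + 1 := by ring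
      rw [e] at t
      rw [← add_assoc, t, ih, fl]
      split_ifs <;> omega
    | pred i ih =>
      have t := stepN (a + (-i-1))
      have e : a + (-(i:ℤ)-1) + 1 - a = -i-1 + 1 := by ring
      have e2 : a + (-(i:ℤ)-1) + 1 = a + -i := by ring
      have f := fl (-i-1)
      have e3 : -(i:ℤ)-1+1 = -i := by ring
      rw [e3] at f e
      rw [e, e2, ih, f] at t
      have := hlt (a + (-i-1))
      revert t
      split_ifs <;> intro t <;> omega
  refine ⟨a - s * N a, fun i => ?_⟩
  have k := key (i - a)
  rw [add_sub_cancel] at k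
  rw [hf]
  change (s ∣ i - a ∧ N i = 0) ↔ _
  constructor
  · rintro ⟨⟨q, hq⟩, h0⟩
    rw [h0, hq, Int.mul_ediv_cancel_left _ hs.ne'] at k
    have : (4:ℤ) ∣ N a + q := by omega
    obtain ⟨z, hz⟩ := this
    refine ⟨z, ?_⟩
    have : i - (a - s * N a) = s * (N a + q) := by rw [mul_add, ← hq]; ring
    rw [this, hz]; ring
  · rintro ⟨z, hz⟩
    have hq : i - a = s * (4*z - N a) := by linear_combination hz
    refine ⟨⟨_, hq⟩, ?_⟩
    rw [hq, Int.mul_ediv_cancel_left _ hs.ne'] at k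
    omega

theorem Good.first_coarse (H : Good C h v) {s a : ℤ} (hs : 0 < s) (hf : FirstCol v s a)
    (δ ε : ℤ)
    (hd : ∀ j i : ℤ, ((h (2*(i+δ)) (2*j+1)).r.val = 3 ∧ i % 2 = 1) ∨
      ((h (2*(i+δ)) (2*j+1)).r.val = 7 ∧ i % 2 = 0)) :
    ∃ a', FirstCol (fun i j => v (2*(i+δ)) (2*(j+ε))) (2*s) a' := by
  obtain ⟨A, hA⟩ := H.num_first hs hf
  have key : ∀ i : ℤ, (i % 2 = 1 → ∀ y, ((v (2*(i+δ)) y).f = true ↔ 4*s ∣ i + δ - 1 - A)) ∧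
      (i % 2 = 0 → ¬ (4*s ∣ i + δ - 1 - A)) := by
    intro i
    have a := H.oo (i+δ-1) 0
    have b := H.eo (i+δ) 0
    have e : 2*(i+δ-1)+2 = 2*(i+δ) := by ring
    rw [e] at a
    have hd1 := hd 0 i
    have A1 := hA (i+δ-1)
    simp only [mul_zero, zero_add] at a b hd1
    have t1 := a.1.2.2.2.2.1
    have t2 := a.1.2.2.2.2.2
    rw [← t1, ← t2] at A1
    constructor
    · intro hi y
      have cc := (H.transp.rowconst y (2*(i+δ)) 1).2.1
      rw [show (v (2*(i+δ)) y).f = (v (2*(i+δ)) 1).f from cc, ← A1]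
      rcases b.2.1 with ⟨_, _, _, q⟩ | ⟨q, _⟩
      · exact q
      · omega
    · intro hi
      rw [← A1]
      rcases b.2.1 with ⟨q, _⟩ | ⟨_, _, q⟩
      · omega
      · exact q
  have hpar : (A + 1 - δ) % 2 = 1 := by
    by_contra hc
    have := (key (A + 1 - δ)).2 (by omega)
    apply this
    have e : A + 1 - δ + δ - 1 - A = 0 := by ring
    rw [e]; exact dvd_zero _
  obtain ⟨B, hB⟩ : ∃ B, A - δ = 2 * B := ⟨(A-δ)/2, by omega⟩
  refine ⟨B, fun i y => ?_⟩
  have := (key (2*i+1)).1 (by omega) (2*(y+ε))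
  rw [this]
  have e : 2*i+1+δ-1-A = 2*(i - B) := by linear_combination -hB
  have e2 : 4 * s = 2 * (2*s) := by ring
  rw [e, e2]
  exact mul_dvd_mul_iff_left (by norm_num)

theorem Good.all_sizes (H : Good C h v) (h0 : ∀ i y, (v (2*i+1) y).f = true)
    (h1 : ∀ i x, (h x (2*i+1)).f = true) (m : ℕ) :
    ∃ h' v' : ℤ → ℤ → Lab A, Good C h' v' ∧ (∃ a, FirstCol v' (2^m) a) ∧
      ∃ a, FirstCol (fun x y => h' y x) (2^m) a := by
  induction m with
  | zero => exact ⟨h, v, H, ⟨0, fun i y => by simp [h0]⟩, ⟨0, fun i y => by simp [h1]⟩⟩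
  | succ m ih =>
    obtain ⟨h', v', G, ⟨a, ha⟩, ⟨b, hb⟩⟩ := ih
    obtain ⟨ε, he⟩ := G.ralt
    obtain ⟨δ, hd⟩ := G.transp.ralt
    refine ⟨_, _, G.coarse δ ε he hd, ?_, ?_⟩
    · rw [pow_succ, mul_comm]
      exact G.first_coarse (by positivity) ha δ ε hd
    · rw [pow_succ, mul_comm]
      exact G.transp.first_coarse (by positivity) hb ε δ he

theorem Good.blocks (H : Good C h v) (h0 : ∀ i y, (v (2*i+1) y).f = true)
    (h1 : ∀ i x, (h x (2*i+1)).f = true) (m : ℕ) :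
    ∃ P Q : ℤ → ℤ → A, ∀ i j : ℤ, C (decide ((2:ℤ)^m ∣ i)) (decide ((2:ℤ)^m ∣ j)) (P i j) (P (i+1) j)
      (Q i j) (Q i (j+1)) := by
  obtain ⟨h', v', G, ⟨a, ha⟩, ⟨b, hb⟩⟩ := H.all_sizes h0 h1 m
  refine ⟨fun i j => (h' (2*(i+a)+1) (2*(j+b)+1)).d, fun i j => (v' (2*(i+a)+1) (2*(j+b)+1)).d,
    fun i j => ?_⟩
  have c := (G.oo (i+a) (j+b)).2.2
  have d1 := (G.eo (i+a+1) (j+b)).2.2.2.2.2.2.2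
  have d2 := (G.oe (i+a) (j+b+1)).2.2.2.2.2.2.2
  have e1 : 2*(i+a)+2 = 2*(i+a+1) := by ring
  have e2 : 2*(j+b)+2 = 2*(j+b+1) := by ring
  have e3 : i+1+a = i+a+1 := by ring
  have e4 : j+1+b = j+b+1 := by ring
  simp only [e3, e4]
  rw [d1, d2]
  rw [e1, e2] at c
  have f1 := ha (i+a) (2*(j+b)+1)
  have f2 := hb (j+b) (2*(i+a)+1)
  simp only [add_sub_cancel_right] at f1 f2
  have g1 : (v' (2*(i+a)+1) (2*(j+b)+1)).f = decide ((2:ℤ)^m ∣ i) := by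
    rw [Bool.eq_iff_iff, f1]; simp
  have g2 : (h' (2*(i+a)+1) (2*(j+b)+1)).f = decide ((2:ℤ)^m ∣ j) := by
    rw [Bool.eq_iff_iff, f2]; simp
  rw [g1, g2] at c
  exact c

end
end Hier

namespace Hier

def lv (x : ℤ) : ℕ := padicValInt 2 x
def ix (x : ℤ) : ℤ := (x / 2 ^ lv x) / 2

theorem dv {a z : ℤ} (q : ℤ) (ha : 0 < a) (h1 : a * q ≤ z) (h2 : z < a * (q + 1)) : z / a = q := by
  apply le_antisymm
  · have := (Int.ediv_lt_iff_lt_mul ha (a := z) (b := q+1)).2 (by linarith)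
    omega
  · exact (Int.le_ediv_iff_mul_le ha).2 (by linarith)

theorem ix_spec {x : ℤ} (hx : x ≠ 0) : x = 2 ^ lv x * (2 * ix x + 1) := by
  have h1 : (2:ℤ) ^ lv x ∣ x := by
    have := @padicValInt_dvd 2 x
    exact_mod_cast this
  obtain ⟨q, hq⟩ := h1
  have hpos : (0:ℤ) < 2 ^ lv x := by positivity
  have hodd : q % 2 = 1 := by
    by_contra hc
    obtain ⟨k, hk⟩ : ∃ k, q = 2 * k := ⟨q / 2, by omega⟩
    have h2 : (2:ℤ) ^ (lv x + 1) ∣ x := ⟨k, by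
      rw [pow_succ, mul_assoc, ← hk]; exact hq⟩
    have h3 : ((2:ℕ):ℤ) ^ (lv x + 1) ∣ x := by exact_mod_cast h2
    rw [padicValInt_dvd_iff] at h3
    rcases h3 with h3 | h3
    · exact hx h3
    · unfold lv at h3; omega
  have : x / 2 ^ lv x = q := by
    conv_lhs => rw [hq]
    rw [← hq]
    exact Int.ediv_eq_of_eq_mul_right hpos.ne' hq
  unfold ix
  rw [this]
  have : 2 * (q / 2) + 1 = q := by omega
  rw [this]
  exact hq

def fin8 (z : ℤ) : Fin 8 := ⟨(z % 8).toNat, by omega⟩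
def fin4 (z : ℤ) : Fin 4 := ⟨(z % 4).toNat, by omega⟩

def lastp (m : ℕ) (x : ℤ) : ℤ := (x - 1 - 2 ^ m) / 2 ^ (m + 1)

variable {A : Type}

/-- Label of an edge of a line of level `m` and index `j` at position `x`. -/
def labAt (D : ℕ → ℕ → A) (m : ℕ) (j x : ℤ) : Lab A where
  b := decide (j % 2 = 1)
  r := fin8 ((2 * x - 1) / 2 ^ m)
  f := decide ((2:ℤ) ^ m ∣ j)
  m := fin4 (j / 2 ^ m)
  tf := decide ((2:ℤ) ^ m ∣ lastp m x)
  tm := fin4 (lastp m x / 2 ^ m)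
  d := D (lastp m x % 2 ^ m).toNat (j % 2 ^ m).toNat

theorem succ_ediv' (i : ℤ) {s : ℤ} (hs : 0 < s) :
    (i+1) / s = i / s + (if s ∣ i + 1 then 1 else 0) := by
  have p1 := Int.emod_add_mul_ediv i s
  have p2 := Int.emod_nonneg i hs.ne'
  have p3 := Int.emod_lt_of_pos i hs
  split_ifs with hdv
  · obtain ⟨q, hq⟩ := hdv
    rw [hq, Int.mul_ediv_cancel_left _ hs.ne']
    have h5 : s * q = s * (i / s) + (i % s + 1) := by linarith
    have h6 : s ∣ i % s + 1 := ⟨q - i / s, by linarith [mul_sub s q (i/s)]⟩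
    have h7 := Int.le_of_dvd (by omega) h6
    have h8 : i % s + 1 = s := by omega
    rw [h8] at h5
    have : s * q = s * (i / s + 1) := by rw [h5]; ring
    exact mul_left_cancel₀ hs.ne' this
  · have hne : i % s + 1 ≠ s := by
      intro h9
      exact hdv ⟨i / s + 1, by rw [mul_add, mul_one]; linarith⟩
    have : i + 1 = (i % s + 1) + s * (i / s) := by linarith
    rw [this, Int.add_mul_ediv_left _ _ hs.ne', Int.ediv_eq_zero_of_lt (by omega) (by omega)]
    omega

theorem odd_iff (n : ℕ) (i : ℤ) : ((2:ℤ) ^ n * (2 * i + 1)) % 2 = 1 ↔ n = 0 := by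
  cases n with
  | zero => simp
  | succ n =>
    rw [pow_succ]
    have : (2:ℤ) ^ n * 2 * (2 * i + 1) = 2 * (2 ^ n * (2*i+1)) := by ring
    rw [this]
    simp

theorem eqhalf (D D' : ℕ → ℕ → A) (m : ℕ) (i j y : ℤ) (cy : Prop) [Decidable cy] (hcy : cy ↔ m = 0) :
    EqHalf cy (labAt D m j (2^m*(2*i+1))) (labAt D m j (2^m*(2*i+1)+1)) (labAt D' m i y) ∧
    lastp m (2^m*(2*i+1)) = i - 1 ∧ lastp m (2^m*(2*i+1)+1) = i := by
  have hP : (0:ℤ) < 2 ^ m := by positivity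
  have l1 : lastp m (2^m*(2*i+1)) = i - 1 := by
    unfold lastp
    rw [pow_succ]
    exact dv _ (by linarith) (by linarith) (by linarith)
  have l2 : lastp m (2^m*(2*i+1)+1) = i := by
    unfold lastp
    rw [pow_succ]
    exact dv _ (by linarith) (by linarith) (by linarith)
  have r1 : (2 * (2^m*(2*i+1)) - 1) / 2 ^ m = 4 * i + 1 :=
    dv _ hP (by linarith) (by linarith)
  have r2 : (2 * (2^m*(2*i+1)+1) - 1) / 2 ^ m = 4 * i + 2 + (if m = 0 then 1 else 0) := by
    split_ifs with h
    · subst h; norm_num; ring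
    · have : (2:ℤ) ≤ 2 ^ m := by
        calc (2:ℤ) = 2 ^ 1 := by norm_num
          _ ≤ 2 ^ m := pow_le_pow_right₀ (by norm_num) (by omega)
      exact dv _ hP (by linarith) (by linarith)
  refine ⟨?_, l1, l2⟩
  have fe := succ_ediv' (i-1) hP
  rw [sub_add_cancel] at fe
  simp only [EqHalf, labAt, l1, l2, r1, r2, fin8, fin4, stp, hcy]
  refine ⟨by omega, ?_, ?_, ?_, trivial, trivial⟩
  · split_ifs <;> omega
  · simp only [decide_eq_true_eq]; omega
  · simp only [decide_eq_true_eq]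
    rw [fe]
    split_ifs <;> omega

theorem ltcell (D D' : ℕ → ℕ → A) (n t : ℕ) (i j : ℤ) (cx : Prop) [Decidable cx]
    (hcx : cx ↔ n = 0) :
    LtCell cx (labAt D (n+t+1) j (2^n*(2*i+1))) (labAt D (n+t+1) j (2^n*(2*i+1)+1))
      (labAt D' n i (2^(n+t+1)*(2*j+1))) (labAt D' n i (2^(n+t+1)*(2*j+1)+1)) := by
  have hP : (0:ℤ) < 2 ^ n := by positivity
  have hT : (0:ℤ) < 2 ^ t := by positivity
  have hM : (2:ℤ)^(n+t+1) = 2 * (2^n * 2^t) := by rw [pow_succ, pow_add]; ring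
  have hMpos : (0:ℤ) < 2 ^ (n+t+1) := by positivity
  -- column label position
  have l1 : lastp n (2^(n+t+1)*(2*j+1)) = 2^t*(2*j+1) - 1 := by
    unfold lastp
    rw [pow_succ 2 n, hM]
    exact dv _ (by linarith) (by linarith) (by linarith)
  have l2 : lastp n (2^(n+t+1)*(2*j+1)+1) = 2^t*(2*j+1) - 1 := by
    unfold lastp
    rw [pow_succ 2 n, hM]
    exact dv _ (by linarith) (by linarith) (by linarith)
  have l3 : lastp (n+t+1) (2^n*(2*i+1)+1) = lastp (n+t+1) (2^n*(2*i+1)) := by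
    unfold lastp
    have e : 2^n*(2*i+1)+1 - 1 - 2^(n+t+1) = (2^n*(2*i+1) - 1 - 2^(n+t+1)) + 1 := by ring
    rw [e, succ_ediv' _ (by positivity)]
    have : ¬ ((2:ℤ)^(n+t+1+1) ∣ (2^n*(2*i+1) - 1 - 2^(n+t+1)) + 1) := by
      rintro ⟨z, hz⟩
      rw [pow_succ 2 (n+t+1), hM] at hz
      have : (2:ℤ)^n * (2*i+1 - 2 * 2^t) = 2^n * (2 * (2 * 2^t * z)) := by linarith
      have := mul_left_cancel₀ hP.ne' this
      omega
    rw [if_neg this, add_zero]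
  have r1 : (2 * (2^(n+t+1)*(2*j+1)) - 1) / 2 ^ n = 4 * (2^t * (2*j+1)) - 1 := by
    rw [hM]
    exact dv _ hP (by linarith) (by linarith)
  have r2 : (2 * (2^(n+t+1)*(2*j+1)+1) - 1) / 2 ^ n =
      4 * (2^t * (2*j+1)) + (if n = 0 then 1 else 0) := by
    rw [hM]
    split_ifs with h
    · subst h
      rw [pow_zero, Int.ediv_one]; ring
    · have : (2:ℤ) ≤ 2 ^ n := by
        calc (2:ℤ) = 2 ^ 1 := by norm_num
          _ ≤ 2 ^ n := pow_le_pow_right₀ (by norm_num) (by omega)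
      exact dv _ hP (by linarith) (by linarith)
  simp only [LtCell, labAt, l1, l2, l3, r1, r2, fin8, fin4, stp, hcx, decide_eq_true_eq, and_true]
  refine ⟨by split_ifs <;> omega, ?_⟩
  rcases Nat.eq_zero_or_pos t with h0 | h0
  · left
    subst h0
    have rw1 : (2 * (2^n*(2*i+1)) - 1) / 2 ^ (n+0+1) = 2 * i := by
      rw [hM]; exact dv _ (by linarith) (by linarith) (by linarith)
    have rw2 : (2 * (2^n*(2*i+1)+1) - 1) / 2 ^ (n+0+1) = 2 * i + 1 := by
      rw [hM]; exact dv _ (by linarith) (by linarith) (by linarith)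
    rw [rw1, rw2]
    refine ⟨by omega, by omega, by omega, ?_⟩
    have e : (2:ℤ)^0*(2*j+1)-1 = 2*j := by ring
    rw [e]
    have e4 : ((2 * j / 2 ^ n % 4).toNat = 0) ↔ (4 ∣ 2 * j / 2^n) := by omega
    rw [e4]
    constructor
    · rintro ⟨z, hz⟩
      have e5 : 2 * j = 2^n * (4 * z) := by rw [hz, hM]; ring
      refine ⟨⟨_, e5⟩, ?_⟩
      rw [e5, Int.mul_ediv_cancel_left _ hP.ne']
      exact ⟨z, rfl⟩
    · rintro ⟨⟨z, hz⟩, h4⟩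
      rw [hz, Int.mul_ediv_cancel_left _ hP.ne'] at h4
      obtain ⟨q, rfl⟩ := h4
      refine ⟨q, ?_⟩
      rw [hM]
      have : 2 * j = 2 * (2 * (2 ^ n * 2 ^ 0) * q) := by rw [hz]; ring
      exact mul_left_cancel₀ (by norm_num) this
  · right
    obtain ⟨t', rfl⟩ : ∃ t', t = t' + 1 := ⟨t - 1, by omega⟩
    have hT' : (2:ℤ)^(t'+1) = 2 * 2^t' := by rw [pow_succ]; ring
    refine ⟨?_, ?_, ?_⟩
    · rw [hT']
      have e : 4 * (2 * 2^t' * (2*j+1)) - 1 = 8 * (2^t' * (2*j+1)) - 1 := by ring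
      rw [e]
      omega
    · have e : 2*(2^n*(2*i+1)+1) - 1 = (2*(2^n*(2*i+1)) - 1) + 1 + 1 := by ring
      have n1 : ¬ ((2:ℤ)^(n+(t'+1)+1) ∣ (2*(2^n*(2*i+1)) - 1) + 1) := by
        rintro ⟨z, hz⟩
        rw [hM, hT'] at hz
        have : (2:ℤ)^n * (2 * (2*i+1)) = 2^n * (2 * (2 * (2^t' * z))) := by linarith
        have := mul_left_cancel₀ hP.ne' this
        omega
      have n2 : ¬ ((2:ℤ)^(n+(t'+1)+1) ∣ (2*(2^n*(2*i+1)) - 1) + 1 + 1) := by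
        rintro ⟨z, hz⟩
        rw [hM, hT'] at hz
        have : 2*(2^n*(2*i+1)) - 1 + 1 + 1 = 2 * (2^n * (2 * 2^t') * z) := by linarith
        omega
      rw [e, succ_ediv' _ hMpos, succ_ediv' _ hMpos, if_neg n1, if_neg n2]
      simp
    · rintro ⟨⟨z, hz⟩, h2⟩
      rw [hz, Int.mul_ediv_cancel_left _ hP.ne'] at h2
      obtain ⟨k, hk⟩ : ∃ k, z = 2 * k := ⟨z / 2, by omega⟩
      rw [hk, hT'] at hz
      have : 2 * (2^t' * (2*j+1)) - 1 = 2 * (2^n * k) := by linarith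
      omega


theorem emod_pred (i : ℤ) (P : ℤ) (hP : 0 < P) (h : 1 ≤ (i % P).toNat) :
    ((i - 1) % P).toNat = (i % P).toNat - 1 := by
  have h1 := Int.emod_nonneg i hP.ne'
  have h2 := Int.emod_lt_of_pos i hP
  have : (i - 1) % P = i % P - 1 := by
    rw [Int.sub_emod, ← Int.sub_emod]
    have e : i - 1 = (i % P - 1) + P * (i / P) := by have := Int.emod_add_mul_ediv i P; linarith
    rw [e, Int.add_mul_emod_self_left]
    exact Int.emod_eq_of_lt (by omega) (by omega)
  omega

def QuadOK (C : Bool → Bool → A → A → A → A → Prop) (Er Nr : ℕ → ℕ → A) : Prop :=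
  ∀ (k l : ℕ) (w s : A), (1 ≤ k → w = Er (k-1) l) → (1 ≤ l → s = Nr k (l-1)) →
    C (decide (k = 0)) (decide (l = 0)) w (Er k l) s (Nr k l)

theorem cell_ok {C : Bool → Bool → A → A → A → A → Prop} {Er Nr : ℕ → ℕ → A} (hq : QuadOK C Er Nr)
    {x y : ℤ} (hx : x ≠ 0) (hy : y ≠ 0) :
    Cell C (x % 2 = 1) (y % 2 = 1) (labAt Er (lv y) (ix y) x) (labAt Er (lv y) (ix y) (x+1))
      (labAt (fun a b => Nr b a) (lv x) (ix x) y)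
      (labAt (fun a b => Nr b a) (lv x) (ix x) (y+1)) := by
  have ex := ix_spec hx
  have ey := ix_spec hy
  generalize lv x = n at *
  generalize ix x = i at *
  generalize lv y = m at *
  generalize ix y = j at *
  have ox : x % 2 = 1 ↔ n = 0 := by rw [ex]; exact odd_iff n i
  have oy : y % 2 = 1 ↔ m = 0 := by rw [ey]; exact odd_iff m j
  refine ⟨⟨rfl, rfl, rfl, rfl, rfl, rfl⟩, ?_⟩
  rcases lt_trichotomy n m with hlt | heq | hgt
  · right; left
    obtain ⟨t, rfl⟩ : ∃ t, m = n + t + 1 := ⟨m - n - 1, by omega⟩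
    have := ltcell Er (fun a b => Nr b a) n t i j (x % 2 = 1) ox
    rw [← ex, ← ey] at this
    exact ⟨this, by rw [oy]; omega⟩
  · left
    subst heq
    refine ⟨?_, by rw [ox, oy]⟩
    have a := eqhalf Er (fun a b => Nr b a) n i j y (y % 2 = 1) oy
    have b := eqhalf (fun a b => Nr b a) Er n j i x (x % 2 = 1) ox
    rw [← ex] at a
    rw [← ey] at b
    refine ⟨a.1, b.1, ?_⟩
    simp only [labAt, a.2.1, a.2.2, b.2.1, b.2.2]
    have hP : (0:ℤ) < 2 ^ n := by positivity
    have key := hq (i % 2^n).toNat (j % 2^n).toNat (Er ((i-1) % 2^n).toNat (j % 2^n).toNat)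
      (Nr (i % 2^n).toNat ((j-1) % 2^n).toNat)
      (fun h => by rw [emod_pred i _ hP h]) (fun h => by rw [emod_pred j _ hP h])
    have d : ∀ z : ℤ, decide ((2:ℤ)^n ∣ z) = decide ((z % 2^n).toNat = 0) := by
      intro z
      have h1 := Int.emod_nonneg z hP.ne'
      rw [decide_eq_decide, Int.dvd_iff_emod_eq_zero]
      omega
    rw [d, d]
    exact key
  · right; right
    obtain ⟨t, rfl⟩ : ∃ t, n = m + t + 1 := ⟨n - m - 1, by omega⟩
    have := ltcell (fun a b => Nr b a) Er m t j i (y % 2 = 1) oy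
    rw [← ex, ← ey] at this
    exact ⟨this, by rw [ox]; omega⟩

theorem finite_labs {S : Set A} (hS : S.Finite) : {l : Lab A | l.d ∈ S}.Finite := by
  have : {l : Lab A | l.d ∈ S} ⊆
      (fun p : (Bool × Fin 8 × Bool × Fin 4 × Bool × Fin 4) × A =>
        (⟨p.1.1, p.1.2.1, p.1.2.2.1, p.1.2.2.2.1, p.1.2.2.2.2.1, p.1.2.2.2.2.2, p.2⟩ : Lab A)) ''
        (Set.univ ×ˢ S) := by
    intro l hl
    exact ⟨⟨⟨l.b, l.r, l.f, l.m, l.tf, l.tm⟩, l.d⟩, ⟨trivial, hl⟩, rfl⟩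
  exact Set.Finite.subset ((Set.finite_univ.prod hS).image _) this

/-- Existence of a hierarchical configuration carrying the quadrant data. -/
theorem exists_good {C : Bool → Bool → A → A → A → A → Prop} {Er Nr : ℕ → ℕ → A}
    (hq : QuadOK C Er Nr) {S : Set A} (hS : S.Finite) (hE : ∀ k l, Er k l ∈ S)
    (hN : ∀ k l, Nr k l ∈ S) :
    ∃ h v : ℤ → ℤ → Lab A, Good C h v ∧ (∀ i y, (v (2*i+1) y).f = true) ∧
      (∀ i x, (h x (2*i+1)).f = true) ∧ (∀ x y, (h x y).d ∈ S) ∧ (∀ x y, (v x y).d ∈ S) := by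
  set U : Ultrafilter ℕ := Filter.hyperfilter ℕ
  have lim : ∀ f : ℕ → Lab A, (∀ n, (f n).d ∈ S) → ∃ l, l.d ∈ S ∧ ∀ᶠ n in U, f n = l := by
    intro f hf
    have := (Ultrafilter.eventually_exists_mem_iff (f := U) (finite_labs hS)
      (P := fun l n => f n = l)).1 (Filter.Eventually.of_forall fun n => ⟨f n, hf n, rfl⟩)
    exact this
  set hh : ℤ → ℤ → ℕ → Lab A := fun x y n => labAt Er (lv (y + 2^(n+1))) (ix (y + 2^(n+1))) (x + 2^(n+1))
  set vv : ℤ → ℤ → ℕ → Lab A := fun x y n =>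
    labAt (fun a b => Nr b a) (lv (x + 2^(n+1))) (ix (x + 2^(n+1))) (y + 2^(n+1))
  choose h h1 h2 using fun x y => lim (hh x y) (fun n => hE _ _)
  choose v v1 v2 using fun x y => lim (vv x y) (fun n => hN _ _)
  have big : ∀ x : ℤ, ∀ᶠ n in U, x + 2^(n+1) ≠ 0 := by
    intro x
    have : ∀ᶠ n in Filter.atTop, x + 2^(n+1) ≠ 0 := by
      filter_upwards [Filter.eventually_ge_atTop x.natAbs] with n hn
      have : n < 2^(n+1) := lt_of_lt_of_le Nat.lt_two_pow_self (Nat.pow_le_pow_right (by norm_num) (by omega))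
      have : (n:ℤ) < 2^(n+1) := by exact_mod_cast this
      omega
    rw [← Nat.cofinite_eq_atTop] at this
    exact Filter.hyperfilter_le_cofinite this
  refine ⟨h, v, ?_, ?_, ?_, h1, v1⟩
  · intro x y
    obtain ⟨n, a1, a2, a3, a4, b1, b2⟩ := ((h2 x y).and ((h2 (x+1) y).and ((v2 x y).and
      ((v2 x (y+1)).and ((big x).and (big y)))))).exists
    have k := cell_ok hq b1 b2
    rw [← a1, ← a2, ← a3, ← a4]
    have par : ∀ x : ℤ, (x + 2^(n+1)) % 2 = 1 ↔ x % 2 = 1 := by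
      intro x; rw [pow_succ]; omega
    have e1 : x + 1 + 2^(n+1) = x + 2^(n+1) + 1 := by ring
    have e2 : y + 1 + 2^(n+1) = y + 2^(n+1) + 1 := by ring
    simp only [hh, vv, e1, e2]
    simpa [par] using k
  · intro i y
    obtain ⟨n, a1, b1⟩ := ((v2 (2*i+1) y).and (big (2*i+1))).exists
    rw [← a1]
    have := ix_spec b1
    have o := odd_iff (lv (2*i+1+2^(n+1))) (ix (2*i+1+2^(n+1)))
    rw [← this] at o
    have : lv (2*i+1+2^(n+1)) = 0 := o.1 (by rw [pow_succ]; omega)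
    simp [vv, labAt, this]
  · intro i y
    obtain ⟨n, a1, b1⟩ := ((h2 y (2*i+1)).and (big (2*i+1))).exists
    rw [← a1]
    have := ix_spec b1
    have o := odd_iff (lv (2*i+1+2^(n+1))) (ix (2*i+1+2^(n+1)))
    rw [← this] at o
    have : lv (2*i+1+2^(n+1)) = 0 := o.1 (by rw [pow_succ]; omega)
    simp [hh, labAt, this]

end Hier

namespace Hier

section TM
variable {Λ Γ : Type} [Inhabited Γ]

abbrev Act (Λ Γ : Type) := Λ × (Bool ⊕ Γ)

def appT (a : Bool ⊕ Γ) (T : ℤ → Γ) : ℤ → Γ :=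
  match a with
  | Sum.inl true => fun i => T (i + 1)
  | Sum.inl false => fun i => T (i - 1)
  | Sum.inr c => fun i => if i = 0 then c else T i

def mstep (M : Λ → Γ → Option (Act Λ Γ)) (c : Λ × (ℤ → Γ)) : Option (Λ × (ℤ → Γ)) :=
  (M c.1 (c.2 0)).map fun a => (a.1, appT a.2 c.2)

def initT (l : List Γ) : ℤ → Γ := fun i => if 0 ≤ i then l.getI i.toNat else default

def NonHalt (M : Λ → Γ → Option (Act Λ Γ)) (q0 : Λ) (l : List Γ) : Prop :=
  ∃ run : ℕ → Λ × (ℤ → Γ), run 0 = (q0, initT l) ∧ ∀ n, mstep M (run n) = some (run (n + 1))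

abbrev VV (Λ Γ : Type) := Λ × Γ × Γ
abbrev FF (Λ Γ : Type) := VV Λ Γ × VV Λ Γ × Act Λ Γ

def upd (fx : Bool) (wv cur ev : VV Λ Γ) (a : Act Λ Γ) : VV Λ Γ :=
  (a.1, match a.2 with
    | Sum.inl true => (ev.2.1, if fx then ev.2.1 else wv.2.2)
    | Sum.inl false => (if fx then ev.2.2 else wv.2.1, ev.2.2)
    | Sum.inr c => if fx then (c, c) else cur.2)

/-- local relation, with the letters and the index tests as parameters -/
def rel0 (M : Λ → Γ → Option (Act Λ Γ)) (q0 : Λ) (fx fy : Bool) (w e s n : FF Λ Γ)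
    (c : Γ) : Prop :=
  let cur : VV Λ Γ := if fy then (q0, c, if fx then c else default) else s.1
  e.1 = cur ∧ (fx = false → w.2.1 = cur ∧ e.2.2 = w.2.2) ∧
  (fx = true → M cur.1 cur.2.1 = some e.2.2) ∧ n.1 = upd fx w.1 cur e.2.1 e.2.2

def relC (M : Λ → Γ → Option (Act Λ Γ)) (q0 : Λ) (l : List Γ) (fx fy : Bool)
    (w e s n : FF Λ Γ × ℕ) : Prop :=
  rel0 M q0 fx fy w.1 e.1 s.1 n.1 (l.getI (if fx then 0 else w.2)) ∧
  e.2 = min ((if fx then 0 else w.2) + 1) l.length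

def VT (c : Λ × (ℤ → Γ)) (k : ℕ) : VV Λ Γ := (c.1, c.2 k, c.2 (-k))

theorem getI_min (l : List Γ) (k : ℕ) : l.getI (min k l.length) = l.getI k := by
  rcases le_total k l.length with h | h
  · rw [min_eq_left h]
  · rw [min_eq_right h, List.getI_eq_default _ le_rfl, List.getI_eq_default _ h]

theorem upd_zero (wv : VV Λ Γ) (c : Λ × (ℤ → Γ)) (a : Act Λ Γ) :
    upd true wv (VT c 0) (VT c 1) a = VT (a.1, appT a.2 c.2) 0 := by
  obtain ⟨q, a⟩ := a
  rcases a with (_ | _) | a <;> simp [upd, VT, appT]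

theorem upd_succ (c : Λ × (ℤ → Γ)) (a : Act Λ Γ) (k : ℕ) :
    upd false (VT c k) (VT c (k+1)) (VT c (k+2)) a = VT (a.1, appT a.2 c.2) (k+1) := by
  obtain ⟨q, a⟩ := a
  rcases a with (_ | _) | a
  · have e : -1 + -(k:ℤ) - 1 = -2 + -k := by ring
    have e2 : ((k:ℤ) + 1 - 1) = k := by ring
    simp [upd, VT, appT]
    congr 1; ring
  · simp [upd, VT, appT]
    constructor <;> congr 1 <;> ring
  · have h1 : ((k:ℤ) + 1) ≠ 0 := by omega
    have h2 : ¬ (-1 + -(k:ℤ)) = 0 := by omega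
    simp [upd, VT, appT, h1, h2]

theorem init_VT (q0 : Λ) (l : List Γ) (k : ℕ) :
    VT (q0, initT l) k = (q0, l.getI k, if k = 0 then l.getI k else default) := by
  unfold VT initT
  rcases Nat.eq_zero_or_pos k with h | h
  · subst h; simp
  · have h1 : ¬ (0 ≤ -(k:ℤ)) := by omega
    have h2 : k ≠ 0 := by omega
    simp [h2]

theorem quad_of_run (M : Λ → Γ → Option (Act Λ Γ)) (q0 : Λ) (l : List Γ) (H : NonHalt M q0 l) :
    ∃ Er Nr : ℕ → ℕ → FF Λ Γ × ℕ, QuadOK (relC M q0 l) Er Nr ∧ (∀ k n, (Er k n).2 ≤ l.length) ∧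
      (∀ k n, (Nr k n).2 ≤ l.length) := by
  obtain ⟨run, h0, hs⟩ := H
  have : ∀ n, ∃ a : Act Λ Γ, M (run n).1 ((run n).2 0) = some a ∧
      run (n+1) = (a.1, appT a.2 (run n).2) := by
    intro n
    have := hs n
    unfold mstep at this
    rw [Option.map_eq_some_iff] at this
    obtain ⟨a, h1, h2⟩ := this
    exact ⟨a, h1, h2.symm⟩
  choose act ha hr using this
  refine ⟨fun k n => ((VT (run n) k, VT (run n) (k+1), act n), min (k+1) l.length),
    fun k n => ((VT (run (n+1)) k, VT (run (n+1)) k, act n), 0), ?_, ?_, ?_⟩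
  · intro k n w s hw hsn
    have cur : (if (decide (n = 0)) = true then (q0, l.getI (if (decide (k = 0)) = true then 0 else w.2),
        if (decide (k = 0)) = true then l.getI (if (decide (k = 0)) = true then 0 else w.2) else default) else s.1.1)
        = VT (run n) k := by
      rcases Nat.eq_zero_or_pos n with hn | hn
      · subst hn
        rw [h0, init_VT]
        rcases Nat.eq_zero_or_pos k with hk | hk
        · subst hk; simp
        · have := hw hk
          have e : k - 1 + 1 = k := by omega
          have hk' : k ≠ 0 := by omega
          simp only [e] at this
          simp [this, hk', getI_min]
      · have := hsn hn
        have e : n - 1 + 1 = n := by omega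
        have hn' : n ≠ 0 := by omega
        simp only [e] at this
        simp [hn', this]
    refine ⟨?_, ?_⟩
    · unfold rel0
      dsimp only
      rw [cur]
      refine ⟨rfl, ?_, ?_, ?_⟩
      · intro hk
        have hk : 1 ≤ k := by simp at hk; omega
        have e : k - 1 + 1 = k := by omega
        rw [hw hk]
        simp [e]
      · intro _
        simp at *
        subst_vars
        exact ha n
      · rcases Nat.eq_zero_or_pos k with hk | hk
        · subst hk
          rw [hr n]
          exact (upd_zero _ _ _).symm
        · obtain ⟨k', rfl⟩ : ∃ k', k = k' + 1 := ⟨k - 1, by omega⟩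
          rw [hw hk, hr n]
          exact (upd_succ _ _ _).symm
    · rcases Nat.eq_zero_or_pos k with hk | hk
      · subst hk; simp
      · have e : k - 1 + 1 = k := by omega
        have hk' : k ≠ 0 := by omega
        rw [hw hk]
        simp [hk', e]
        omega
  · intro k n; simp
  · intro k n; simp

theorem run_of_blocks (M : Λ → Γ → Option (Act Λ Γ)) (q0 : Λ) (l : List Γ)
    (H : ∀ m : ℕ, ∃ P Q : ℤ → ℤ → FF Λ Γ × ℕ, ∀ i j : ℤ,
      relC M q0 l (decide ((2:ℤ)^m ∣ i)) (decide ((2:ℤ)^m ∣ j)) (P i j) (P (i+1) j)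
      (Q i j) (Q i (j+1))) : NonHalt M q0 l := by
  set run : ℕ → Λ × (ℤ → Γ) := fun n => (fun c => (mstep M c).getD c)^[n] (q0, initT l) with hrun
  have hsucc : ∀ n, run (n+1) = (mstep M (run n)).getD (run n) := by
    intro n; simp only [hrun, Function.iterate_succ_apply']
  by_cases hall : ∀ n, mstep M (run n) ≠ none
  · refine ⟨run, rfl, fun n => ?_⟩
    rw [hsucc]
    obtain ⟨c, hc⟩ := Option.ne_none_iff_exists'.1 (hall n)
    simp [hc]
  · exfalso
    push Not at hall
    obtain ⟨L, hL⟩ := hall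
    classical
    obtain ⟨L, hL, hmin⟩ : ∃ L, mstep M (run L) = none ∧ ∀ n < L, mstep M (run n) ≠ none :=
      by
      have ex : ∃ L, mstep M (run L) = none := ⟨L, hL⟩
      exact ⟨Nat.find ex, Nat.find_spec ex, fun n hn => Nat.find_min ex hn⟩
    obtain ⟨P, Q, hPQ⟩ := H (L+1)
    have hbig : L + 1 < 2^(L+1) := Nat.lt_two_pow_self
    set s : ℕ := 2^(L+1) with hs
    have hdv : ∀ i : ℕ, i < s → (((2:ℤ)^(L+1) ∣ i) ↔ i = 0) := by
      intro i hi
      have : ((2:ℤ)^(L+1)) = ((s:ℕ):ℤ) := by simp [hs]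
      rw [this, Int.natCast_dvd_natCast]
      constructor
      · intro h; exact Nat.eq_zero_of_dvd_of_lt h hi
      · rintro rfl; exact dvd_zero _
    have rl : ∀ i j : ℕ, i < s → j < s → relC M q0 l (decide (i = 0)) (decide (j = 0)) (P i j)
        (P ((i+1 : ℕ):ℤ) j) (Q i j) (Q i ((j+1 : ℕ):ℤ)) := by
      intro i j hi hj
      have := hPQ i j
      simp only [hdv i hi, hdv j hj] at this
      push_cast
      exact this
    have idx : ∀ k : ℕ, k < s → ∀ j : ℕ, j < s → (P ((k+1:ℕ):ℤ) j).2 = min (k+1) l.length := by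
      intro k
      induction k with
      | zero =>
        intro hk j hj
        have := (rl 0 j hk hj).2
        simpa using this
      | succ k ih =>
        intro hk j hj
        have a := (rl (k+1) j hk hj).2
        rw [ih (by omega) j hj] at a
        rw [a]
        simp
        omega
    have key : ∀ n : ℕ, n ≤ L → ∀ k : ℕ, k + n < s → (P ((k+1:ℕ):ℤ) n).1.1 = VT (run n) k := by
      intro n
      induction n with
      | zero =>
        intro hn k hk
        have a := (rl k 0 (by omega) (by omega)).1.1
        rw [a]
        have : run 0 = (q0, initT l) := rfl
        rw [this, init_VT]
        rcases Nat.eq_zero_or_pos k with h | h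
        · subst h; simp
        · obtain ⟨k', rfl⟩ : ∃ k', k = k' + 1 := ⟨k - 1, by omega⟩
          have := idx k' (by omega) 0 (by omega)
          simp at this
          simp [this, getI_min]
      | succ n ih =>
        intro hn k hk
        have ih := ih (by omega)
        obtain ⟨c, hc⟩ := Option.ne_none_iff_exists'.1 (hmin n (by omega))
        have hc' := hc
        unfold mstep at hc'
        rw [Option.map_eq_some_iff] at hc'
        obtain ⟨a, ha, hac⟩ := hc'
        have hrn : run (n+1) = (a.1, appT a.2 (run n).2) := by rw [hsucc, hc, hac]; rfl
        -- actions
        have hact : ∀ i : ℕ, i < s → (P ((i+1:ℕ):ℤ) n).1.2.2 = a := by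
          intro i
          induction i with
          | zero =>
            intro hi
            have b := (rl 0 n hi (by omega)).1
            have b1 := b.2.2.1 (by simp)
            rw [← b.1] at b1
            have := ih 0 (by omega)
            rw [this] at b1
            have : M (VT (run n) 0).1 (VT (run n) 0).2.1 = some a := ha
            rw [this] at b1
            exact (Option.some.inj b1).symm
          | succ i ihi =>
            intro hi
            have b := (rl (i+1) n hi (by omega)).1
            have b1 := (b.2.1 (by simp)).2
            rw [b1, ihi (by omega)]
        have nxt : (P ((k+1:ℕ):ℤ) n).1.2.1 = VT (run n) (k+1) := by
          have b := (rl (k+1) n (by omega) (by omega)).1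
          have b1 := (b.2.1 (by simp)).1
          rw [b1, ← b.1, ih (k+1) (by omega)]
        have b := (rl k n (by omega) (by omega)).1
        have b3 := b.2.2.2
        rw [← b.1, hact k (by omega), nxt, ih k (by omega)] at b3
        have c0 := (rl k (n+1) (by omega) (by omega)).1.1
        rw [c0, hrn]
        simp only [Nat.add_eq_zero_iff, one_ne_zero, and_false, decide_false, Bool.false_eq_true, if_false]
        rw [b3]
        rcases Nat.eq_zero_or_pos k with h | h
        · subst h; exact upd_zero _ _ _
        · obtain ⟨k', rfl⟩ : ∃ k', k = k' + 1 := ⟨k - 1, by omega⟩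
          rw [ih k' (by omega)]
          simpa using upd_succ (run n) a k'
    have b := (rl 0 L (by omega) (by omega)).1
    have b1 := b.2.2.1 (by simp)
    rw [← b.1, key L le_rfl 0 (by omega)] at b1
    unfold mstep at hL
    rw [Option.map_eq_none_iff] at hL
    have : M (VT (run L) 0).1 (VT (run L) 0).2.1 = none := hL
    rw [this] at b1
    cases b1

theorem tm_tiles [Finite Λ] [Finite Γ] (M : Λ → Γ → Option (Act Λ Γ)) (q0 : Λ) (l : List Γ) :
    NonHalt M q0 l ↔ ∃ h v : ℤ → ℤ → Lab (FF Λ Γ × ℕ), Good (relC M q0 l) h v ∧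
      (∀ i y, (v (2*i+1) y).f = true) ∧ (∀ i x, (h x (2*i+1)).f = true) ∧
      (∀ x y, (h x y).d.2 ≤ l.length) ∧ (∀ x y, (v x y).d.2 ≤ l.length) := by
  constructor
  · intro H
    obtain ⟨Er, Nr, hq, h1, h2⟩ := quad_of_run M q0 l H
    have hS : {p : FF Λ Γ × ℕ | p.2 ≤ l.length}.Finite := by
      have : {p : FF Λ Γ × ℕ | p.2 ≤ l.length} = Set.univ ×ˢ (Set.Iic l.length) := by
        ext p; simp
      rw [this]
      exact Set.finite_univ.prod (Set.finite_Iic _)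
    exact exists_good hq hS h1 h2
  · rintro ⟨h, v, G, h0, h1, -⟩
    exact run_of_blocks M q0 l (fun m => G.blocks h0 h1 m)

end TM
end Hier

namespace Hier
open Turing

theorem not_dom_iff_run {σ : Type*} (f : σ → Option σ) (a : σ) :
    ¬ (StateTransition.eval f a).Dom ↔
      ∃ run : ℕ → σ, run 0 = a ∧ ∀ n, f (run n) = some (run (n + 1)) := by
  constructor
  · intro h
    have key : ∀ b, StateTransition.Reaches f a b → ∃ c, f b = some c := by
      intro b hb
      by_contra hc
      apply h
      have : f b = none := by
        rcases hfb : f b with _ | c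
        · rfl
        · exact absurd ⟨c, hfb⟩ hc
      exact Part.dom_iff_mem.2 ⟨b, StateTransition.mem_eval.2 ⟨hb, this⟩⟩
    choose! g hg using key
    have hr : ∀ n, StateTransition.Reaches f a (g^[n] a) := by
      intro n
      induction n with
      | zero => exact Relation.ReflTransGen.refl
      | succ n ih =>
        rw [Function.iterate_succ_apply']
        exact ih.tail (hg _ ih)
    refine ⟨fun n => g^[n] a, rfl, fun n => ?_⟩
    simp only [Function.iterate_succ_apply']
    exact hg _ (hr n)
  · rintro ⟨run, h0, hs⟩ hd
    obtain ⟨b, hb⟩ := Part.dom_iff_mem.1 hd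
    obtain ⟨h1, h2⟩ := StateTransition.mem_eval.1 hb
    have : ∃ n, run n = b := by
      clear hb h2
      induction h1 with
      | refl => exact ⟨0, h0⟩
      | tail _ h ih =>
        obtain ⟨n, hn⟩ := ih
        refine ⟨n + 1, ?_⟩
        have := hs n
        rw [hn] at this
        have h' : f _ = some _ := h
        rw [this] at h'
        exact Option.some_injective _ h'
    obtain ⟨n, hn⟩ := this
    have := hs n
    rw [hn, h2] at this
    cases this

section
variable {Λ Γ : Type} [Inhabited Γ] [Inhabited Λ]

def convS : TM0.Stmt Γ → Bool ⊕ Γ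
  | TM0.Stmt.move Dir.right => Sum.inl true
  | TM0.Stmt.move Dir.left => Sum.inl false
  | TM0.Stmt.write a => Sum.inr a

open Classical in
def subM (M : TM0.Machine Γ Λ) (S : Set Λ) (q : S) (a : Γ) : Option (Act S Γ) :=
  (M q.1 a).bind fun p => if h : p.1 ∈ S then some (⟨p.1, h⟩, convS p.2) else none

theorem nth_mk1 (l : List Γ) : (Tape.mk₁ l).nth = initT l := by
  funext i
  rcases i with i | i
  · have := Tape.mk'_nth_nat (ListBlank.mk []) (ListBlank.mk l) i
    simp only [Tape.mk₁, Tape.mk₂, initT]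
    erw [this]
    simp
  · simp only [Tape.mk₁, Tape.mk₂, initT, Tape.mk', Tape.nth]
    rw [ListBlank.nth_mk]
    simp

theorem appT_conv (T : Tape Γ) (s : TM0.Stmt Γ) :
    appT (convS s) T.nth = (match s with
      | TM0.Stmt.move d => T.move d
      | TM0.Stmt.write a => T.write a).nth := by
  funext i
  rcases s with (_ | _) | a
  · simp [convS, appT]
  · simp [convS, appT]
  · simp [convS, appT, Tape.write_nth]

theorem mstep_sub (M : TM0.Machine Γ Λ) (S : Set Λ) (ss : TM0.Supports M S)
    (q : Λ) (hq : q ∈ S) (T : Tape Γ) :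
    (TM0.step M ⟨q, T⟩ = none → mstep (subM M S) (⟨q, hq⟩, T.nth) = none) ∧
    (∀ c, TM0.step M ⟨q, T⟩ = some c → ∃ h : c.q ∈ S,
      mstep (subM M S) (⟨q, hq⟩, T.nth) = some (⟨c.q, h⟩, c.Tape.nth)) := by
  rcases hm : M q T.1 with _ | ⟨q', s⟩
  · simp [TM0.step, mstep, subM, hm]
  · have hq' : q' ∈ S := ss.2 hm hq
    refine ⟨by simp [TM0.step, hm], fun c hc => ?_⟩
    simp only [TM0.step, hm, Option.map_some, Option.some.injEq] at hc
    subst hc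
    refine ⟨hq', ?_⟩
    simp only [mstep, subM, Tape.nth_zero, hm, Option.bind_some, hq', dif_pos, Option.map_some]
    rw [appT_conv]
    rfl

theorem nonhalt_sub (M : TM0.Machine Γ Λ) (S : Set Λ) (ss : TM0.Supports M S) (l : List Γ) :
    ¬ (TM0.eval M l).Dom ↔ NonHalt (subM M S) ⟨default, ss.1⟩ l := by
  have e : (TM0.eval M l).Dom ↔ (StateTransition.eval (TM0.step M) (TM0.init l)).Dom := Iff.rfl
  rw [e, not_dom_iff_run]
  constructor
  · rintro ⟨run, h0, hs⟩
    have hS : ∀ n, (run n).q ∈ S := by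
      intro n
      induction n with
      | zero => rw [h0]; exact ss.1
      | succ n ih =>
        obtain ⟨h, _⟩ := (mstep_sub M S ss _ ih (run n).Tape).2 _ (hs n)
        exact h
    refine ⟨fun n => (⟨(run n).q, hS n⟩, (run n).Tape.nth), ?_, fun n => ?_⟩
    · have := hS 0
      simp only [h0, TM0.init, nth_mk1]
    · obtain ⟨h, hh⟩ := (mstep_sub M S ss _ (hS n) (run n).Tape).2 _ (hs n)
      exact hh
  · rintro ⟨run, h0, hs⟩
    rw [← not_dom_iff_run]
    intro hd
    obtain ⟨b, hb⟩ := Part.dom_iff_mem.1 hd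
    obtain ⟨h1, h2⟩ := StateTransition.mem_eval.1 hb
    have : ∃ n, ∃ h : b.q ∈ S, run n = (⟨b.q, h⟩, b.Tape.nth) := by
      clear hb h2
      induction h1 with
      | refl => exact ⟨0, ss.1, by rw [h0]; simp [TM0.init, nth_mk1]⟩
      | @tail b c _ h ih =>
        obtain ⟨n, hh, hn⟩ := ih
        obtain ⟨h', hh'⟩ := (mstep_sub M S ss _ hh b.Tape).2 _ h
        refine ⟨n + 1, h', ?_⟩
        have := hs n
        rw [hn, hh'] at this
        exact (Option.some_injective _ this).symm
    obtain ⟨n, h, hn⟩ := this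
    have := hs n
    rw [hn, (mstep_sub M S ss _ h b.Tape).1 h2] at this
    cases this
end

end Hier

namespace Hier
open Turing

open Turing.PartrecToTM2 in
theorem trPosNum_eq (p : PosNum) :
    trPosNum p = (p : ℕ).bits.map (fun b => cond b Γ'.bit1 Γ'.bit0) := by
  induction p with
  | one => simp [trPosNum]
  | bit1 p ih =>
    have : ((p.bit1 : PosNum) : ℕ) = Nat.bit true (p : ℕ) := by simp [Nat.bit]; ring
    rw [this, Nat.bits_append_bit _ _ (by simp), List.map_cons, ← ih]
    rfl
  | bit0 p ih =>
    have : ((p.bit0 : PosNum) : ℕ) = Nat.bit false (p : ℕ) := by simp [Nat.bit]; ring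
    rw [this, Nat.bits_append_bit _ _ (fun h => absurd h (PosNum.cast_pos (α := ℕ) p).ne'),
      List.map_cons, ← ih]
    rfl

open Turing.PartrecToTM2 in
theorem trNat_eq (n : ℕ) : trNat n = n.bits.map (fun b => cond b Γ'.bit1 Γ'.bit0) := by
  have h : ∀ m : Num, trNum m = (m : ℕ).bits.map (fun b => cond b Γ'.bit1 Γ'.bit0) := by
    intro m
    rcases m with _ | p
    · simp [trNum]
    · exact trPosNum_eq p
  have := h (n : Num)
  rw [Num.to_of_nat] at this
  exact this

theorem bits_primrec : Primrec Nat.bits := by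
  have h : Primrec₂ (fun (_ : Unit) (n : ℕ) => Nat.bits n) := by
    refine Primrec.nat_strong_rec (g := fun _ l =>
      some (if l.length = 0 then [] else (decide (l.length % 2 = 1)) :: (l.getI (l.length / 2)))) _ ?_ ?_
    · refine Primrec.option_some.comp ?_
      have hl : Primrec fun p : Unit × List (List Bool) => p.2.length := Primrec.list_length.comp .snd
      refine Primrec.ite (Primrec.eq.comp hl (.const 0)) (.const []) ?_
      refine Primrec.list_cons.comp ?_ ?_
      · exact Primrec.eq.decide.comp (Primrec.nat_mod.comp hl (.const 2)) (.const 1)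
      · exact Primrec.list_getI.comp .snd (Primrec.nat_div.comp hl (.const 2))
    · intro _ n
      simp only [List.length_map, List.length_range, Option.some.injEq]
      rcases n with _ | n
      · simp
      · have hlt : (n+1)/2 < n+1 := by omega
        simp only [Nat.succ_ne_zero, if_false]
        rw [List.getI_eq_getElem _ (by simpa using hlt)]
        simp only [List.getElem_map, List.getElem_range]
        conv_rhs => rw [← Nat.bit_bodd_div2 (n+1)]
        rw [Nat.bits_append_bit _ _ ?_, Nat.div2_val]
        · congr 1
          rw [Nat.mod_two_of_bodd]
          cases (n+1).bodd <;> simp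
        · intro h
          rw [Nat.div2_val] at h
          have : n + 1 = 1 := by omega
          rw [this]; rfl
  exact h.comp (.const ()) .id


theorem exists_code_pi {β : Type} [Primcodable β] (f : β → ℕ → Bool) (hf : Computable₂ f) :
    ∃ c : ToPartrec.Code, ∀ b, (c.eval [Encodable.encode b]).Dom ↔ ∃ n, f b n = false := by
  let F : ℕ →. ℕ := fun m => (Part.ofOption (Encodable.decode (α := β) m)).bind fun b =>
    Nat.rfind fun n => Part.some (!f b n)
  have hF : Partrec F := by
    refine Partrec.bind (Computable.ofOption Computable.decode) ?_
    refine Partrec.rfind ?_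
    have : Computable₂ fun (p : ℕ × β) (n : ℕ) => !f p.2 n :=
      (Primrec.not.to_comp.comp (hf.comp (Computable.snd.comp .fst) .snd))
    exact this.partrec₂
  obtain ⟨c, hc⟩ := ToPartrec.Code.exists_code (Nat.Partrec'.part_iff₁.2 hF)
  refine ⟨c, fun b => ?_⟩
  have h := hc ⟨[Encodable.encode b], rfl⟩
  rw [show (⟨[Encodable.encode b], rfl⟩ : List.Vector ℕ 1).1 = [Encodable.encode b] from rfl] at h
  rw [h]
  have : (pure <$> F (Encodable.encode b) : Part (List ℕ)).Dom ↔ (F (Encodable.encode b)).Dom := Iff.rfl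
  refine this.trans ?_
  simp only [F, Encodable.encodek, Part.coe_some, Part.bind_some]
  refine Nat.rfind_dom.trans ?_
  constructor
  · rintro ⟨n, h, -⟩
    refine ⟨n, ?_⟩
    simpa [Part.mem_some_iff] using h
  · rintro ⟨n, h⟩
    refine ⟨n, ?_, fun _ => trivial⟩
    simp [Part.mem_some_iff, h]

instance : Finite PartrecToTM2.K' := by
  refine Finite.of_surjective (α := Fin 4) (fun i => ![.main, .rev, .aux, .stack] i) ?_
  intro k
  cases k
  exacts [⟨0, rfl⟩, ⟨1, rfl⟩, ⟨2, rfl⟩, ⟨3, rfl⟩]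

instance : Finite (TM2to1.Γ' PartrecToTM2.K' (fun _ => PartrecToTM2.Γ')) := by
  unfold TM2to1.Γ'
  infer_instance

abbrev inpW (n : ℕ) : List (TM2to1.Γ' PartrecToTM2.K' (fun _ => PartrecToTM2.Γ')) :=
  TM2to1.trInit (K := PartrecToTM2.K') (Γ := fun _ => PartrecToTM2.Γ')
    PartrecToTM2.K'.main (PartrecToTM2.trList [n])

open PartrecToTM2 in
theorem code_machine (c : ToPartrec.Code) :
    ∃ (Λ : Type) (_ : Finite Λ) (M : Λ → TM2to1.Γ' PartrecToTM2.K' (fun _ => PartrecToTM2.Γ') →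
        Option (Act Λ (TM2to1.Γ' PartrecToTM2.K' (fun _ => PartrecToTM2.Γ')))) (q0 : Λ),
      ∀ n, ¬ (c.eval [n]).Dom ↔ NonHalt M q0 (inpW n) := by
  let _ : Inhabited PartrecToTM2.Λ' := ⟨trNormal c Cont'.halt⟩
  have s2 := tr_supports c Cont'.halt
  have s1 := TM2to1.tr_supports _ s2
  have s0 := TM1to0.tr_supports _ s1
  refine ⟨_, ?_, subM (TM1to0.tr (TM2to1.tr PartrecToTM2.tr)) _, ⟨default, s0.1⟩, fun n => ?_⟩
  · exact Finset.finite_toSet _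
  rw [← nonhalt_sub _ _ s0, TM1to0.tr_eval]
  refine not_congr ?_
  refine Iff.trans ?_ (TM2to1.tr_eval_dom PartrecToTM2.tr K'.main (trList [n])).symm
  have h := PartrecToTM2.tr_eval c [n]
  have e : (StateTransition.eval (TM2.step PartrecToTM2.tr) (init c [n])).Dom ↔ (c.eval [n]).Dom := by
    rw [h]; rfl
  rw [← e]
  have e2 : init c [n] = TM2.init K'.main (trList [n]) := by
    unfold init TM2.init
    congr 1
    funext k
    cases k <;> rfl
  rw [e2]
  rfl

abbrev GG : Type := TM2to1.Γ' PartrecToTM2.K' (fun _ => PartrecToTM2.Γ')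

theorem exists_equivFin (α : Type) [Finite α] : ∃ n, Nonempty (α ≃ Fin n) :=
  ⟨_, ⟨Finite.equivFin α⟩⟩

/-- Some primitive recursive coding of a finite type. -/
@[reducible] def primFin (α : Type) [Finite α] : Primcodable α :=
  Primcodable.ofEquiv (Fin (Nat.card α)) (Finite.equivFin α)

def mkG (b : Bool) (a : PartrecToTM2.Γ') : GG :=
  (b, Function.update (fun _ => none) PartrecToTM2.K'.main (some a))

theorem inpW_eq (n : ℕ) : inpW n = mkG true .cons ::
      n.bits.reverse.map (fun b => mkG false (cond b PartrecToTM2.Γ'.bit1 PartrecToTM2.Γ'.bit0)) := by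
  have h : PartrecToTM2.trList [n] = n.bits.map (fun b => cond b .bit1 .bit0) ++ [.cons] := by
    simp only [PartrecToTM2.trList, trNat_eq]
  unfold inpW
  rw [h]
  unfold TM2to1.trInit
  rw [List.reverse_append, ← List.map_reverse]
  simp only [List.reverse_singleton, List.singleton_append]
  change _ :: List.map (mkG false) (List.map _ _) = _
  rw [List.map_map]
  rfl

theorem inpW_primrec [Primcodable GG] : Primrec inpW := by
  refine Primrec.of_eq (f := fun n : ℕ => mkG true .cons ::
      n.bits.reverse.map (fun b => mkG false (cond b PartrecToTM2.Γ'.bit1 PartrecToTM2.Γ'.bit0)))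
      ?_ (fun n => (inpW_eq n).symm)
  refine Primrec.list_cons.comp (.const _) ?_
  have hd : Primrec (fun b : Bool => mkG false (cond b PartrecToTM2.Γ'.bit1 PartrecToTM2.Γ'.bit0)) :=
    Primrec.dom_finite _
  exact Primrec.list_map (Primrec.list_reverse.comp bits_primrec) (hd.comp Primrec.snd).to₂

theorem pi_machine {β : Type} [Primcodable β] (B : β → Prop) (f : β → ℕ → Bool)
    (hf : Computable₂ f) (hB : ∀ b, B b ↔ ∀ n, f b n = true) :
    ∃ (Λ : Type) (_ : Finite Λ) (M : Λ → GG → Option (Act Λ GG)) (q0 : Λ),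
      ∀ b, B b ↔ NonHalt M q0 (inpW (Encodable.encode b)) := by
  obtain ⟨c, hc⟩ := exists_code_pi f hf
  obtain ⟨Λ, hΛ, M, q0, hM⟩ := code_machine c
  refine ⟨Λ, hΛ, M, q0, fun b => ?_⟩
  rw [← hM, hc, hB]
  simp

end Hier

namespace Hier

def WangTiles (W : List (ℕ × ℕ × ℕ × ℕ)) : Prop :=
  ∃ hE vE : ℤ → ℤ → ℕ, ∀ x y, (hE x y, hE (x+1) y, vE x y, vE x (y+1)) ∈ W

section listing
variable {F G : Type} [Primcodable F] [Finite F] [Primcodable G] [Finite G] [Inhabited G]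

def symsL (F : Type) [Finite F] (n : ℕ) : List (F × ℕ) :=
  letI := Fintype.ofFinite F
  (Finset.univ : Finset F).toList.flatMap fun p => (List.range (n+1)).map fun i => (p, i)

theorem mem_symsL (n : ℕ) (s : F × ℕ) : s ∈ symsL F n ↔ s.2 ≤ n := by
  obtain ⟨a, b⟩ := s
  simp [symsL, Nat.lt_succ_iff]

abbrev Data (F G : Type) : Type := (F × F × F × F) × (G × G) × (Bool × Bool) × (Bool × Bool)
abbrev Quad (F : Type) : Type := ((F × ℕ) × (F × ℕ)) × ((F × ℕ) × (F × ℕ))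

def dataOf (l : List G) (q : Quad F) : Data F G :=
  ((q.1.1.1, q.1.2.1, q.2.1.1, q.2.2.1), (l.getI 0, l.getI q.1.1.2),
    (decide (q.1.2.2 = min 1 l.length), decide (q.1.2.2 = min (q.1.1.2 + 1) l.length)),
    (decide (q.1.2.2 = q.1.1.2), decide (q.2.2.2 = q.2.1.2)))

def encQ (q : Quad F) : ℕ × ℕ × ℕ × ℕ :=
  (Encodable.encode q.1.1, Encodable.encode q.1.2, Encodable.encode q.2.1, Encodable.encode q.2.2)

def pairsL {α : Type} (L : List α) : List (α × α) := L.flatMap fun a => L.map fun b => (a, b)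

def Wl (Q : Data F G → Bool) (l : List G) : List (ℕ × ℕ × ℕ × ℕ) :=
  (pairsL (pairsL (symsL F l.length))).filterMap fun q =>
    if Q (dataOf l q) = true then some (encQ q) else none

theorem mem_Wl (Q : Data F G → Bool) (l : List G) (t : ℕ × ℕ × ℕ × ℕ) :
    t ∈ Wl Q l ↔ ∃ w e s n : F × ℕ, w.2 ≤ l.length ∧ e.2 ≤ l.length ∧ s.2 ≤ l.length ∧
      n.2 ≤ l.length ∧ Q (dataOf l ((w, e), (s, n))) = true ∧ t = encQ ((w, e), (s, n)) := by
  simp only [Wl, pairsL, List.mem_filterMap, List.mem_flatMap, List.mem_map, Option.ite_none_right_eq_some,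
    Option.some.injEq]
  constructor
  · rintro ⟨q, ⟨_, ⟨w, hw, e, he, rfl⟩, _, ⟨s, hs, n, hn, rfl⟩, rfl⟩, h1, h2⟩
    rw [mem_symsL] at hw he hs hn
    exact ⟨w, e, s, n, hw, he, hs, hn, h1, h2.symm⟩
  · rintro ⟨w, e, s, n, hw, he, hs, hn, h1, h2⟩
    rw [← mem_symsL (F := F)] at hw he hs hn
    exact ⟨_, ⟨_, ⟨w, hw, e, he, rfl⟩, _, ⟨s, hs, n, hn, rfl⟩, rfl⟩, h1, h2.symm⟩

theorem symsL_primrec : Primrec (symsL F) := by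
  unfold symsL
  refine Primrec.list_flatMap (.const _) ?_
  refine Primrec.list_map (Primrec.list_range.comp (Primrec.succ.comp .fst)) ?_
  exact (Primrec.snd.comp Primrec.fst).pair Primrec.snd

theorem pairsL_primrec {α : Type} [Primcodable α] : Primrec (pairsL (α := α)) := by
  unfold pairsL
  refine Primrec.list_flatMap .id ?_
  refine Primrec.list_map .fst ?_
  exact (Primrec.snd.comp Primrec.fst).pair Primrec.snd

theorem dataOf_primrec : Primrec₂ (dataOf (F := F) (G := G)) := by
  have hw : Primrec fun p : List G × Quad F => p.2.1.1 := Primrec.fst.comp (Primrec.fst.comp .snd)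
  have he : Primrec fun p : List G × Quad F => p.2.1.2 := Primrec.snd.comp (Primrec.fst.comp .snd)
  have hs : Primrec fun p : List G × Quad F => p.2.2.1 := Primrec.fst.comp (Primrec.snd.comp .snd)
  have hn : Primrec fun p : List G × Quad F => p.2.2.2 := Primrec.snd.comp (Primrec.snd.comp .snd)
  have hl : Primrec fun p : List G × Quad F => p.1.length := Primrec.list_length.comp .fst
  have hm : Primrec₂ fun a b : ℕ => min a b := Primrec.nat_min
  unfold dataOf
  refine Primrec.pair ?_ (Primrec.pair ?_ (Primrec.pair ?_ ?_))
  · exact (Primrec.fst.comp hw).pair ((Primrec.fst.comp he).pair ((Primrec.fst.comp hs).pair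
      (Primrec.fst.comp hn)))
  · exact (Primrec.list_getI.comp .fst (.const 0)).pair (Primrec.list_getI.comp .fst (Primrec.snd.comp hw))
  · refine Primrec.pair ?_ ?_
    · exact Primrec.eq.decide.comp (Primrec.snd.comp he) (hm.comp (.const 1) hl)
    · exact Primrec.eq.decide.comp (Primrec.snd.comp he)
        (hm.comp (Primrec.succ.comp (Primrec.snd.comp hw)) hl)
  · refine Primrec.pair ?_ ?_
    · exact Primrec.eq.decide.comp (Primrec.snd.comp he) (Primrec.snd.comp hw)
    · exact Primrec.eq.decide.comp (Primrec.snd.comp hn) (Primrec.snd.comp hs)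

theorem Wl_primrec (Q : Data F G → Bool) : Primrec (Wl Q) := by
  unfold Wl
  refine Primrec.listFilterMap ?_ ?_
  · exact pairsL_primrec.comp (pairsL_primrec.comp (symsL_primrec.comp Primrec.list_length))
  · have hQ : Primrec Q := Primrec.dom_finite _
    have h1 : Primrec fun p : List G × Quad F => Q (dataOf p.1 p.2) :=
      hQ.comp (dataOf_primrec.comp .fst .snd)
    have h2 : Primrec fun p : List G × Quad F => encQ p.2 := by
      unfold encQ
      have hw : Primrec fun p : List G × Quad F => p.2.1.1 := Primrec.fst.comp (Primrec.fst.comp .snd)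
      have he : Primrec fun p : List G × Quad F => p.2.1.2 := Primrec.snd.comp (Primrec.fst.comp .snd)
      have hs : Primrec fun p : List G × Quad F => p.2.2.1 := Primrec.fst.comp (Primrec.snd.comp .snd)
      have hn : Primrec fun p : List G × Quad F => p.2.2.2 := Primrec.snd.comp (Primrec.snd.comp .snd)
      exact (Primrec.encode.comp hw).pair ((Primrec.encode.comp he).pair ((Primrec.encode.comp hs).pair
        (Primrec.encode.comp hn)))
    exact Primrec.ite (Primrec.eq.comp h1 (.const true)) (Primrec.option_some.comp h2) (.const none)

end listing

section cells
variable {A : Type}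

def pack (p : Lab A) (i : ℕ) : Lab (A × ℕ) := ⟨p.b, p.r, p.f, p.m, p.tf, p.tm, (p.d, i)⟩
def strip (p : Lab (A × ℕ)) : Lab A := ⟨p.b, p.r, p.f, p.m, p.tf, p.tm, p.d.1⟩

theorem pack_strip (p : Lab (A × ℕ)) : pack (strip p) p.d.2 = p := rfl

def Cell2 (K : Bool → Bool → A → A → A → A → Prop) (t : Prop) (cx cy : Prop) [Decidable cx]
    [Decidable cy] (w e s n : Lab A) : Prop :=
  (e.b = w.b ∧ e.f = w.f ∧ e.m = w.m ∧ n.b = s.b ∧ n.f = s.f ∧ n.m = s.m) ∧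
  ((EqCell K cx cy w e s n ∧ (cx ↔ cy)) ∨ ((LtCell cx w e s n ∧ t) ∧ ¬ cy) ∨
    ((LtCell cy s n w e ∧ t) ∧ ¬ cx))

theorem lt_pack (cx : Prop) [Decidable cx] (w e s n : Lab A) (i j k l : ℕ) :
    LtCell cx (pack w i) (pack e j) (pack s k) (pack n l) ↔ LtCell cx w e s n ∧ j = i ∧ l = k := by
  unfold LtCell pack
  simp only [Prod.mk.injEq]
  tauto

theorem cell_pack (C : Bool → Bool → A × ℕ → A × ℕ → A × ℕ → A × ℕ → Prop) (cx cy : Prop) [Decidable cx]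
    [Decidable cy] (w e s n : Lab A) (i j k l : ℕ) :
    Cell C cx cy (pack w i) (pack e j) (pack s k) (pack n l) ↔
      Cell2 (fun fx fy w e s n => C fx fy (w, i) (e, j) (s, k) (n, l)) (j = i ∧ l = k) cx cy w e s n := by
  unfold Cell Cell2
  rw [lt_pack, lt_pack, and_comm (a := l = k)]
  exact Iff.rfl
end cells

instance {A : Type} [Finite A] : Finite (Lab A) := by
  refine Finite.of_injective (β := Bool × Fin 8 × Bool × Fin 4 × Bool × Fin 4 × A)
    (fun p => (p.b, p.r, p.f, p.m, p.tf, p.tm, p.d)) ?_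
  rintro ⟨⟩ ⟨⟩ h
  simpa using h

theorem parity_shift (p : ℤ → ℤ → Bool) (h1 : ∀ x y, p (x+1) y = !p x y) (h2 : ∀ x y, p x (y+1) = p x y) :
    ∃ a : ℤ, ∀ x y, p (x + a) y = decide (x % 2 = 1) := by
  have hy : ∀ x y, p x y = p x 0 := by
    intro x y
    induction y using Int.induction_on with
    | zero => rfl
    | succ i ih => rw [h2, ih]
    | pred i ih => rw [← ih, ← h2 x (-i - 1)]; congr 1; ring
  have hx : ∃ a, p a 0 = false := by
    rcases h : p 0 0
    · exact ⟨0, h⟩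
    · exact ⟨1, by rw [← zero_add (1:ℤ), h1, h]; rfl⟩
  obtain ⟨a, ha⟩ := hx
  refine ⟨a, fun x y => ?_⟩
  rw [hy]
  induction x using Int.induction_on with
  | zero => simpa using ha
  | succ i ih =>
    rw [show (i:ℤ) + 1 + a = i + a + 1 by ring, h1, ih]
    rcases Int.emod_two_eq_zero_or_one (i:ℤ) with h | h
    · have : ((i:ℤ)+1) % 2 = 1 := by omega
      simp [h, this]
    · have : ((i:ℤ)+1) % 2 = 0 := by omega
      simp [h, this]
  | pred i ih =>
    have := h1 (-(i:ℤ) - 1 + a) 0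
    rw [show -(i:ℤ) - 1 + a + 1 = -i + a by ring, ih] at this
    have e : p (-(i:ℤ) - 1 + a) 0 = !decide ((-(i:ℤ)) % 2 = 1) := by rw [this]; simp
    rw [e]
    rcases Int.emod_two_eq_zero_or_one (-(i:ℤ)) with h | h
    · have : (-(i:ℤ)-1) % 2 = 1 := by omega
      simp [h, this]
    · have : (-(i:ℤ)-1) % 2 = 0 := by omega
      simp [h, this]

end Hier

namespace Hier

theorem cell_congr {A : Type} (C : Bool → Bool → A → A → A → A → Prop) {cx cy cx' cy' : Prop}
    [i1 : Decidable cx] [i2 : Decidable cy] [i3 : Decidable cx'] [i4 : Decidable cy'] (hx : cx ↔ cx')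
    (hy : cy ↔ cy') (w e s n : Lab A) : Cell C cx cy w e s n ↔ Cell C cx' cy' w e s n := by
  obtain rfl := propext hx
  obtain rfl := propext hy
  obtain rfl := Subsingleton.elim i1 i3
  obtain rfl := Subsingleton.elim i2 i4
  rfl

section
variable {Λ Γ : Type} [Inhabited Γ]

abbrev SymF (Λ Γ : Type) : Type := (Bool × Bool) × Lab (FF Λ Γ)

/-- tile conditions in terms of labelled symbols -/
def okT (M : Λ → Γ → Option (Act Λ Γ)) (q0 : Λ) (l : List Γ) (w e s n : SymF Λ Γ × ℕ) : Prop :=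
  (s.1.1 = w.1.1 ∧ e.1.1 = (!w.1.1.1, w.1.1.2) ∧ n.1.1 = (w.1.1.1, !w.1.1.2)) ∧
  (w.1.1.1 = true → s.1.2.f = true) ∧ (w.1.1.2 = true → w.1.2.f = true) ∧
  Cell (relC M q0 l) (w.1.1.1 = true) (w.1.1.2 = true) (pack w.1.2 w.2) (pack e.1.2 e.2)
    (pack s.1.2 s.2) (pack n.1.2 n.2)

def okD (M : Λ → Γ → Option (Act Λ Γ)) (q0 : Λ) (d : Data (SymF Λ Γ) Γ) : Prop :=
  let w := d.1.1
  let e := d.1.2.1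
  let s := d.1.2.2.1
  let n := d.1.2.2.2
  (s.1 = w.1 ∧ e.1 = (!w.1.1, w.1.2) ∧ n.1 = (w.1.1, !w.1.2)) ∧
  (w.1.1 = true → s.2.f = true) ∧ (w.1.2 = true → w.2.f = true) ∧
  Cell2 (fun fx fy w e s n => rel0 M q0 fx fy w e s n (if fx then d.2.1.1 else d.2.1.2) ∧
      (if fx then d.2.2.1.1 else d.2.2.1.2) = true) (d.2.2.2.1 = true ∧ d.2.2.2.2 = true)
    (w.1.1 = true) (w.1.2 = true) w.2 e.2 s.2 n.2

theorem okD_iff (M : Λ → Γ → Option (Act Λ Γ)) (q0 : Λ) (l : List Γ) (w e s n : SymF Λ Γ × ℕ) :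
    okD M q0 (dataOf l ((w, e), (s, n))) ↔ okT M q0 l w e s n := by
  unfold okD okT
  rw [cell_pack]
  have : (fun (fx fy : Bool) (w' e' s' n' : FF Λ Γ) => relC M q0 l fx fy (w', w.2) (e', e.2) (s', s.2) (n', n.2)) =
     (fun fx fy w' e' s' n' => rel0 M q0 fx fy w' e' s' n' (if fx then l.getI 0 else l.getI w.2) ∧
      (if fx then decide (e.2 = min 1 l.length) else decide (e.2 = min (w.2 + 1) l.length)) = true) := by
    funext fx fy w' e' s' n'
    unfold relC
    cases fx <;> simp
  rw [this]
  simp only [dataOf, decide_eq_true_eq]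

theorem tiles_iff (M : Λ → Γ → Option (Act Λ Γ)) (q0 : Λ) (l : List Γ) [Finite Λ] [Finite Γ] :
    NonHalt M q0 l ↔ ∃ H V : ℤ → ℤ → SymF Λ Γ × ℕ, (∀ x y, okT M q0 l (H x y) (H (x+1) y) (V x y) (V x (y+1)))
      ∧ (∀ x y, (H x y).2 ≤ l.length) ∧ (∀ x y, (V x y).2 ≤ l.length) := by
  rw [tm_tiles]
  constructor
  · rintro ⟨h, v, hg, hv, hh, h1, h2⟩
    refine ⟨fun x y => (((decide (x % 2 = 1), decide (y % 2 = 1)), strip (h x y)), (h x y).d.2),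
      fun x y => (((decide (x % 2 = 1), decide (y % 2 = 1)), strip (v x y)), (v x y).d.2), ?_, h1, h2⟩
    intro x y
    have e : ∀ x : ℤ, decide ((x+1) % 2 = 1) = !decide (x % 2 = 1) := by
      intro x
      rcases Int.emod_two_eq_zero_or_one x with h | h
      · have : (x+1) % 2 = 1 := by omega
        simp [h, this]
      · have : (x+1) % 2 = 0 := by omega
        simp [h, this]
    refine ⟨⟨rfl, by simp only [e], by simp only [e]⟩, ?_, ?_, ?_⟩
    · intro hx
      have hx : x % 2 = 1 := by simpa using hx
      have : x = 2 * (x / 2) + 1 := by omega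
      rw [this]
      exact hv _ _
    · intro hy
      have hy : y % 2 = 1 := by simpa using hy
      have : y = 2 * (y / 2) + 1 := by omega
      rw [this]
      exact hh _ _
    · refine (cell_congr _ ?_ ?_ _ _ _ _).1 (hg x y) <;> simp
  · rintro ⟨H, V, hT, h1, h2⟩
    have pv : ∀ x y, (V x y).1.1 = (H x y).1.1 := fun x y => (hT x y).1.1
    obtain ⟨a, ha⟩ := parity_shift (fun x y => (H x y).1.1.1)
      (fun x y => by have := (hT x y).1.2.1; simp [this])
      (fun x y => by have := (hT x y).1.2.2; rw [pv] at this; simp [this])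
    obtain ⟨b, hb⟩ := parity_shift (fun y x => (H x y).1.1.2)
      (fun y x => by have := (hT x y).1.2.2; rw [pv] at this; simp [this])
      (fun y x => by have := (hT x y).1.2.1; simp [this])
    have key : ∀ x y, okT M q0 l (H (x + a) (y + b)) (H (x + 1 + a) (y + b)) (V (x + a) (y + b))
        (V (x + a) (y + 1 + b)) := by
      intro x y
      have := hT (x + a) (y + b)
      rwa [show x + a + 1 = x + 1 + a by ring, show y + b + 1 = y + 1 + b by ring] at this
    refine ⟨fun x y => pack (H (x + a) (y + b)).1.2 (H (x+a) (y+b)).2,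
      fun x y => pack (V (x + a) (y + b)).1.2 (V (x+a) (y+b)).2, ?_, ?_, ?_, ?_, ?_⟩
    · intro x y
      have := (key x y).2.2.2
      refine (cell_congr _ ?_ ?_ _ _ _ _).1 this
      · simpa using congrArg (· = true) (ha x (y + b))
      · simpa using congrArg (· = true) (hb y (x + a))
    · intro i y
      have h := (key (2*i+1) (y)).2.1
      apply h
      have := ha (2*i+1) (y + b)
      rw [this]; simp
    · intro i x
      have h := (key x (2*i+1)).2.2.1
      apply h
      have := hb (2*i+1) (x + a)
      rw [this]; simp
    · intro x y; exact h1 _ _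
    · intro x y; exact h2 _ _

end

theorem berger {β : Type} [Primcodable β] (B : β → Prop) (f : β → ℕ → Bool)
    (hf : Computable₂ f) (hB : ∀ b, B b ↔ ∀ n, f b n = true) :
    ∃ W : β → List (ℕ × ℕ × ℕ × ℕ), Computable W ∧ ∀ b, B b ↔ WangTiles (W b) := by
  classical
  obtain ⟨Λ, hΛ, M, q0, hM⟩ := pi_machine B f hf hB
  let _ : Primcodable GG := primFin GG
  let _ : Primcodable (SymF Λ GG) := primFin (SymF Λ GG)
  let Q : Data (SymF Λ GG) GG → Bool := fun d => decide (okD M q0 d)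
  refine ⟨fun b => Wl Q (inpW (Encodable.encode b)), ?_, fun b => ?_⟩
  · exact ((Wl_primrec Q).comp (inpW_primrec.comp Primrec.encode)).to_comp
  rw [hM, tiles_iff]
  set l := inpW (Encodable.encode b)
  constructor
  · rintro ⟨H, V, hT, h1, h2⟩
    refine ⟨fun x y => Encodable.encode (H x y), fun x y => Encodable.encode (V x y), fun x y => ?_⟩
    rw [mem_Wl]
    refine ⟨H x y, H (x+1) y, V x y, V x (y+1), h1 _ _, h1 _ _, h2 _ _, h2 _ _, ?_, rfl⟩
    simp only [Q, decide_eq_true_eq]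
    rw [okD_iff]
    exact hT x y
  · rintro ⟨hE, vE, h⟩
    simp only [mem_Wl] at h
    choose w e s n h1 h2 h3 h4 h5 h6 using h
    simp only [encQ, Prod.mk.injEq] at h6
    refine ⟨w, s, fun x y => ?_, h1, h3⟩
    have he : w (x+1) y = e x y := Encodable.encode_injective
      ((h6 (x+1) y).1.symm.trans (h6 x y).2.1)
    have hn : s x (y+1) = n x y := Encodable.encode_injective
      ((h6 x (y+1)).2.2.1.symm.trans (h6 x y).2.2.2)
    rw [he, hn, ← okD_iff]
    simpa [Q] using h5 x y

end Hier

namespace Geo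

def det (a b : Pt) : ℝ := a 0 * b 1 - a 1 * b 0

theorem det_add_left (a b c : Pt) : det (a + b) c = det a c + det b c := by simp [det]; ring
theorem det_add_right (a b c : Pt) : det a (b + c) = det a b + det a c := by simp [det]; ring
theorem det_sub_right (a b c : Pt) : det a (b - c) = det a b - det a c := by simp [det]; ring
theorem det_sub_left (a b c : Pt) : det (a - b) c = det a c - det b c := by simp [det]; ring
theorem det_smul_left (r : ℝ) (a b : Pt) : det (r • a) b = r * det a b := by simp [det]; ring
theorem det_smul_right (r : ℝ) (a b : Pt) : det a (r • b) = r * det a b := by simp [det]; ring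
theorem det_neg_right (a b : Pt) : det a (-b) = - det a b := by simp [det]; ring
theorem det_neg_left (a b : Pt) : det (-a) b = - det a b := by simp [det]; ring
theorem det_self (a : Pt) : det a a = 0 := by simp [det]; ring
theorem det_swap (a b : Pt) : det a b = - det b a := by simp [det]; ring
theorem det_zero_left (a : Pt) : det 0 a = 0 := by simp [det]
theorem det_zero_right (a : Pt) : det a 0 = 0 := by simp [det]

theorem pt_ext {a b : Pt} (h0 : a 0 = b 0) (h1 : a 1 = b 1) : a = b := by
  ext i; fin_cases i <;> assumption

/-- coordinates in a basis -/
theorem coords (y z p : Pt) (h : det y z ≠ 0) :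
    p = (det p z / det y z) • y + (det y p / det y z) • z := by
  apply pt_ext <;> simp <;> field_simp <;> simp [det] <;> ring

theorem comb_inj {y z : Pt} (h : det y z ≠ 0) {s t s' t' : ℝ} (e : s • y + t • z = s' • y + t' • z) :
    s = s' ∧ t = t' := by
  have h1 := congrArg (fun p => det p z) e
  have h2 := congrArg (fun p => det y p) e
  simp only [det_add_left, det_add_right, det_smul_left, det_smul_right, det_self, mul_zero, add_zero,
    zero_add] at h1 h2
  exact ⟨mul_right_cancel₀ h h1, mul_right_cancel₀ h h2⟩

theorem det_eq_zero_of_mul {y d : Pt} (hy : y ≠ 0) (h : det y d = 0) : ∃ c : ℝ, d = c • y := by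
  by_cases h0 : y 0 = 0
  · have h1 : y 1 ≠ 0 := fun h1 => hy (pt_ext (by simpa using h0) (by simpa using h1))
    have : d 0 = 0 := by
      simp [det, h0] at h
      tauto
    refine ⟨d 1 / y 1, pt_ext ?_ ?_⟩
    · simp [h0, this]
    · simp; field_simp
  · refine ⟨d 0 / y 0, pt_ext ?_ ?_⟩
    · simp; field_simp
    · simp; field_simp; simp [det] at h; linarith

theorem det_ne_of_valid {T : Rhombus} (h : T.IsValid) : det T.u T.v ≠ 0 := by
  intro h0
  have hl := h.1
  have hu : T.u ≠ 0 := hl.ne_zero 0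
  obtain ⟨c, hc⟩ := det_eq_zero_of_mul hu h0
  have := LinearIndependent.pair_iff.1 hl c (-1) (by rw [hc]; simp)
  exact absurd this.2 (by norm_num)

/-- `T` is the parallelogram with corner `a` and sides `y`, `z`. -/
def Rep (T : Rhombus) (a y z : Pt) : Prop :=
  (a = T.pos ∧ y = T.u ∧ z = T.v) ∨ (a = T.pos + T.u ∧ y = -T.u ∧ z = T.v) ∨
  (a = T.pos + T.v ∧ y = T.u ∧ z = -T.v) ∨ (a = T.pos + T.u + T.v ∧ y = -T.u ∧ z = -T.v) ∨
  (a = T.pos ∧ z = T.u ∧ y = T.v) ∨ (a = T.pos + T.u ∧ z = -T.u ∧ y = T.v) ∨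
  (a = T.pos + T.v ∧ z = T.u ∧ y = -T.v) ∨ (a = T.pos + T.u + T.v ∧ z = -T.u ∧ y = -T.v)

theorem Rep.base (T : Rhombus) : Rep T T.pos T.u T.v := Or.inl ⟨rfl, rfl, rfl⟩

theorem Rep.swap {T : Rhombus} {a y z : Pt} (h : Rep T a y z) : Rep T a z y := by
  unfold Rep at *
  rcases h with h | h | h | h | h | h | h | h
  · exact .inr <| .inr <| .inr <| .inr <| .inl h
  · exact .inr <| .inr <| .inr <| .inr <| .inr <| .inl h
  · exact .inr <| .inr <| .inr <| .inr <| .inr <| .inr <| .inl h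
  · exact .inr <| .inr <| .inr <| .inr <| .inr <| .inr <| .inr h
  · exact .inl h
  · exact .inr <| .inl h
  · exact .inr <| .inr <| .inl h
  · exact .inr <| .inr <| .inr <| .inl h

theorem Rep.flip {T : Rhombus} {a y z : Pt} (h : Rep T a y z) : Rep T (a + z) y (-z) := by
  unfold Rep at *
  rcases h with ⟨rfl, rfl, rfl⟩ | ⟨rfl, rfl, rfl⟩ | ⟨rfl, rfl, rfl⟩ | ⟨rfl, rfl, rfl⟩ |
    ⟨rfl, rfl, rfl⟩ | ⟨rfl, rfl, rfl⟩ | ⟨rfl, rfl, rfl⟩ | ⟨rfl, rfl, rfl⟩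
  · exact .inr <| .inr <| .inl ⟨by abel, rfl, rfl⟩
  · exact .inr <| .inr <| .inr <| .inl ⟨by abel, rfl, rfl⟩
  · exact .inl ⟨by abel, rfl, by simp⟩
  · exact .inr <| .inl ⟨by abel, rfl, by simp⟩
  · exact .inr <| .inr <| .inr <| .inr <| .inr <| .inl ⟨by abel, rfl, rfl⟩
  · exact .inr <| .inr <| .inr <| .inr <| .inl ⟨by abel, by simp, rfl⟩
  · exact .inr <| .inr <| .inr <| .inr <| .inr <| .inr <| .inr ⟨by abel, rfl, rfl⟩
  · exact .inr <| .inr <| .inr <| .inr <| .inr <| .inr <| .inl ⟨by abel, by simp, rfl⟩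

/-- induction principle: all representations come from the basic one by swaps and flips -/
theorem Rep.rec' {T : Rhombus} (P : Pt → Pt → Pt → Prop) (h0 : P T.pos T.u T.v)
    (hs : ∀ a y z, P a y z → P a z y) (hf : ∀ a y z, P a y z → P (a + z) y (-z))
    {a y z : Pt} (h : Rep T a y z) : P a y z := by
  have f1 : ∀ a y z, P a y z → P (a + y) (-y) z := fun a y z h => hs _ _ _ (hf _ _ _ (hs _ _ _ h))
  rcases h with ⟨rfl, rfl, rfl⟩ | ⟨rfl, rfl, rfl⟩ | ⟨rfl, rfl, rfl⟩ | ⟨rfl, rfl, rfl⟩ |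
    ⟨rfl, rfl, rfl⟩ | ⟨rfl, rfl, rfl⟩ | ⟨rfl, rfl, rfl⟩ | ⟨rfl, rfl, rfl⟩
  · exact h0
  · exact f1 _ _ _ h0
  · exact hf _ _ _ h0
  · exact hf _ _ _ (f1 _ _ _ h0)
  · exact hs _ _ _ h0
  · exact hs _ _ _ (f1 _ _ _ h0)
  · exact hs _ _ _ (hf _ _ _ h0)
  · exact hs _ _ _ (hf _ _ _ (f1 _ _ _ h0))

theorem Rep.mem_support {T : Rhombus} {a y z : Pt} (h : Rep T a y z) (p : Pt) :
    p ∈ T.support ↔ ∃ s t : ℝ, s ∈ Icc (0 : ℝ) 1 ∧ t ∈ Icc (0 : ℝ) 1 ∧ p = a + s • y + t • z := by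
  refine Rep.rec' (fun a y z => p ∈ T.support ↔ ∃ s t : ℝ, s ∈ Icc (0 : ℝ) 1 ∧ t ∈ Icc (0 : ℝ) 1 ∧
    p = a + s • y + t • z) Iff.rfl ?_ ?_ h
  · intro a y z h
    rw [h]
    constructor <;> rintro ⟨s, t, hs, ht, e⟩ <;> exact ⟨t, s, ht, hs, by rw [e]; abel⟩
  · intro a y z h
    rw [h]
    constructor <;> rintro ⟨s, t, hs, ht, e⟩ <;>
      refine ⟨s, 1 - t, hs, ⟨by linarith [ht.2], by linarith [ht.1]⟩, ?_⟩ <;> rw [e] <;> module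

theorem Rep.det_ne {T : Rhombus} (hT : T.IsValid) {a y z : Pt} (h : Rep T a y z) : det y z ≠ 0 := by
  refine Rep.rec' (fun a y z => det y z ≠ 0) (det_ne_of_valid hT) ?_ ?_ h
  · intro a y z h; rw [det_swap]; simpa using h
  · intro a y z h; rw [det_neg_right]; simpa using h

def seg (a w : Pt) : Set Pt := segment ℝ a (a + w)

theorem seg_neg (a w : Pt) : seg (a + w) (-w) = seg a w := by
  unfold seg; rw [add_neg_cancel_right, segment_symm]

theorem mem_seg {a w p : Pt} : p ∈ seg a w ↔ ∃ s ∈ Icc (0:ℝ) 1, p = a + s • w := by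
  unfold seg
  rw [segment_eq_image']
  simp [eq_comm, and_assoc]

theorem seg_inj {a w b w' : Pt} (h : seg a w = seg b w') :
    (a = b ∧ w = w') ∨ (a = b + w' ∧ w = -w') := by
  have h1 : a ∈ seg b w' := h ▸ mem_seg.2 ⟨0, by simp, by simp⟩
  have h2 : a + w ∈ seg b w' := h ▸ mem_seg.2 ⟨1, by simp, by simp⟩
  have h3 : b ∈ seg a w := h ▸ mem_seg.2 ⟨0, by simp, by simp⟩
  have h4 : b + w' ∈ seg a w := h ▸ mem_seg.2 ⟨1, by simp, by simp⟩
  obtain ⟨s, hs, e1⟩ := mem_seg.1 h1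
  obtain ⟨t, ht, e2⟩ := mem_seg.1 h2
  obtain ⟨s', hs', e3⟩ := mem_seg.1 h3
  obtain ⟨t', ht', e4⟩ := mem_seg.1 h4
  have hw : w = (t - s) • w' := by
    have : w = (a + w) - a := by abel
    rw [this, e2, e1]; module
  have hw' : w' = (t' - s') • w := by
    have : w' = (b + w') - b := by abel
    rw [this, e4, e3]; module
  by_cases h0 : w' = 0
  · have : w = 0 := by rw [hw, h0, smul_zero]
    left; refine ⟨?_, by rw [this, h0]⟩
    rw [e1, h0]; simp
  · have h5 : ((t' - s') * (t - s)) • w' = (1:ℝ) • w' := by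
      rw [mul_smul, ← hw, ← hw', one_smul]
    have h6 : (t' - s') * (t - s) = 1 := smul_left_injective ℝ h0 h5
    have a1 : |t' - s'| ≤ 1 := by rw [abs_le]; constructor <;> linarith [hs'.1, hs'.2, ht'.1, ht'.2]
    have a2 : |t - s| ≤ 1 := by rw [abs_le]; constructor <;> linarith [hs.1, hs.2, ht.1, ht.2]
    have a3 : |t' - s'| * |t - s| = 1 := by rw [← abs_mul, h6, abs_one]
    have a4 : |t - s| = 1 := by nlinarith [abs_nonneg (t' - s'), abs_nonneg (t-s)]
    rcases eq_or_eq_neg_of_abs_eq a4 with h7 | h7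
    · have : s = 0 := by linarith [hs.1, ht.2]
      left
      refine ⟨by rw [e1, this]; simp, by rw [hw, h7, one_smul]⟩
    · have : s = 1 := by linarith [hs.2, ht.1]
      right
      refine ⟨by rw [e1, this]; simp, by rw [hw, h7]; simp⟩

theorem edge0 (T : Rhombus) : T.edge 0 = seg T.pos T.u := rfl
theorem edge1 (T : Rhombus) : T.edge 1 = seg (T.pos + T.u) T.v := rfl
theorem edge2 (T : Rhombus) : T.edge 2 = seg (T.pos + T.v) T.u := by
  show segment ℝ (T.pos + T.u + T.v) (T.pos + T.v) = segment ℝ (T.pos + T.v) (T.pos + T.v + T.u)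
  rw [segment_symm, add_right_comm]
theorem edge3 (T : Rhombus) : T.edge 3 = seg T.pos T.v := by
  show segment ℝ (T.pos + T.v) T.pos = segment ℝ T.pos (T.pos + T.v)
  exact segment_symm _ _ _

/-- the four edges in terms of a representation -/
theorem Rep.edges {T : Rhombus} {a y z : Pt} (h : Rep T a y z) (e : Set Pt) :
    (∃ k, T.edge k = e) ↔ e = seg a y ∨ e = seg (a + z) y ∨ e = seg a z ∨ e = seg (a + y) z := by
  refine Rep.rec' (fun a y z => (∃ k, T.edge k = e) ↔ e = seg a y ∨ e = seg (a + z) y ∨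
    e = seg a z ∨ e = seg (a + y) z) ?_ ?_ ?_ h
  · constructor
    · rintro ⟨k, rfl⟩
      fin_cases k
      · exact .inl (edge0 T)
      · exact .inr (.inr (.inr (edge1 T)))
      · exact .inr (.inl (edge2 T))
      · exact .inr (.inr (.inl (edge3 T)))
    · rintro (rfl | rfl | rfl | rfl)
      exacts [⟨0, edge0 T⟩, ⟨2, edge2 T⟩, ⟨3, edge3 T⟩, ⟨1, edge1 T⟩]
  · intro a y z h
    rw [h]; tauto
  · intro a y z h
    rw [h, add_neg_cancel_right, seg_neg, show a + z + y = (a + y) + z by abel, seg_neg]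
    tauto

/-- an edge gives a representation -/
theorem Rep.of_edge {T : Rhombus} {k : Fin 4} {a y : Pt} (h : T.edge k = seg a y) : ∃ z, Rep T a y z := by
  have key : ∀ b w z, Rep T b w z → seg b w = seg a y → ∃ z, Rep T a y z := by
    intro b w z hr he
    rcases seg_inj he with ⟨rfl, rfl⟩ | ⟨rfl, rfl⟩
    · exact ⟨z, hr⟩
    · refine ⟨z, ?_⟩
      have := hr.swap.flip.swap
      simpa using this
  fin_cases k
  · exact key _ _ _ (Rep.base T) ((edge0 T).symm.trans h)
  · exact key _ _ (-T.u) (Rep.base T).swap.flip ((edge1 T).symm.trans h)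
  · exact key _ _ _ (Rep.base T).flip ((edge2 T).symm.trans h)
  · exact key _ _ _ (Rep.base T).swap ((edge3 T).symm.trans h)

/-- interior points of a tile belong to no other tile -/
theorem interior_unique {x : Set Rhombus} (hx : IsTiling x) {T T' : Rhombus} (hT : T ∈ x) (hT' : T' ∈ x)
    {a y z : Pt} (h : Rep T a y z) {s t : ℝ} (hs : 0 < s) (hs1 : s < 1) (ht : 0 < t) (ht1 : t < 1)
    (hp : a + s • y + t • z ∈ T'.support) : T = T' := by
  by_contra hne
  have hd := h.det_ne (hx.1 T hT)
  have hpT : a + s • y + t • z ∈ T.support := (h.mem_support _).2 ⟨s, t, ⟨hs.le, hs1.le⟩, ⟨ht.le, ht1.le⟩, rfl⟩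
  have hmem : a + s • y + t • z ∈ T.support ∩ T'.support := ⟨hpT, hp⟩
  -- the point is not on an edge
  have hedge : ∀ e ∈ T.edges, a + s • y + t • z ∉ e := by
    rintro e he hpe
    have he' : ∃ k, T.edge k = e := he
    rw [h.edges] at he'
    rcases he' with rfl | rfl | rfl | rfl
    · obtain ⟨r, hr, e⟩ := mem_seg.1 hpe
      have := comb_inj hd (s := s) (t := t) (s' := r) (t' := 0)
        (by rw [add_assoc] at e; rw [add_left_cancel e]; simp)
      linarith [this.2]
    · obtain ⟨r, hr, e⟩ := mem_seg.1 hpe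
      have := comb_inj hd (s := s) (t := t) (s' := r) (t' := 1)
        (by rw [add_assoc, add_assoc] at e; rw [add_left_cancel e]; module)
      linarith [this.2]
    · obtain ⟨r, hr, e⟩ := mem_seg.1 hpe
      have := comb_inj hd (s := s) (t := t) (s' := 0) (t' := r)
        (by rw [add_assoc] at e; rw [add_left_cancel e]; simp)
      linarith [this.1]
    · obtain ⟨r, hr, e⟩ := mem_seg.1 hpe
      have := comb_inj hd (s := s) (t := t) (s' := 1) (t' := r)
        (by rw [add_assoc, add_assoc] at e; rw [add_left_cancel e]; module)
      linarith [this.1]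
  rcases hx.2.2 T hT T' hT' hne with h1 | ⟨p, hpv, -, h1⟩ | ⟨e, he, -, h1⟩
  · rw [h1] at hmem; exact hmem
  · rw [h1] at hmem
    have hm : a + s • y + t • z = p := hmem
    rw [hm] at hedge
    rcases hpv with rfl | rfl | rfl | rfl
    · exact hedge (T.edge 0) ⟨0, rfl⟩ (by rw [edge0]; exact mem_seg.2 ⟨0, by simp, by simp⟩)
    · exact hedge (T.edge 0) ⟨0, rfl⟩ (by rw [edge0]; exact mem_seg.2 ⟨1, by simp, by simp⟩)
    · exact hedge (T.edge 3) ⟨3, rfl⟩ (by rw [edge3]; exact mem_seg.2 ⟨1, by simp, by simp⟩)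
    · exact hedge (T.edge 1) ⟨1, rfl⟩ (by rw [edge1]; exact mem_seg.2 ⟨1, by simp, by simp⟩)
  · rw [h1] at hmem
    exact hedge e he hmem

end Geo

namespace Geo

open Filter Topology

def IsPrim (L : Pt → Pt → ℝ) (U : Set Pt) (H : Pt → ℝ) : Prop :=
  ∀ p ∈ U, ∀ᶠ q in 𝓝 p, H q - H p = L p q

theorem IsPrim.mono {L : Pt → Pt → ℝ} {U V : Set Pt} {H : Pt → ℝ} (h : IsPrim L U H) (hV : V ⊆ U) :
    IsPrim L V H := fun p hp => h p (hV hp)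

/-- primitives are unique up to a constant -/
theorem IsPrim.unique {L : Pt → Pt → ℝ} {U : Set Pt} {H H' : Pt → ℝ} (h : IsPrim L U H)
    (h' : IsPrim L U H') (hc : IsPreconnected U) {p q : Pt} (hp : p ∈ U) (hq : q ∈ U) :
    H p - H' p = H q - H' q := by
  refine hc.induction₂ (fun p q => H p - H' p = H q - H' q) ?_ ?_ ?_ hp hq
  · intro p hp
    filter_upwards [nhdsWithin_le_nhds (h p hp), nhdsWithin_le_nhds (h' p hp)] with q h1 h2
    linarith
  · intro a b c _ _ _ h1 h2
    exact h1.trans h2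
  · intro a b _ _ h1
    exact h1.symm

/-- gluing -/
theorem IsPrim.glue {L : Pt → Pt → ℝ} {U V : Set Pt} (hU : IsOpen U) (hV : IsOpen V)
    (hc : IsPreconnected (U ∩ V)) (h : ∃ H, IsPrim L U H) (h' : ∃ H, IsPrim L V H) :
    ∃ H, IsPrim L (U ∪ V) H := by
  classical
  obtain ⟨H, hH⟩ := h
  obtain ⟨K, hK⟩ := h'
  have hc' : ∃ c, ∀ p ∈ U ∩ V, H p = K p + c := by
    by_cases hn : (U ∩ V).Nonempty
    · obtain ⟨q, hq⟩ := hn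
      refine ⟨H q - K q, fun p hp => ?_⟩
      have := (hH.mono inter_subset_left).unique (hK.mono inter_subset_right) hc hp hq
      linarith
    · exact ⟨0, fun p hp => (hn ⟨p, hp⟩).elim⟩
  obtain ⟨c, hc'⟩ := hc'
  refine ⟨fun p => if p ∈ U then H p else K p + c, ?_⟩
  have hVv : ∀ p ∈ V, (if p ∈ U then H p else K p + c) = K p + c := by
    intro p hp
    split_ifs with hu
    · exact hc' p ⟨hu, hp⟩
    · rfl
  rintro p (hp | hp)
  · filter_upwards [hH p hp, hU.mem_nhds hp] with q h1 h2
    simp only [if_pos h2, if_pos hp, h1]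
  · filter_upwards [hK p hp, hV.mem_nhds hp] with q h1 h2
    rw [hVv q h2, hVv p hp, ← h1]; ring

theorem interval_ind (P : ℝ → ℝ → Prop) (hm : ∀ a b a' b', a ≤ a' → b' ≤ b → P a b → P a' b')
    (hg : ∀ a b a' b', a' < b → P a b → P a' b' → P a b') (hl : ∀ t, ∃ ε > 0, P (t - ε) (t + ε))
    (a b : ℝ) : P a b := by
  by_contra hb
  have hub : ∀ t, P a t → t ≤ b := by
    intro t ht
    by_contra hlt
    exact hb (hm _ _ _ _ le_rfl (not_le.1 hlt).le ht)
  have hbdd : BddAbove {t | P a t} := ⟨b, hub⟩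
  obtain ⟨ε₀, h0, h0'⟩ := hl a
  have hne : {t | P a t}.Nonempty := ⟨a + ε₀, hm _ _ _ _ (by linarith) le_rfl h0'⟩
  obtain ⟨ε, he, h1⟩ := hl (sSup {t | P a t})
  obtain ⟨t, ht, ht'⟩ := exists_lt_of_lt_csSup hne (show sSup {t | P a t} - ε < _ by linarith)
  have := le_csSup hbdd (hg _ _ _ _ ht' ht h1)
  linarith

def rect (a b c d : ℝ) : Set Pt := {p | a < p 0 ∧ p 0 < b ∧ c < p 1 ∧ p 1 < d}

theorem rect_open (a b c d : ℝ) : IsOpen (rect a b c d) := by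
  have h0 : Continuous fun p : Pt => p 0 := by fun_prop
  have h1 : Continuous fun p : Pt => p 1 := by fun_prop
  exact (isOpen_lt continuous_const h0).inter ((isOpen_lt h0 continuous_const).inter
    ((isOpen_lt continuous_const h1).inter (isOpen_lt h1 continuous_const)))

theorem rect_convex (a b c d : ℝ) : Convex ℝ (rect a b c d) := by
  rintro p ⟨h1, h2, h3, h4⟩ q ⟨k1, k2, k3, k4⟩ s t hs ht hst
  have key : ∀ m x y : ℝ, m < x → m < y → m < s * x + t * y := by
    intro m x y hx hy
    have : m = s * m + t * m := by rw [← add_mul, hst, one_mul]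
    rcases hs.eq_or_lt with h0 | h0
    · have : t = 1 := by linarith
      subst this; rw [← h0]; linarith
    · nlinarith [mul_lt_mul_of_pos_left hx h0, mul_le_mul_of_nonneg_left hy.le ht]
  have k0 := key
  refine ⟨by simpa using key _ _ _ h1 k1, ?_, by simpa using key _ _ _ h3 k3, ?_⟩
  · have := key (-b) (-p 0) (-q 0) (by linarith) (by linarith)
    simp; linarith
  · have := key (-d) (-p 1) (-q 1) (by linarith) (by linarith)
    simp; linarith

/-- the Poincare lemma in combinatorial form -/
theorem poincare (L : Pt → Pt → ℝ) (hL : ∀ p, ∃ ε > 0, ∃ H, IsPrim L (ball p ε) H) :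
    ∃ h : Pt → ℝ, ∀ p, ∀ᶠ q in 𝓝 p, h q - h p = L p q := by
  have hpr : ∀ a b c d a' b' c' d', IsPreconnected (rect a b c d ∩ rect a' b' c' d') := by
    intros
    exact ((rect_convex _ _ _ _).inter (rect_convex _ _ _ _)).isPreconnected
  have loc : ∀ s t : ℝ, ∃ ε > 0, ∃ H, IsPrim L (rect (s - ε) (s + ε) (t - ε) (t + ε)) H := by
    intro s t
    obtain ⟨ε, he, H, hH⟩ := hL !₂[s, t]
    refine ⟨ε / 2, by linarith, H, hH.mono ?_⟩
    rintro p ⟨h1, h2, h3, h4⟩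
    rw [mem_ball, EuclideanSpace.dist_eq, Real.sqrt_lt' he]
    simp [Fin.sum_univ_two, Real.dist_eq, sq_abs]
    nlinarith
  have strip : ∀ t a b : ℝ, ∃ ε > 0, ∃ H, IsPrim L (rect a b (t - ε) (t + ε)) H := by
    intro t
    apply interval_ind
    · rintro a b a' b' h1 h2 ⟨ε, he, H, hH⟩
      exact ⟨ε, he, H, hH.mono fun p hp => ⟨h1.trans_lt hp.1, hp.2.1.trans_le h2, hp.2.2⟩⟩
    · rintro a b a' b' h1 ⟨ε, he, H, hH⟩ ⟨ε', he', H', hH'⟩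
      obtain ⟨K, hK⟩ := IsPrim.glue (rect_open _ _ _ _) (rect_open _ _ _ _) (hpr _ _ _ _ _ _ _ _) ⟨H, hH⟩ ⟨H', hH'⟩
      refine ⟨min ε ε', lt_min he he', K, hK.mono ?_⟩
      rintro p ⟨k1, k2, k3, k4⟩
      have m1 := min_le_left ε ε'
      have m2 := min_le_right ε ε'
      rcases lt_or_ge (p 0) b with h | h
      · exact Or.inl ⟨k1, h, by linarith, by linarith⟩
      · exact Or.inr ⟨by linarith, k2, by linarith, by linarith⟩
    · intro s
      obtain ⟨ε, he, H, hH⟩ := loc s t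
      exact ⟨ε, he, ε, he, H, hH⟩
  have big : ∀ a b c d : ℝ, ∃ H, IsPrim L (rect a b c d) H := by
    intro a b
    apply interval_ind
    · rintro c d c' d' h1 h2 ⟨H, hH⟩
      exact ⟨H, hH.mono fun p hp => ⟨hp.1, hp.2.1, h1.trans_lt hp.2.2.1, hp.2.2.2.trans_le h2⟩⟩
    · rintro c d c' d' h1 h h'
      obtain ⟨K, hK⟩ := IsPrim.glue (rect_open _ _ _ _) (rect_open _ _ _ _) (hpr _ _ _ _ _ _ _ _) h h'
      refine ⟨K, hK.mono ?_⟩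
      rintro p ⟨k1, k2, k3, k4⟩
      rcases lt_or_ge (p 1) d with h | h
      · exact Or.inl ⟨k1, k2, k3, h⟩
      · exact Or.inr ⟨k1, k2, by linarith, k4⟩
    · intro t
      exact strip t a b
  choose H hH using fun n : ℝ => big (-n) n (-n) n
  let N : Pt → ℝ := fun p => |p 0| + |p 1| + 1
  have hmem : ∀ p n, N p ≤ n → p ∈ rect (-n) n (-n) n := by
    intro p n hn
    have := abs_nonneg (p 0)
    have := abs_nonneg (p 1)
    have hn' : |p 0| + |p 1| + 1 ≤ n := hn
    refine ⟨?_, ?_, ?_, ?_⟩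
    · linarith [neg_abs_le (p 0)]
    · linarith [le_abs_self (p 0)]
    · linarith [neg_abs_le (p 1)]
    · linarith [le_abs_self (p 1)]
  have hN0 : N 0 = 1 := by simp [N]
  have hN1 : ∀ p, 1 ≤ N p := by
    intro p
    have := abs_nonneg (p 0)
    have := abs_nonneg (p 1)
    simp only [N]; linarith
  have compat : ∀ p n, N p ≤ n → H (N p) p - H (N p) 0 = H n p - H n 0 := by
    intro p n hn
    have h2 : IsPrim L (rect (-N p) (N p) (-N p) (N p)) (H n) := (hH n).mono fun q hq =>
      ⟨by linarith [hq.1], by linarith [hq.2.1], by linarith [hq.2.2.1], by linarith [hq.2.2.2]⟩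
    have := (hH (N p)).unique h2 (rect_convex _ _ _ _).isPreconnected (hmem p _ le_rfl)
      (hmem 0 _ (by rw [hN0]; exact hN1 p))
    linarith
  refine ⟨fun p => H (N p) p - H (N p) 0, fun p => ?_⟩
  have hcont : Continuous N := by fun_prop
  have hev : ∀ᶠ q in 𝓝 p, N q < N p + 1 := hcont.continuousAt.eventually_lt continuousAt_const (by linarith)
  filter_upwards [hev, hH (N p + 1) p (hmem _ _ (by linarith))] with q h1 h2
  rw [compat q (N p + 1) h1.le, compat p (N p + 1) (by linarith), ← h2]
  ring

end Geo

namespace Geo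

open Filter Topology

/-- tilings with finitely many shapes -/
def FinTiling (x : Set Rhombus) : Prop :=
  IsTiling x ∧ ((fun T : Rhombus => (T.u, T.v)) '' x).Finite

theorem support_compact (T : Rhombus) : IsCompact T.support := by
  have : T.support = (fun q : ℝ × ℝ => T.pos + q.1 • T.u + q.2 • T.v) '' (Icc 0 1 ×ˢ Icc 0 1) := by
    ext p
    simp only [Rhombus.support, mem_ofPred_eq, mem_image, mem_prod, Prod.exists]
    constructor
    · rintro ⟨s, t, hs, ht, e⟩; exact ⟨s, t, ⟨hs, ht⟩, e.symm⟩
    · rintro ⟨s, t, ⟨hs, ht⟩, e⟩; exact ⟨s, t, hs, ht, e.symm⟩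
  rw [this]
  exact (isCompact_Icc.prod isCompact_Icc).image (by fun_prop)

theorem support_bound {T : Rhombus} {p q : Pt} (hp : p ∈ T.support) (hq : q ∈ T.support) :
    ‖p - q‖ ≤ ‖T.u‖ + ‖T.v‖ := by
  obtain ⟨s, t, hs, ht, rfl⟩ := hp
  obtain ⟨s', t', hs', ht', rfl⟩ := hq
  have : T.pos + s • T.u + t • T.v - (T.pos + s' • T.u + t' • T.v) = (s - s') • T.u + (t - t') • T.v := by
    module
  rw [this]
  refine (norm_add_le _ _).trans ?_
  rw [norm_smul, norm_smul]
  have h1 : ‖s - s'‖ ≤ 1 := by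
    rw [Real.norm_eq_abs, abs_le]; constructor <;> linarith [hs.1, hs.2, hs'.1, hs'.2]
  have h2 : ‖t - t'‖ ≤ 1 := by
    rw [Real.norm_eq_abs, abs_le]; constructor <;> linarith [ht.1, ht.2, ht'.1, ht'.2]
  nlinarith [norm_nonneg T.u, norm_nonneg T.v]

theorem shape_finite {x : Set Rhombus} (hx : IsTiling x) (U V p : Pt) (R : ℝ) :
    {T ∈ x | T.u = U ∧ T.v = V ∧ (T.support ∩ closedBall p R).Nonempty}.Finite := by
  set A := {T ∈ x | T.u = U ∧ T.v = V ∧ (T.support ∩ closedBall p R).Nonempty} with hA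
  by_cases hd : det U V = 0
  · have : A = ∅ := by
      ext T
      simp only [hA, mem_ofPred_eq, mem_empty_iff_false, iff_false]
      rintro ⟨hT, rfl, rfl, -⟩
      exact det_ne_of_valid (hx.1 T hT) hd
    rw [this]; exact finite_empty
  let α : Pt → ℝ := fun q => det q V / det U V
  let β : Pt → ℝ := fun q => det U q / det U V
  have hα : Continuous α := by unfold α det; fun_prop
  have hβ : Continuous β := by unfold β det; fun_prop
  have hK := isCompact_closedBall p (R + (‖U‖ + ‖V‖))
  have hpos : ∀ T ∈ A, T.pos ∈ closedBall p (R + (‖U‖ + ‖V‖)) := by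
    rintro T ⟨hT, rfl, rfl, q, hq, hq'⟩
    have h0 : T.pos ∈ T.support := ⟨0, 0, by simp, by simp, by simp⟩
    have := support_bound h0 hq
    rw [mem_closedBall] at *
    calc dist T.pos p ≤ dist T.pos q + dist q p := dist_triangle _ _ _
      _ ≤ _ := by rw [dist_eq_norm T.pos q]; linarith
  obtain ⟨C, hC⟩ := (hK.image hα).isBounded.subset_closedBall 0
  obtain ⟨D, hD⟩ := (hK.image hβ).isBounded.subset_closedBall 0
  refine Set.Finite.of_finite_image (f := fun T => ((⌊α T.pos⌋ : ℤ), (⌊β T.pos⌋ : ℤ))) ?_ ?_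
  · refine ((finite_Icc (⌊-C⌋) ⌊C⌋).prod (finite_Icc (⌊-D⌋) ⌊D⌋)).subset ?_
    rintro _ ⟨T, hT, rfl⟩
    have h1 := hC ⟨_, hpos T hT, rfl⟩
    have h2 := hD ⟨_, hpos T hT, rfl⟩
    rw [mem_closedBall, Real.dist_eq, sub_zero, abs_le] at h1 h2
    exact ⟨⟨Int.floor_le_floor h1.1, Int.floor_le_floor h1.2⟩,
      ⟨Int.floor_le_floor h2.1, Int.floor_le_floor h2.2⟩⟩
  · rintro T ⟨hT, rfl, rfl, -⟩ T' ⟨hT', hu, hv, -⟩ he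
    simp only [Prod.mk.injEq] at he
    have h1 := Int.abs_sub_lt_one_of_floor_eq_floor he.1
    have h2 := Int.abs_sub_lt_one_of_floor_eq_floor he.2
    rw [abs_lt] at h1 h2
    have e := coords T.u T.v T.pos hd
    have e' := coords T.u T.v T'.pos hd
    change T.pos = α T.pos • T.u + β T.pos • T.v at e
    change T'.pos = α T'.pos • T.u + β T'.pos • T.v at e'
    generalize α T.pos = a1 at *
    generalize α T'.pos = a2 at *
    generalize β T.pos = b1 at *
    generalize β T'.pos = b2 at *
    refine interior_unique hx hT hT' (Rep.base T) (s := (1 - (a1 - a2)) / 2) (t := (1 - (b1 - b2)) / 2)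
      (by linarith) (by linarith) (by linarith) (by linarith) ?_
    refine ⟨(1 + (a1 - a2)) / 2, (1 + (b1 - b2)) / 2, ⟨by linarith, by linarith⟩,
      ⟨by linarith, by linarith⟩, ?_⟩
    rw [e, e', hu, hv]
    module

theorem near_finite {x : Set Rhombus} (hx : FinTiling x) (p : Pt) (R : ℝ) :
    {T ∈ x | (T.support ∩ closedBall p R).Nonempty}.Finite := by
  refine (hx.2.biUnion (t := fun s => {T ∈ x | T.u = s.1 ∧ T.v = s.2 ∧
    (T.support ∩ closedBall p R).Nonempty}) fun s _ => shape_finite hx.1 _ _ _ _).subset ?_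
  rintro T ⟨hT, h⟩
  rw [mem_iUnion₂]
  exact ⟨(T.u, T.v), ⟨T, hT, rfl⟩, hT, rfl, rfl, h⟩

/-- local finiteness -/
theorem loc_fin {x : Set Rhombus} (hx : FinTiling x) (p : Pt) :
    ∀ᶠ q in 𝓝 p, ∀ T ∈ x, q ∈ T.support → p ∈ T.support := by
  have h1 : ∀ᶠ q in 𝓝 p, ∀ T ∈ {T ∈ x | (T.support ∩ closedBall p 1).Nonempty},
      q ∈ T.support → p ∈ T.support := by
    rw [eventually_all_finite (near_finite hx p 1)]
    intro T _
    by_cases hp : p ∈ T.support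
    · exact Eventually.of_forall fun _ _ => hp
    · filter_upwards [(support_compact T).isClosed.isOpen_compl.mem_nhds hp] with q hq hq'
      exact (hq hq').elim
  filter_upwards [h1, closedBall_mem_nhds p one_pos] with q h2 h3 T hT hq
  exact h2 T ⟨hT, q, hq, h3⟩ hq

theorem cover {x : Set Rhombus} (hx : IsTiling x) (p : Pt) : ∃ T ∈ x, p ∈ T.support := by
  have : p ∈ ⋃ r ∈ x, r.support := by rw [hx.2.1]; trivial
  simpa using this

theorem Rep.vertices {T : Rhombus} {a y z : Pt} (h : Rep T a y z) (p : Pt) :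
    p ∈ T.vertices ↔ p = a ∨ p = a + y ∨ p = a + z ∨ p = a + y + z := by
  refine Rep.rec' (fun a y z => p ∈ T.vertices ↔ p = a ∨ p = a + y ∨ p = a + z ∨ p = a + y + z)
    ?_ ?_ ?_ h
  · simp [Rhombus.vertices]
  · intro a y z h
    rw [h, add_right_comm a z y]; tauto
  · intro a y z h
    rw [h, add_neg_cancel_right, show a + z + y + -z = a + y by abel, add_right_comm a z y]; tauto

theorem neighbour {x : Set Rhombus} (hx : FinTiling x) {T : Rhombus} (hT : T ∈ x) {a y z : Pt}
    (h : Rep T a y z) : ∃ T' ∈ x, ∃ z', Rep T' (a + z) y z' ∧ 0 < det y z' * det y z := by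
  have hd := h.det_ne (hx.1.1 T hT)
  set m := a + (1/2 : ℝ) • y + (1 : ℝ) • z with hm
  have hmT : m ∈ T.support := (h.mem_support m).2 ⟨1/2, 1, by constructor <;> norm_num, by simp, rfl⟩
  have hlim : Tendsto (fun δ : ℝ => m + δ • z) (𝓝[>] 0) (𝓝 m) := by
    have : Tendsto (fun δ : ℝ => m + δ • z) (𝓝 0) (𝓝 (m + (0:ℝ) • z)) :=
      (Continuous.tendsto (by fun_prop) 0)
    rw [zero_smul, add_zero] at this
    exact this.mono_left nhdsWithin_le_nhds
  obtain ⟨δ, hδ, hδ0⟩ := ((hlim.eventually (loc_fin hx m)).and self_mem_nhdsWithin).exists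
  have hδ0 : 0 < δ := hδ0
  obtain ⟨T', hT', hq⟩ := cover hx.1 (m + δ • z)
  have hmT' := hδ T' hT' hq
  have hne : T ≠ T' := by
    rintro rfl
    obtain ⟨s, t, hs, ht, e⟩ := (h.mem_support _).1 hq
    have := comb_inj hd (s := 1/2) (t := 1 + δ) (s' := s) (t' := t)
      (by rw [hm, add_assoc, add_assoc, add_assoc] at e; rw [← add_left_cancel e]; module)
    linarith [ht.2, this.2]
  have hmem : m ∈ T.support ∩ T'.support := ⟨hmT, hmT'⟩
  have hcan : ∀ s t : ℝ, m = a + s • y + t • z → s = 1/2 ∧ t = 1 := by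
    intro s t e
    rw [hm, add_assoc, add_assoc] at e
    have := comb_inj hd (add_left_cancel e)
    exact ⟨this.1.symm, this.2.symm⟩
  have hE : ∃ k, T'.edge k = seg (a + z) y := by
    rcases hx.1.2.2 T hT T' hT' hne with h1 | ⟨p, hpv, -, h1⟩ | ⟨e, he, he', h1⟩
    · rw [h1] at hmem; exact hmem.elim
    · rw [h1] at hmem
      have hmp : m = p := hmem
      rw [← hmp, h.vertices] at hpv
      exfalso
      rcases hpv with e | e | e | e
      · have := hcan 0 0 (by rw [e]; module); linarith [this.1]
      · have := hcan 1 0 (by rw [e]; module); linarith [this.1]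
      · have := hcan 0 1 (by rw [e]; module); linarith [this.1]
      · have := hcan 1 1 (by rw [e]; module); linarith [this.1]
    · rw [h1] at hmem
      have he2 : ∃ k, T.edge k = e := he
      rw [h.edges] at he2
      rcases he2 with rfl | rfl | rfl | rfl
      · obtain ⟨r, hr, e⟩ := mem_seg.1 hmem
        have := hcan r 0 (by rw [e]; module); linarith [this.2]
      · exact he'
      · obtain ⟨r, hr, e⟩ := mem_seg.1 hmem
        have := hcan 0 r (by rw [e]; module); linarith [this.1]
      · obtain ⟨r, hr, e⟩ := mem_seg.1 hmem
        have := hcan 1 r (by rw [e]; module); linarith [this.1]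
  obtain ⟨k, hk⟩ := hE
  obtain ⟨z', hz'⟩ := Rep.of_edge hk
  refine ⟨T', hT', z', hz', ?_⟩
  obtain ⟨s, t, hs, ht, e⟩ := (hz'.mem_support _).1 hq
  have e2 := congrArg (fun p => det y p) e
  simp only [hm, det_add_right, det_smul_right, det_self, mul_zero, add_zero] at e2
  have e3 : δ * det y z = t * det y z' := by linarith
  have e4 : 0 < t * (det y z' * det y z) := by
    have : t * (det y z' * det y z) = δ * (det y z) ^ 2 := by rw [← mul_assoc, ← e3]; ring
    rw [this]; positivity
  exact pos_of_mul_pos_right e4 ht.1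

theorem chain {x : Set Rhombus} (hx : FinTiling x) {T : Rhombus} (hT : T ∈ x) {a y z : Pt}
    (h : Rep T a y z) : ∃ A Z : ℕ → Pt, A 0 = a ∧ Z 0 = z ∧ ∀ n, A (n + 1) = A n + Z n ∧
      (∃ T ∈ x, Rep T (A n) y (Z n)) ∧ 0 < det y (Z n) * det y z := by
  let P : Pt × Pt → Prop := fun s => (∃ T ∈ x, Rep T s.1 y s.2) ∧ 0 < det y s.2 * det y z
  have h0 : P (a, z) := ⟨⟨T, hT, h⟩, by
    have := h.det_ne (hx.1.1 T hT)
    exact mul_self_pos.2 this⟩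
  have hstep : ∀ s : {s // P s}, ∃ s' : {s // P s}, s'.1.1 = s.1.1 + s.1.2 := by
    rintro ⟨⟨b, w⟩, ⟨T1, hT1, hr⟩, hpos⟩
    obtain ⟨T', hT', z', hz', hs⟩ := neighbour hx hT1 hr
    refine ⟨⟨(b + w, z'), ⟨T', hT', hz'⟩, ?_⟩, rfl⟩
    simp only at hpos hs ⊢
    have h1 : 0 < (det y z' * det y z) * (det y w) ^ 2 := by nlinarith [mul_pos hs hpos]
    exact pos_of_mul_pos_left h1 (sq_nonneg _)
  choose f hf using hstep
  refine ⟨fun n => (f^[n] ⟨(a, z), h0⟩).1.1, fun n => (f^[n] ⟨(a, z), h0⟩).1.2, rfl, rfl, fun n => ⟨?_, ?_, ?_⟩⟩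
  · beta_reduce
    rw [Function.iterate_succ_apply', hf]
  · exact (f^[n] ⟨(a, z), h0⟩).2.1
  · exact (f^[n] ⟨(a, z), h0⟩).2.2

def dirs (x : Set Rhombus) : Set Pt := {w | ∃ T ∈ x, ∃ a y, Rep T a y w}

theorem dirs_finite {x : Set Rhombus} (hx : FinTiling x) : (dirs x).Finite := by
  have h := hx.2
  refine (((h.image Prod.fst).union (h.image Prod.snd)).union
    ((h.image fun s => -s.1).union (h.image fun s => -s.2))).subset ?_
  rintro w ⟨T, hT, a, y, hr⟩
  have hm : (T.u, T.v) ∈ (fun T : Rhombus => (T.u, T.v)) '' x := ⟨T, hT, rfl⟩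
  rcases hr with ⟨rfl, rfl, rfl⟩ | ⟨rfl, rfl, rfl⟩ | ⟨rfl, rfl, rfl⟩ | ⟨rfl, rfl, rfl⟩ |
    ⟨rfl, rfl, rfl⟩ | ⟨rfl, rfl, rfl⟩ | ⟨rfl, rfl, rfl⟩ | ⟨rfl, rfl, rfl⟩
  · exact .inl (.inr ⟨_, hm, rfl⟩)
  · exact .inl (.inr ⟨_, hm, rfl⟩)
  · exact .inr (.inr ⟨_, hm, rfl⟩)
  · exact .inr (.inr ⟨_, hm, rfl⟩)
  · exact .inl (.inl ⟨_, hm, rfl⟩)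
  · exact .inr (.inl ⟨_, hm, rfl⟩)
  · exact .inl (.inl ⟨_, hm, rfl⟩)
  · exact .inr (.inl ⟨_, hm, rfl⟩)

theorem fin_lower {S : Set Pt} (hS : S.Finite) (f : Pt → ℝ) : ∃ c > 0, ∀ w ∈ S, 0 < f w → c ≤ f w := by
  induction S, hS using Set.Finite.induction_on with
  | empty => exact ⟨1, one_pos, by simp⟩
  | @insert b s _ _ ih =>
    obtain ⟨c, hc, h⟩ := ih
    by_cases hb : 0 < f b
    · refine ⟨min c (f b), lt_min hc hb, ?_⟩
      rintro w (rfl | hw) hp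
      · exact min_le_right _ _
      · exact (min_le_left _ _).trans (h w hw hp)
    · refine ⟨c, hc, ?_⟩
      rintro w (rfl | hw) hp
      · exact (hb hp).elim
      · exact h w hw hp

/-- along a chain, the transverse coordinate tends to infinity -/
theorem chain_growth {x : Set Rhombus} (hx : FinTiling x) {y z : Pt} {A Z : ℕ → Pt}
    (h : ∀ n, A (n + 1) = A n + Z n ∧ (∃ T ∈ x, Rep T (A n) y (Z n)) ∧ 0 < det y (Z n) * det y z) :
    ∃ c > 0, ∀ n : ℕ, det y (A 0) * det y z + n * c ≤ det y (A n) * det y z := by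
  obtain ⟨c, hc, hcl⟩ := fin_lower (dirs_finite hx) (fun w => det y w * det y z)
  refine ⟨c, hc, fun n => ?_⟩
  induction n with
  | zero => simp
  | succ n ih =>
    obtain ⟨h1, ⟨T, hT, hr⟩, h3⟩ := h n
    have := hcl (Z n) ⟨T, hT, _, _, hr⟩ h3
    rw [h1, det_add_right, add_mul]
    push_cast
    linarith

end Geo

namespace Geo

open Filter Topology
open scoped Classical in
def chi (w q : Pt) : ℝ := if q = w then 1 else if q = -w then -1 else 0

theorem ne_neg_self {w : Pt} (hw : w ≠ 0) : w ≠ -w := by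
  intro h
  apply hw
  have h2 : (2:ℝ) • w = 0 := by rw [two_smul]; nth_rewrite 2 [h]; simp
  simpa using h2

theorem chi_self (w : Pt) : chi w w = 1 := by simp [chi]
theorem chi_neg_self {w : Pt} (hw : w ≠ 0) : chi w (-w) = -1 := by
  simp [chi, (ne_neg_self hw).symm]
theorem chi_other {w q : Pt} (h1 : q ≠ w) (h2 : q ≠ -w) : chi w q = 0 := by simp [chi, h1, h2]

theorem chi_neg {w : Pt} (hw : w ≠ 0) (q : Pt) : chi w (-q) = - chi w q := by
  by_cases h1 : q = w
  · rw [h1, chi_self, chi_neg_self hw]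
  by_cases h2 : q = -w
  · rw [h2, neg_neg, chi_self, chi_neg_self hw]; simp
  rw [chi_other h1 h2, chi_other]
  · simp
  · exact fun h => h2 (by rw [← h, neg_neg])
  · exact fun h => h1 (neg_injective h)

theorem chi_abs (w q : Pt) : |chi w q| ≤ 1 := by
  unfold chi; split_ifs <;> simp

def om (w U V d : Pt) : ℝ := (det d V * chi w U + det U d * chi w V) / det U V

theorem Rep.om_eq {w : Pt} (hw : w ≠ 0) {T : Rhombus} {a y z : Pt} (h : Rep T a y z) (d : Pt) :
    om w T.u T.v d = om w y z d := by
  refine Rep.rec' (fun a y z => om w T.u T.v d = om w y z d) rfl ?_ ?_ h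
  · intro a y z h
    rw [h]; unfold om
    rw [det_swap d z, det_swap y d, det_swap y z, div_neg, ← neg_div]; congr 1; ring
  · intro a y z h
    rw [h]; unfold om
    rw [det_neg_right, det_neg_right, chi_neg hw, div_neg, ← neg_div]; congr 1; ring

theorem om_comb {w y z : Pt} (hd : det y z ≠ 0) (s t : ℝ) :
    om w y z (s • y + t • z) = s * chi w y + t * chi w z := by
  unfold om
  rw [det_add_left, det_add_right, det_smul_left, det_smul_left, det_smul_right, det_smul_right,
    det_self, det_self]
  field_simp; ring

theorem om_add (w U V d e : Pt) : om w U V (d + e) = om w U V d + om w U V e := by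
  unfold om; rw [det_add_left, det_add_right]; ring
theorem om_sub (w U V d e : Pt) : om w U V (d - e) = om w U V d - om w U V e := by
  unfold om; rw [det_sub_left, det_sub_right]; ring
theorem om_smul (w U V d : Pt) (r : ℝ) : om w U V (r • d) = r * om w U V d := by
  unfold om; rw [det_smul_left, det_smul_right]; ring

theorem abs_coord_le (p : Pt) (i : Fin 2) : |p i| ≤ ‖p‖ := by
  have := PiLp.norm_apply_le p i
  simpa using this

theorem abs_det_le (a b : Pt) : |det a b| ≤ 2 * (‖a‖ * ‖b‖) := by
  unfold det
  have h1 : |a 0 * b 1| ≤ ‖a‖ * ‖b‖ := by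
    rw [abs_mul]; exact mul_le_mul (abs_coord_le _ _) (abs_coord_le _ _) (abs_nonneg _) (norm_nonneg _)
  have h2 : |a 1 * b 0| ≤ ‖a‖ * ‖b‖ := by
    rw [abs_mul]; exact mul_le_mul (abs_coord_le _ _) (abs_coord_le _ _) (abs_nonneg _) (norm_nonneg _)
  have := abs_sub (a 0 * b 1) (a 1 * b 0)
  linarith

theorem om_bound (w U V d : Pt) : |om w U V d| ≤ ((2 * ‖U‖ + 2 * ‖V‖) / |det U V|) * ‖d‖ := by
  unfold om
  rw [abs_div, div_mul_eq_mul_div]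
  refine div_le_div_of_nonneg_right ?_ (abs_nonneg _)
  refine (abs_add_le _ _).trans ?_
  rw [abs_mul, abs_mul]
  have h1 := abs_det_le d V
  have h2 := abs_det_le U d
  have h3 := chi_abs w U
  have h4 := chi_abs w V
  have h5 : |det d V| * |chi w U| ≤ |det d V| := mul_le_of_le_one_right (abs_nonneg _) h3
  have h6 : |det U d| * |chi w V| ≤ |det U d| := mul_le_of_le_one_right (abs_nonneg _) h4
  nlinarith

theorem om_nonneg {w : Pt} (hw : w ≠ 0) {U V : Pt} (hd : det U V ≠ 0) : 0 ≤ om w U V w := by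
  by_cases h1 : U = w
  · have := om_comb (w := w) hd 1 0
    rw [one_smul, zero_smul, add_zero] at this
    rw [h1] at this ⊢; rw [this, chi_self]; norm_num
  by_cases h2 : U = -w
  · have := om_comb (w := w) hd (-1) 0
    rw [zero_smul, add_zero] at this
    rw [h2] at this ⊢; rw [smul_neg, neg_smul, one_smul, neg_neg] at this
    rw [this, chi_neg_self hw]; norm_num
  by_cases h3 : V = w
  · have := om_comb (w := w) hd 0 1
    rw [one_smul, zero_smul, zero_add] at this
    rw [h3] at this ⊢; rw [this, chi_self]; norm_num
  by_cases h4 : V = -w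
  · have := om_comb (w := w) hd 0 (-1)
    rw [zero_smul, zero_add] at this
    rw [h4] at this ⊢; rw [smul_neg, neg_smul, one_smul, neg_neg] at this
    rw [this, chi_neg_self hw]; norm_num
  unfold om
  rw [chi_other h1 h2, chi_other h3 h4]; simp

theorem Rep.edge_rep (T : Rhombus) (k : Fin 4) : ∃ a y z, Rep T a y z ∧ T.edge k = seg a y := by
  fin_cases k
  · exact ⟨_, _, _, Rep.base T, edge0 T⟩
  · exact ⟨_, _, _, (Rep.base T).swap.flip, edge1 T⟩
  · exact ⟨_, _, _, (Rep.base T).flip, edge2 T⟩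
  · exact ⟨_, _, _, (Rep.base T).swap, edge3 T⟩

theorem om_compat {x : Set Rhombus} (hx : IsTiling x) {w : Pt} (hw : w ≠ 0) {T T' : Rhombus}
    (hT : T ∈ x) (hT' : T' ∈ x) {p q : Pt} (hp : p ∈ T.support) (hq : q ∈ T.support)
    (hp' : p ∈ T'.support) (hq' : q ∈ T'.support) : om w T.u T.v (q - p) = om w T'.u T'.v (q - p) := by
  by_cases hne : T = T'
  · rw [hne]
  have mp : p ∈ T.support ∩ T'.support := ⟨hp, hp'⟩
  have mq : q ∈ T.support ∩ T'.support := ⟨hq, hq'⟩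
  rcases hx.2.2 T hT T' hT' hne with h1 | ⟨r, -, -, h1⟩ | ⟨e, ⟨k, rfl⟩, ⟨k', he⟩, h1⟩
  · rw [h1] at mp; exact mp.elim
  · rw [h1] at mp mq
    have e1 : p = r := mp
    have e2 : q = r := mq
    rw [e1, e2]
    simp [om, det_zero_left, det_zero_right]
  · rw [h1] at mp mq
    obtain ⟨a, y, z, hr, hk⟩ := Rep.edge_rep T k
    rw [hk] at he mp mq
    obtain ⟨z', hr'⟩ := Rep.of_edge he
    obtain ⟨s, -, rfl⟩ := mem_seg.1 mp
    obtain ⟨t, -, rfl⟩ := mem_seg.1 mq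
    rw [hr.om_eq hw, hr'.om_eq hw]
    have e3 : ∀ z : Pt, a + t • y - (a + s • y) = (t - s) • y + (0:ℝ) • z := by intro z; module
    rw [e3 z, om_comb (hr.det_ne (hx.1 T hT)), ← e3 z, e3 z', om_comb (hr'.det_ne (hx.1 T' hT'))]
    simp

theorem local_antitone (g : ℝ → ℝ)
    (h : ∀ t, ∀ᶠ s in 𝓝 t, (t ≤ s → g s ≤ g t) ∧ (s ≤ t → g t ≤ g s)) {a b : ℝ} (hab : a ≤ b) :
    g b ≤ g a := by
  let S := {t | t ∈ Icc a b ∧ g t ≤ g a}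
  have ha : a ∈ S := ⟨⟨le_rfl, hab⟩, le_rfl⟩
  have hbd : BddAbove S := ⟨b, fun t ht => ht.1.2⟩
  have hs1 : a ≤ sSup S := le_csSup hbd ha
  have hs2 : sSup S ≤ b := csSup_le ⟨a, ha⟩ fun t ht => ht.1.2
  obtain ⟨ε, he, hb⟩ := Metric.eventually_nhds_iff.1 (h (sSup S))
  obtain ⟨r, hr, hr'⟩ := exists_lt_of_lt_csSup ⟨a, ha⟩ (show sSup S - ε < sSup S by linarith)
  have hrs : r ≤ sSup S := le_csSup hbd hr
  have h1 : g (sSup S) ≤ g a := by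
    have := (hb (y := r) (by rw [Real.dist_eq, abs_lt]; constructor <;> linarith)).2 hrs
    linarith [hr.2]
  rcases hs2.eq_or_lt with h2 | h2
  · rwa [h2] at h1
  exfalso
  have h3 : 0 < min (ε / 2) (b - sSup S) := lt_min (by linarith) (by linarith)
  have m1 := min_le_left (ε / 2) (b - sSup S)
  have m2 := min_le_right (ε / 2) (b - sSup S)
  have h4 := (hb (y := sSup S + min (ε / 2) (b - sSup S))
    (by rw [Real.dist_eq, abs_lt]; constructor <;> linarith)).1 (by linarith)
  have h5 : sSup S + min (ε / 2) (b - sSup S) ∈ S := ⟨⟨by linarith, by linarith⟩, by linarith⟩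
  linarith [le_csSup hbd h5]

/-- the height function of a direction -/
theorem height {x : Set Rhombus} (hx : FinTiling x) {w : Pt} (hw : w ≠ 0) : ∃ h : Pt → ℝ,
    (∀ T ∈ x, ∀ a y z, Rep T a y z → ∀ s ∈ Icc (0:ℝ) 1, ∀ t ∈ Icc (0:ℝ) 1,
      h (a + s • y + t • z) = h a + s * chi w y + t * chi w z) ∧
    (∃ K, ∀ p q, |h q - h p| ≤ K * ‖q - p‖) ∧
    (∀ (p : Pt) (c : ℝ), 0 ≤ c → h p ≤ h (p + c • w)) := by
  choose tile htile hmem using fun p => cover hx.1 p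
  let L : Pt → Pt → ℝ := fun p q => om w (tile q).u (tile q).v (q - p)
  have hL : ∀ p, ∃ ε > 0, ∃ H, IsPrim L (ball p ε) H := by
    intro p
    obtain ⟨ε, he, hb⟩ := Metric.eventually_nhds_iff.1 (loc_fin hx p)
    refine ⟨ε, he, L p, fun p' hp' => ?_⟩
    filter_upwards [loc_fin hx p', isOpen_ball.mem_nhds hp'] with q h1 h2
    have a1 := h1 (tile q) (htile q) (hmem q)
    have a2 := hb h2 (tile q) (htile q) (hmem q)
    have a3 := hb hp' (tile p') (htile p') (hmem p')
    have := om_compat hx.1 hw (htile p') (htile q) a3 (hmem p') a2 a1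
    simp only [L]
    rw [this, ← om_sub]; congr 1; abel
  obtain ⟨h, hh⟩ := poincare L hL
  have HL : ∀ p, ∀ᶠ q in 𝓝 p, ∃ T ∈ x, p ∈ T.support ∧ q ∈ T.support ∧ h q - h p = om w T.u T.v (q - p) := by
    intro p
    filter_upwards [hh p, loc_fin hx p] with q h1 h2
    exact ⟨tile q, htile q, h2 _ (htile q) (hmem q), hmem q, h1⟩
  have HT : ∀ T ∈ x, ∀ p ∈ T.support, ∀ q ∈ T.support, h q - h p = om w T.u T.v (q - p) := by
    intro T hT p hp q hq
    have hconv : Convex ℝ T.support := by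
      rintro _ ⟨s, t, hs, ht, rfl⟩ _ ⟨s', t', hs', ht', rfl⟩ c d hc hd hcd
      refine ⟨c * s + d * s', c * t + d * t', (convex_Icc 0 1) hs hs' hc hd hcd,
        (convex_Icc 0 1) ht ht' hc hd hcd, ?_⟩
      have : T.pos = (c + d) • T.pos := by rw [hcd, one_smul]
      nth_rewrite 3 [this]
      module
    refine hconv.isPreconnected.induction₂ (fun p q => h q - h p = om w T.u T.v (q - p)) ?_ ?_ ?_ hp hq
    · intro p hp
      filter_upwards [nhdsWithin_le_nhds (HL p), self_mem_nhdsWithin] with q ⟨T', hT', h1, h2, h3⟩ hq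
      rw [h3]
      exact om_compat hx.1 hw hT' hT h1 h2 hp hq
    · intro p q r _ _ _ h1 h2
      have : r - p = (r - q) + (q - p) := by abel
      rw [this, om_add]; linarith
    · intro p q _ _ h1
      have : p - q = (-1 : ℝ) • (q - p) := by module
      rw [this, om_smul]; linarith
  have slope : ∀ (p d : Pt) (C : ℝ), (∀ T ∈ x, om w T.u T.v d ≤ C) → h (p + d) - h p ≤ C := by
    intro p d C hC
    have := local_antitone (fun t => h (p + t • d) - C * t) ?_ (zero_le_one)
    · simp at this; linarith
    intro t
    have hcont : Continuous fun s : ℝ => p + s • d := by fun_prop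
    filter_upwards [hcont.continuousAt.eventually (HL (p + t • d))] with s ⟨T, hT, _, _, h3⟩
    have e : p + s • d - (p + t • d) = (s - t) • d := by module
    rw [e, om_smul] at h3
    have := hC T hT
    constructor <;> intro hst <;> nlinarith
  refine ⟨h, ?_, ?_, ?_⟩
  · intro T hT a y z hr s hs t ht
    have h1 := HT T hT a ((hr.mem_support _).2 ⟨0, 0, by simp, by simp, by simp⟩) (a + s • y + t • z)
      ((hr.mem_support _).2 ⟨s, t, hs, ht, rfl⟩)
    have e : a + s • y + t • z - a = s • y + t • z := by abel
    rw [hr.om_eq hw, e, om_comb (hr.det_ne (hx.1.1 T hT))] at h1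
    linarith
  · obtain ⟨K, hK⟩ := (hx.2.image fun s => (2 * ‖s.1‖ + 2 * ‖s.2‖) / |det s.1 s.2|).bddAbove
    have hb : ∀ d, ∀ T ∈ x, om w T.u T.v d ≤ K * ‖d‖ := by
      intro d T hT
      refine (le_abs_self _).trans ((om_bound w T.u T.v d).trans ?_)
      exact mul_le_mul_of_nonneg_right (hK ⟨_, ⟨T, hT, rfl⟩, rfl⟩) (norm_nonneg _)
    refine ⟨K, fun p q => abs_le.2 ⟨?_, ?_⟩⟩
    · have := slope q (p - q) _ (hb (p - q))
      rw [add_sub_cancel, norm_sub_rev] at this; linarith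
    · have := slope p (q - p) _ (hb (q - p))
      rwa [add_sub_cancel] at this
  · intro p c hc
    have := slope (p + c • w) ((-c) • w) 0 fun T hT => by
      rw [om_smul]
      have := om_nonneg hw (det_ne_of_valid (hx.1.1 T hT))
      nlinarith
    rw [neg_smul, add_neg_cancel_right] at this
    linarith

end Geo

namespace Geo

open Filter Topology

structure HT (x : Set Rhombus) (w : Pt) (h : Pt → ℝ) : Prop where
  ne : w ≠ 0
  lin : ∀ T ∈ x, ∀ a y z, Rep T a y z → ∀ s ∈ Icc (0:ℝ) 1, ∀ t ∈ Icc (0:ℝ) 1,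
      h (a + s • y + t • z) = h a + s * chi w y + t * chi w z
  lip : ∃ K, ∀ p q, |h q - h p| ≤ K * ‖q - p‖
  mono : ∀ (p : Pt) (c : ℝ), 0 ≤ c → h p ≤ h (p + c • w)

theorem exists_HT {x : Set Rhombus} (hx : FinTiling x) {w : Pt} (hw : w ≠ 0) : ∃ h, HT x w h := by
  obtain ⟨h, h1, h2, h3⟩ := height hx hw
  exact ⟨h, hw, h1, h2, h3⟩

theorem chi_neg_left {w : Pt} (hw : w ≠ 0) (q : Pt) : chi (-w) q = - chi w q := by
  by_cases h1 : q = w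
  · rw [h1, chi_self]; nth_rewrite 2 [← neg_neg w]; rw [chi_neg_self (neg_ne_zero.2 hw)]
  by_cases h2 : q = -w
  · rw [h2, chi_self, chi_neg_self hw]; simp
  rw [chi_other h1 h2, chi_other h2 (by rwa [neg_neg])]; simp

theorem HT.neg {x : Set Rhombus} {w : Pt} {h : Pt → ℝ} (H : HT x w h) : HT x (-w) (fun p => - h p) := by
  refine ⟨neg_ne_zero.2 H.ne, ?_, ?_, ?_⟩
  · intro T hT a y z hr s hs t ht
    rw [H.lin T hT a y z hr s hs t ht, chi_neg_left H.ne, chi_neg_left H.ne]; ring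
  · obtain ⟨K, hK⟩ := H.lip
    refine ⟨K, fun p q => ?_⟩
    have := hK p q
    rwa [← abs_neg, neg_sub', ] at this
  · intro p c hc
    have := H.mono (p + c • -w) c hc
    rw [smul_neg, neg_add_cancel_right] at this
    rw [smul_neg]
    linarith

theorem ne_of_det {y z : Pt} (h : det y z ≠ 0) : z ≠ y ∧ z ≠ -y := by
  constructor
  · rintro rfl; exact h (det_self _)
  · rintro rfl; exact h (by rw [det_neg_right, det_self, neg_zero])

theorem chi_of_det {y z : Pt} (h : det y z ≠ 0) : chi y z = 0 :=
  chi_other (ne_of_det h).1 (ne_of_det h).2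

theorem chi_of_det' {y z : Pt} (h : det y z ≠ 0) : chi z y = 0 :=
  chi_of_det (by rw [det_swap]; simpa using h)

theorem corner_unique {T : Rhombus} (hT : T.IsValid) {a a' y z : Pt} (h : Rep T a y z) (h' : Rep T a' y z) :
    a = a' := by
  have hd := h.det_ne hT
  obtain ⟨s, t, hs, ht, e⟩ := (h.mem_support a').1 ((h'.mem_support a').2 ⟨0, 0, by simp, by simp, by simp⟩)
  obtain ⟨s', t', hs', ht', e'⟩ := (h.mem_support (a' + y + z)).1
    ((h'.mem_support _).2 ⟨1, 1, by simp, by simp, by simp⟩)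
  have := comb_inj hd (s := s + 1) (t := t + 1) (s' := s') (t' := t') (by
    rw [e] at e'
    rw [add_assoc a (s' • y)] at e'
    have e2 : a + ((s + 1) • y + (t + 1) • z) = a + (s' • y + t' • z) := by rw [← e']; module
    exact add_left_cancel e2)
  have h1 : s = 0 := by linarith [hs.1, hs'.2, this.1]
  have h2 : t = 0 := by linarith [ht.1, ht'.2, this.2]
  rw [e, h1, h2]; simp

/-- behaviour of heights along a chain -/
theorem chain_height {x : Set Rhombus} (hx : FinTiling x) {y z : Pt} {A Z : ℕ → Pt}
    (h : ∀ n, A (n + 1) = A n + Z n ∧ (∃ T ∈ x, Rep T (A n) y (Z n)) ∧ 0 < det y (Z n) * det y z)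
    {hy hz : Pt → ℝ} (Hy : HT x y hy) (Hz : HT x z hz) (n : ℕ) :
    hy (A (n + 1)) = hy (A n) ∧ hz (A (n + 1)) = hz (A n) + chi z (Z n) ∧ 0 ≤ chi z (Z n) ∧ Z n ≠ -z := by
  obtain ⟨h1, ⟨T, hT, hr⟩, h3⟩ := h n
  have hd := hr.det_ne (hx.1.1 T hT)
  have e : A (n + 1) = A n + (0:ℝ) • y + (1:ℝ) • Z n := by rw [h1]; module
  have hne : Z n ≠ -z := by
    intro e
    rw [e, det_neg_right] at h3
    nlinarith [mul_self_nonneg (det y z)]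
  refine ⟨?_, ?_, ?_, hne⟩
  · rw [e, Hy.lin T hT _ _ _ hr 0 (by simp) 1 (by simp), chi_of_det hd]; simp
  · rw [e, Hz.lin T hT _ _ _ hr 0 (by simp) 1 (by simp)]; simp
  · by_cases h1 : Z n = z
    · rw [h1, chi_self]; norm_num
    · rw [chi_other h1 hne]

/-- a cross tile is determined by its heights -/
theorem cross_unique {x : Set Rhombus} (hx : FinTiling x) {u v : Pt} {hu hv : Pt → ℝ}
    (Hu : HT x u hu) (Hv : HT x v hv) {T T' : Rhombus} (hT : T ∈ x) (hT' : T' ∈ x) {a a' : Pt}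
    (h : Rep T a u v) (h' : Rep T' a' u v) (e1 : |hu a - hu a'| < 1) (e2 : |hv a - hv a'| < 1) :
    T = T' := by
  have hd := h.det_ne (hx.1.1 T hT)
  wlog hD : det u (a + ((1 - (hv a - hv a')) / 2) • v) * det u v ≤
      det u (a' + ((1 - (hv a' - hv a)) / 2) • v) * det u v generalizing T T' a a'
  · refine (this hT' hT h' h (by rwa [abs_sub_comm]) (by rwa [abs_sub_comm]) (not_le.1 hD).le).symm
  rw [abs_lt] at e1 e2
  obtain ⟨A, Z, hA0, hZ0, hch⟩ := chain hx hT h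
  obtain ⟨c, hc, hgrow⟩ := chain_growth hx hch
  set s := (1 - (hu a - hu a')) / 2 with hs
  set s' := (1 - (hu a' - hu a)) / 2 with hs'
  set t := (1 - (hv a - hv a')) / 2 with ht
  set t' := (1 - (hv a' - hv a)) / 2 with ht'
  set p' := a' + s' • u + t' • v with hp'
  have hs0 : 0 < s := by rw [hs]; linarith
  have hs1 : s < 1 := by rw [hs]; linarith
  have hs0' : 0 < s' := by rw [hs']; linarith
  have hs1' : s' < 1 := by rw [hs']; linarith
  have ht0 : 0 < t := by rw [ht]; linarith
  have ht1 : t < 1 := by rw [ht]; linarith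
  have ht0' : 0 < t' := by rw [ht']; linarith
  have ht1' : t' < 1 := by rw [ht']; linarith
  have cuv : chi u v = 0 := chi_of_det hd
  have cvu : chi v u = 0 := chi_of_det' hd
  have hup' : hu p' = hu a + s := by
    rw [hp', Hu.lin T' hT' _ _ _ h' s' ⟨hs0'.le, hs1'.le⟩ t' ⟨ht0'.le, ht1'.le⟩, chi_self, cuv, hs, hs']; ring
  have hvp' : hv p' = hv a + t := by
    rw [hp', Hv.lin T' hT' _ _ _ h' s' ⟨hs0'.le, hs1'.le⟩ t' ⟨ht0'.le, ht1'.le⟩, chi_self, cvu, ht, ht']; ring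
  have hD2 : 0 < det u v * det u v := mul_self_pos.2 hd
  have hDp : det u a * det u v + t * (det u v * det u v) ≤ det u p' * det u v := by
    rw [hp']
    simp only [det_add_right, det_smul_right, det_self] at hD ⊢
    linarith
  -- the crossing index
  have hex : ∃ n, det u p' * det u v < det u (A (n + 1)) * det u v := by
    obtain ⟨n, hn⟩ := exists_nat_gt ((det u p' * det u v - det u (A 0) * det u v) / c)
    rw [div_lt_iff₀ hc] at hn
    refine ⟨n, ?_⟩
    have := hgrow (n + 1)
    push_cast at this
    linarith
  classical
  obtain ⟨n, hn, hmin⟩ : ∃ n, det u p' * det u v < det u (A (n + 1)) * det u v ∧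
      det u (A n) * det u v ≤ det u p' * det u v := by
    refine ⟨Nat.find hex, Nat.find_spec hex, ?_⟩
    rcases hk : Nat.find hex with _ | m
    · rw [hA0]
      have := mul_pos ht0 hD2
      linarith
    · exact not_lt.1 (Nat.find_min hex (m := m) (by omega))
  obtain ⟨hn1, ⟨T1, hT1, hr1⟩, hpos⟩ := hch n
  rw [hn1, det_add_right u (A n), add_mul] at hn
  set r := (det u p' * det u v - det u (A n) * det u v) / (det u (Z n) * det u v) with hr
  have hr0 : 0 ≤ r := div_nonneg (by linarith) hpos.le
  have hr1' : r < 1 := by rw [hr, div_lt_one hpos]; linarith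
  have hrD : r * (det u (Z n) * det u v) = det u p' * det u v - det u (A n) * det u v := by
    rw [hr]; exact div_mul_cancel₀ _ hpos.ne'
  set p'' := A n + s • u + r • Z n with hp''
  have hdd : det u (p'' - p') = 0 := by
    have : det u (p'' - p') * det u v = 0 := by
      rw [hp'', det_sub_right, det_add_right, det_add_right, det_smul_right, det_smul_right, det_self]
      linarith
    exact (mul_eq_zero.1 this).resolve_right hd
  obtain ⟨d, hd'⟩ := det_eq_zero_of_mul Hu.ne hdd
  have hAu : ∀ n, hu (A n) = hu a := by
    intro n
    induction n with
    | zero => rw [hA0]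
    | succ n ih => rw [(chain_height hx hch Hu Hv n).1, ih]
  have hAv : ∀ n, hv a + 1 ≤ hv (A (n + 1)) := by
    intro n
    induction n with
    | zero => rw [(chain_height hx hch Hu Hv 0).2.1, hA0, hZ0, chi_self]
    | succ n ih =>
      have := chain_height hx hch Hu Hv (n + 1)
      linarith [this.2.1, this.2.2.1]
  have hup'' : hu p'' = hu p' := by
    rw [hp'', Hu.lin T1 hT1 _ _ _ hr1 s ⟨hs0.le, hs1.le⟩ r ⟨hr0, hr1'.le⟩, chi_self,
      chi_of_det (hr1.det_ne (hx.1.1 _ hT1)), hAu, hup']; ring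
  have hpp : p'' = p' := by
    rcases lt_trichotomy d 0 with h0 | h0 | h0
    · exfalso
      have m1 := min_le_left (-d) (s')
      have m2 := min_le_right (-d) (s')
      have m3 : 0 < min (-d) s' := lt_min (by linarith) hs0'
      set ε := min (-d) s'
      have k1 : hu (p' + (-ε) • u) = hu p' - ε := by
        have : p' + (-ε) • u = a' + (s' - ε) • u + t' • v := by rw [hp']; module
        rw [this, hp', Hu.lin T' hT' _ _ _ h' s' ⟨hs0'.le, hs1'.le⟩ t' ⟨ht0'.le, ht1'.le⟩,
          Hu.lin T' hT' _ _ _ h' (s' - ε) ⟨by linarith, by linarith⟩ t' ⟨ht0'.le, ht1'.le⟩, chi_self]; ring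
      have k2 := Hu.mono p'' (-d - ε) (by linarith)
      have k3 : p'' + (-d - ε) • u = p' + (-ε) • u := by
        have : p'' = p' + d • u := by rw [← hd']; abel
        rw [this]; module
      rw [k3, k1] at k2
      linarith
    · rw [h0, zero_smul, sub_eq_zero] at hd'; exact hd'
    · exfalso
      have m1 := min_le_left d (1 - s')
      have m2 := min_le_right d (1 - s')
      have m3 : 0 < min d (1 - s') := lt_min h0 (by linarith)
      set ε := min d (1 - s')
      have k1 : hu (p' + ε • u) = hu p' + ε := by
        have : p' + ε • u = a' + (s' + ε) • u + t' • v := by rw [hp']; module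
        rw [this, hp', Hu.lin T' hT' _ _ _ h' s' ⟨hs0'.le, hs1'.le⟩ t' ⟨ht0'.le, ht1'.le⟩,
          Hu.lin T' hT' _ _ _ h' (s' + ε) ⟨by linarith, by linarith⟩ t' ⟨ht0'.le, ht1'.le⟩, chi_self]; ring
      have k2 := Hu.mono (p' + ε • u) (d - ε) (by linarith)
      have k3 : p' + ε • u + (d - ε) • u = p'' := by
        have : p'' = p' + d • u := by rw [← hd']; abel
        rw [this]; module
      rw [k3, k1] at k2
      linarith
  have hp'T' : p' ∈ T'.support := (h'.mem_support _).2 ⟨s', t', ⟨hs0'.le, hs1'.le⟩, ⟨ht0'.le, ht1'.le⟩, rfl⟩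
  rcases n with _ | n
  · rw [hA0, hZ0] at hrD hp''
    have hrt : t ≤ r := by
      by_contra hlt
      have := mul_lt_mul_of_pos_right (not_le.1 hlt) hD2
      linarith
    refine interior_unique hx.1 hT hT' h hs0 hs1 (ht0.trans_le hrt) hr1' ?_
    rw [← hp'', hpp]; exact hp'T'
  · exfalso
    have k1 : hv p'' = hv (A (n + 1)) + s * chi v u + r * chi v (Z (n + 1)) :=
      Hv.lin T1 hT1 _ _ _ hr1 s ⟨hs0.le, hs1.le⟩ r ⟨hr0, hr1'.le⟩
    have k2 := mul_nonneg hr0 (chain_height hx hch Hu Hv (n + 1)).2.2.1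
    rw [cvu, mul_zero, hpp, hvp'] at k1
    linarith [hAv n]

/-- from a cross tile one reaches the next cross tile -/
theorem next_cross {x : Set Rhombus} (hx : FinTiling x) {y z : Pt} {hy hz : Pt → ℝ}
    (Hy : HT x y hy) (Hz : HT x z hz) {R : ℝ} (hR : ∀ p, ∃ T ∈ x, ∃ a, Rep T a y z ∧ ‖a - p‖ ≤ R)
    {T : Rhombus} (hT : T ∈ x) {a : Pt} (h : Rep T a y z) (col : Set Pt → ℕ)
    (hcol : ∀ T ∈ x, ∀ b w, Rep T b y w → w ≠ z → w ≠ -z → col (seg b y) = col (seg (b + w) y)) :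
    ∃ T' ∈ x, ∃ a', Rep T' a' y z ∧ hy a' = hy a ∧ hz a' = hz a + 1 ∧
      col (seg (a + z) y) = col (seg a' y) := by
  classical
  obtain ⟨A, Z, hA0, hZ0, hch⟩ := chain hx hT h
  obtain ⟨c, hc, hgrow⟩ := chain_growth hx hch
  have hst := chain_height hx hch Hy Hz
  -- as long as no cross tile is met
  have key : ∀ n, (∀ m < n, Z (m + 1) ≠ z) → hy (A (n + 1)) = hy a ∧ hz (A (n + 1)) = hz a + 1 ∧
      col (seg (a + z) y) = col (seg (A (n + 1)) y) := by
    intro n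
    induction n with
    | zero =>
      intro _
      obtain ⟨h1, h2, -, -⟩ := hst 0
      refine ⟨by rw [h1, hA0], by rw [h2, hA0, hZ0, chi_self], by rw [(hch 0).1, hA0, hZ0]⟩
    | succ n ih =>
      intro hm
      obtain ⟨i1, i2, i3⟩ := ih fun m hmn => hm m (by omega)
      obtain ⟨h1, h2, -, h4⟩ := hst (n + 1)
      have h5 := hm n (by omega)
      refine ⟨by rw [h1, i1], by rw [h2, i2, chi_other h5 h4, add_zero], ?_⟩
      obtain ⟨k1, ⟨T1, hT1, hr1⟩, -⟩ := hch (n + 1)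
      rw [i3, k1]
      exact hcol T1 hT1 _ _ hr1 h5 h4
  have hex : ∃ n, Z (n + 1) = z := by
    by_contra hno
    push Not at hno
    have hk := fun n => key n fun m _ => hno m
    choose τ hτ b hrb hb using fun n => hR (A (n + 1))
    obtain ⟨K, hK⟩ := Hy.lip
    obtain ⟨K', hK'⟩ := Hz.lip
    have hR0 : 0 ≤ R := (norm_nonneg _).trans (hb 0)
    have b1 : ∀ n, |hy (b n) - hy a| ≤ |K| * R := by
      intro n
      rw [← (hk n).1]
      refine (hK _ _).trans ?_
      exact mul_le_mul (le_abs_self _) (hb n) (norm_nonneg _) (abs_nonneg _)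
    have b2 : ∀ n, |hz (b n) - (hz a + 1)| ≤ |K'| * R := by
      intro n
      rw [← (hk n).2.1]
      refine (hK' _ _).trans ?_
      exact mul_le_mul (le_abs_self _) (hb n) (norm_nonneg _) (abs_nonneg _)
    let f : ℕ → ℤ × ℤ := fun n => (⌊hy (b n)⌋, ⌊hz (b n)⌋)
    have hfin : (range f).Finite := by
      refine ((finite_Icc ⌊hy a - |K| * R⌋ ⌊hy a + |K| * R⌋).prod
        (finite_Icc ⌊hz a + 1 - |K'| * R⌋ ⌊hz a + 1 + |K'| * R⌋)).subset ?_
      rintro _ ⟨n, rfl⟩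
      have h1 := abs_le.1 (b1 n)
      have h2 := abs_le.1 (b2 n)
      exact ⟨⟨Int.floor_le_floor (by linarith), Int.floor_le_floor (by linarith)⟩,
        ⟨Int.floor_le_floor (by linarith), Int.floor_le_floor (by linarith)⟩⟩
    have : Finite (range f) := hfin
    obtain ⟨w, hw⟩ := Finite.exists_infinite_fiber (rangeFactorization f)
    rw [Set.infinite_coe_iff] at hw
    obtain ⟨m, hm⟩ := hw.nonempty
    have hf : ∀ n ∈ rangeFactorization f ⁻¹' {w}, b n = b m := by
      intro n hn
      have e : f n = f m := by
        have : rangeFactorization f n = rangeFactorization f m := by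
          rw [show rangeFactorization f n = w from hn, show rangeFactorization f m = w from hm]
        exact congrArg Subtype.val this
      have e1 : ⌊hy (b n)⌋ = ⌊hy (b m)⌋ := congrArg Prod.fst e
      have e2 : ⌊hz (b n)⌋ = ⌊hz (b m)⌋ := congrArg Prod.snd e
      have := cross_unique hx Hy Hz (hτ n) (hτ m) (hrb n) (hrb m)
        (Int.abs_sub_lt_one_of_floor_eq_floor e1) (Int.abs_sub_lt_one_of_floor_eq_floor e2)
      have h2 := hrb m
      rw [← this] at h2
      exact corner_unique (hx.1.1 _ (hτ n)) (hrb n) h2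
    obtain ⟨N, hN⟩ := exists_nat_gt ((2 * (‖y‖ * (2 * R)) * |det y z| + det y (A (m + 1)) * det y z
      - det y (A 0) * det y z) / c)
    rw [div_lt_iff₀ hc] at hN
    obtain ⟨n, hn, hnN⟩ := hw.exists_gt N
    have h1 : ‖A (n + 1) - A (m + 1)‖ ≤ 2 * R := by
      have e : A (n + 1) - A (m + 1) = (b m - A (m + 1)) - (b n - A (n + 1)) := by rw [hf n hn]; abel
      rw [e]
      have := norm_sub_le (b m - A (m + 1)) (b n - A (n + 1))
      linarith [hb n, hb m]
    have h2 : |det y (A (n + 1) - A (m + 1))| ≤ 2 * (‖y‖ * (2 * R)) := by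
      refine (abs_det_le _ _).trans ?_
      have := mul_le_mul_of_nonneg_left h1 (norm_nonneg y)
      linarith
    have h3 : det y (A (n + 1)) * det y z - det y (A (m + 1)) * det y z ≤
        2 * (‖y‖ * (2 * R)) * |det y z| := by
      rw [← sub_mul, ← det_sub_right]
      refine (le_abs_self _).trans ?_
      rw [abs_mul]
      exact mul_le_mul_of_nonneg_right h2 (abs_nonneg _)
    have h4 := hgrow (n + 1)
    push_cast at h4
    have h5 : (N:ℝ) * c ≤ n * c := mul_le_mul_of_nonneg_right (by exact_mod_cast hnN.le) hc.le
    linarith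
  have hspec := Nat.find_spec hex
  obtain ⟨k1, k2, k3⟩ := key (Nat.find hex) fun m hm => Nat.find_min hex hm
  obtain ⟨-, ⟨T', hT', hr'⟩, -⟩ := hch (Nat.find hex + 1)
  rw [hspec] at hr'
  exact ⟨T', hT', _, hr', k1, k2, k3⟩

end Geo

namespace Geo

abbrev Wt : Type := ℕ × ℕ × ℕ × ℕ

open scoped Classical in
/-- the colour put on the edge `k` of the shape `r` by the Wang tile `t` -/
def sg (u v : Pt) (r : Rhombus) (k : Fin 4) (t : Wt) : ℕ :=
  if ∃ a, Rep r a u v ∧ r.edge k = seg a u then t.1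
  else if ∃ a, Rep r a u v ∧ r.edge k = seg (a + v) u then t.2.1
  else if ∃ a, Rep r a u v ∧ r.edge k = seg a v then t.2.2.1
  else if ∃ a, Rep r a u v ∧ r.edge k = seg (a + u) v then t.2.2.2
  else if ∃ a, r.edge k = seg a u then t.1
  else if ∃ a, r.edge k = seg a v then t.2.2.1
  else 0

/-! ### translation invariance -/

theorem seg_add (a d w : Pt) : seg (a + d) w = (fun q => q + d) '' seg a w := by
  ext p
  simp only [mem_seg, mem_image]
  constructor
  · rintro ⟨s, hs, rfl⟩
    exact ⟨a + s • w, ⟨s, hs, rfl⟩, by abel⟩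
  · rintro ⟨_, ⟨s, hs, rfl⟩, rfl⟩
    exact ⟨s, hs, by abel⟩

theorem edge_add {r r' : Rhombus} (h : r.SameShape r') (k : Fin 4) :
    r.edge k = (fun q => q + (r.pos - r'.pos)) '' r'.edge k := by
  obtain ⟨hu, hv⟩ := h
  fin_cases k
  · change r.edge 0 = _ '' r'.edge 0
    rw [edge0, edge0, ← seg_add, hu]; congr 1; abel
  · change r.edge 1 = _ '' r'.edge 1
    rw [edge1, edge1, ← seg_add, hu, hv]; congr 1; abel
  · change r.edge 2 = _ '' r'.edge 2
    rw [edge2, edge2, ← seg_add, hu, hv]; congr 1; abel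
  · change r.edge 3 = _ '' r'.edge 3
    rw [edge3, edge3, ← seg_add, hv]; congr 1; abel

theorem edge_iff {r r' : Rhombus} (h : r.SameShape r') (k : Fin 4) (b w : Pt) :
    r.edge k = seg (b + (r.pos - r'.pos)) w ↔ r'.edge k = seg b w := by
  rw [edge_add h, seg_add]
  exact (Set.image_injective.2 (add_left_injective _)).eq_iff

theorem rep_add {r r' : Rhombus} (h : r.SameShape r') {a y z : Pt} (hr : Rep r' a y z) :
    Rep r (a + (r.pos - r'.pos)) y z := by
  refine Rep.rec' (fun a y z => Rep r (a + (r.pos - r'.pos)) y z) ?_ ?_ ?_ hr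
  · rw [add_sub_cancel, ← h.1, ← h.2]; exact Rep.base r
  · intro a y z h; exact h.swap
  · intro a y z h; rw [add_right_comm]; exact h.flip

theorem sameShape_symm {r r' : Rhombus} (h : r.SameShape r') : r'.SameShape r := ⟨h.1.symm, h.2.symm⟩

theorem rep_iff {r r' : Rhombus} (h : r.SameShape r') (a y z : Pt) :
    Rep r (a + (r.pos - r'.pos)) y z ↔ Rep r' a y z := by
  constructor
  · intro hr
    have := rep_add (sameShape_symm h) hr
    have e : a + (r.pos - r'.pos) + (r'.pos - r.pos) = a := by abel
    rwa [e] at this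
  · exact rep_add h

theorem exists_shift (d : Pt) {P Q : Pt → Prop} (h : ∀ a, P (a + d) ↔ Q a) : (∃ a, P a) ↔ ∃ a, Q a := by
  constructor
  · rintro ⟨a, ha⟩; exact ⟨a - d, (h _).1 (by simpa using ha)⟩
  · rintro ⟨a, ha⟩; exact ⟨_, (h a).2 ha⟩

theorem sg_same {u v : Pt} {r r' : Rhombus} (h : r.SameShape r') (k : Fin 4) (t : Wt) :
    sg u v r k t = sg u v r' k t := by
  unfold sg
  have e1 : (∃ a, Rep r a u v ∧ r.edge k = seg a u) ↔ ∃ a, Rep r' a u v ∧ r'.edge k = seg a u :=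
    exists_shift (r.pos - r'.pos) fun a => and_congr (rep_iff h _ _ _) (edge_iff h _ _ _)
  have e2 : (∃ a, Rep r a u v ∧ r.edge k = seg (a + v) u) ↔ ∃ a, Rep r' a u v ∧ r'.edge k = seg (a + v) u :=
    exists_shift (r.pos - r'.pos) fun a => and_congr (rep_iff h _ _ _) (by
      rw [add_right_comm]; exact edge_iff h _ _ _)
  have e3 : (∃ a, Rep r a u v ∧ r.edge k = seg a v) ↔ ∃ a, Rep r' a u v ∧ r'.edge k = seg a v :=
    exists_shift (r.pos - r'.pos) fun a => and_congr (rep_iff h _ _ _) (edge_iff h _ _ _)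
  have e4 : (∃ a, Rep r a u v ∧ r.edge k = seg (a + u) v) ↔ ∃ a, Rep r' a u v ∧ r'.edge k = seg (a + u) v :=
    exists_shift (r.pos - r'.pos) fun a => and_congr (rep_iff h _ _ _) (by
      rw [add_right_comm]; exact edge_iff h _ _ _)
  have e5 : (∃ a, r.edge k = seg a u) ↔ ∃ a, r'.edge k = seg a u :=
    exists_shift (r.pos - r'.pos) fun a => edge_iff h _ _ _
  have e6 : (∃ a, r.edge k = seg a v) ↔ ∃ a, r'.edge k = seg a v :=
    exists_shift (r.pos - r'.pos) fun a => edge_iff h _ _ _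
  classical
  exact if_congr e1 rfl (if_congr e2 rfl (if_congr e3 rfl (if_congr e4 rfl
    (if_congr e5 rfl (if_congr e6 rfl rfl)))))

/-! ### distinct edges -/

theorem Rep.edges_distinct {T : Rhombus} (hT : T.IsValid) {a y z : Pt} (h : Rep T a y z) :
    seg a y ≠ seg (a + z) y ∧ seg a y ≠ seg a z ∧ seg a y ≠ seg (a + y) z := by
  have hd := h.det_ne hT
  have hz : z ≠ 0 := by rintro rfl; exact hd (det_zero_right _)
  have hn := ne_of_det hd
  refine ⟨fun e => ?_, fun e => ?_, fun e => ?_⟩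
  · rcases seg_inj e with ⟨h1, -⟩ | ⟨h1, -⟩
    · exact hz (by simpa using h1)
    · apply hn.2
      rw [add_assoc, left_eq_add] at h1
      exact eq_neg_of_add_eq_zero_left h1
  · rcases seg_inj e with ⟨-, h1⟩ | ⟨-, h1⟩
    · exact hn.1 h1.symm
    · exact hn.2 (by rw [h1, neg_neg])
  · rcases seg_inj e with ⟨-, h1⟩ | ⟨-, h1⟩
    · exact hn.1 h1.symm
    · exact hn.2 (by rw [h1, neg_neg])

theorem edge_injective {T : Rhombus} (hT : T.IsValid) {i j : Fin 4} (h : T.edge i = T.edge j) : i = j := by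
  obtain ⟨a1, a2, a3⟩ := (Rep.base T).edges_distinct hT
  obtain ⟨b1, b2, b3⟩ := (Rep.base T).swap.edges_distinct hT
  obtain ⟨c1, c2, c3⟩ := (Rep.base T).flip.edges_distinct hT
  rw [seg_neg] at c2
  rw [show T.pos + T.v + T.u = (T.pos + T.u) + T.v by abel, seg_neg] at c3
  rw [← edge0] at a1 a2 a3
  rw [← edge2] at a1 c2 c3 b3
  rw [← edge3] at a2 b1 b2 b3 c2
  rw [← edge1] at a3 b1 c3
  fin_cases i <;> fin_cases j <;> first | rfl | (exfalso; revert h; first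
    | exact a1 | exact a2 | exact a3 | exact b1 | exact b2 | exact b3 | exact c2 | exact c3
    | exact a1.symm | exact a2.symm | exact a3.symm | exact b1.symm | exact b2.symm | exact b3.symm
    | exact c2.symm | exact c3.symm)

theorem Rep.third {T : Rhombus} (hT : T.IsValid) {a b y z w : Pt} (h : Rep T a y z) (h' : Rep T b y w) :
    w = z ∨ w = -z := by
  have hn := ne_of_det (h'.det_ne hT)
  have he : ∃ k, T.edge k = seg b w := (h'.edges _).2 (.inr (.inr (.inl rfl)))
  rw [h.edges] at he
  rcases he with e | e | e | e <;> rcases seg_inj e with ⟨-, h1⟩ | ⟨-, h1⟩ <;> tauto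

theorem seg_corner {a b w : Pt} (hw : w ≠ 0) (h : seg a w = seg b w) : a = b := by
  rcases seg_inj h with ⟨h1, -⟩ | ⟨-, h1⟩
  · exact h1
  · exact (ne_neg_self hw h1).elim

theorem seg_other {a b y z : Pt} (hd : det y z ≠ 0) : seg a z ≠ seg b y := by
  intro h
  rcases seg_inj h with ⟨-, h1⟩ | ⟨-, h1⟩
  · exact (ne_of_det hd).1 h1
  · exact (ne_of_det hd).2 h1

/-! ### colours on cross tiles and other tiles -/

theorem sg_cross {u v : Pt} {T : Rhombus} (hT : T.IsValid) {a : Pt} (h : Rep T a u v) (F : Set Pt → ℕ) (t : Wt) :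
    (∀ k, F (T.edge k) = sg u v T k t) ↔
      (F (seg a u), F (seg (a + v) u), F (seg a v), F (seg (a + u) v)) = t := by
  have hd := h.det_ne hT
  have hd' := h.swap.det_ne hT
  have hc : ∀ b, Rep T b u v ↔ b = a := fun b => ⟨fun hb => corner_unique hT hb h, fun e => e ▸ h⟩
  obtain ⟨a1, a2, a3⟩ := h.edges_distinct hT
  obtain ⟨b1, b2, b3⟩ := h.swap.edges_distinct hT
  have g1 : ∀ k, T.edge k = seg a u → sg u v T k t = t.1 := by
    intro k hk
    unfold sg
    rw [if_pos ⟨a, h, hk⟩]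
  have g2 : ∀ k, T.edge k = seg (a + v) u → sg u v T k t = t.2.1 := by
    intro k hk
    unfold sg
    rw [if_neg, if_pos ⟨a, h, hk⟩]
    rintro ⟨b, hb, e⟩
    rw [(hc b).1 hb, hk] at e
    exact a1 e.symm
  have g3 : ∀ k, T.edge k = seg a v → sg u v T k t = t.2.2.1 := by
    intro k hk
    unfold sg
    rw [if_neg, if_neg, if_pos ⟨a, h, hk⟩]
    · rintro ⟨b, hb, e⟩
      rw [hk] at e
      exact seg_other hd e
    · rintro ⟨b, hb, e⟩
      rw [hk] at e
      exact seg_other hd e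
  have g4 : ∀ k, T.edge k = seg (a + u) v → sg u v T k t = t.2.2.2 := by
    intro k hk
    unfold sg
    rw [if_neg, if_neg, if_neg, if_pos ⟨a, h, hk⟩]
    · rintro ⟨b, hb, e⟩
      rw [(hc b).1 hb, hk] at e
      exact b1 e.symm
    · rintro ⟨b, hb, e⟩
      rw [hk] at e
      exact seg_other hd e
    · rintro ⟨b, hb, e⟩
      rw [hk] at e
      exact seg_other hd e
  constructor
  · intro hF
    obtain ⟨k1, e1⟩ := (h.edges (seg a u)).2 (.inl rfl)
    obtain ⟨k2, e2⟩ := (h.edges (seg (a + v) u)).2 (.inr (.inl rfl))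
    obtain ⟨k3, e3⟩ := (h.edges (seg a v)).2 (.inr (.inr (.inl rfl)))
    obtain ⟨k4, e4⟩ := (h.edges (seg (a + u) v)).2 (.inr (.inr (.inr rfl)))
    rw [← e1, ← e2, ← e3, ← e4, hF, hF, hF, hF, g1 k1 e1, g2 k2 e2, g3 k3 e3, g4 k4 e4]
  · rintro rfl k
    rcases (h.edges (T.edge k)).1 ⟨k, rfl⟩ with e | e | e | e
    · rw [g1 k e, e]
    · rw [g2 k e, e]
    · rw [g3 k e, e]
    · rw [g4 k e, e]

theorem sg_other {u v : Pt} (hd : det u v ≠ 0) {T : Rhombus} (hno : ∀ a, ¬ Rep T a u v) (F : Set Pt → ℕ) (t : Wt) :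
    (∀ k, F (T.edge k) = sg u v T k t) ↔
      ∀ k, (∀ b, T.edge k = seg b u → F (seg b u) = t.1) ∧ (∀ b, T.edge k = seg b v → F (seg b v) = t.2.2.1) ∧
        ((∀ b, T.edge k ≠ seg b u) → (∀ b, T.edge k ≠ seg b v) → F (T.edge k) = 0) := by
  refine forall_congr' fun k => ?_
  have hn : ∀ Q : Pt → Prop, ¬ ∃ a, Rep T a u v ∧ Q a := fun Q ⟨a, ha, _⟩ => hno a ha
  unfold sg
  rw [if_neg (hn _), if_neg (hn _), if_neg (hn _), if_neg (hn _)]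
  by_cases h1 : ∃ a, T.edge k = seg a u
  · rw [if_pos h1]
    obtain ⟨a, ha⟩ := h1
    constructor
    · intro h
      refine ⟨fun b hb => by rw [← hb, h], fun b hb => (seg_other hd (hb.symm.trans ha)).elim,
        fun h2 => (h2 a ha).elim⟩
    · intro h
      rw [ha]; exact h.1 a ha
  · rw [if_neg h1]
    by_cases h2 : ∃ a, T.edge k = seg a v
    · rw [if_pos h2]
      obtain ⟨a, ha⟩ := h2
      constructor
      · intro h
        refine ⟨fun b hb => (h1 ⟨b, hb⟩).elim, fun b hb => by rw [← hb, h], fun _ h2 => (h2 a ha).elim⟩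
      · intro h
        rw [ha]; exact h.2.1 a ha
    · rw [if_neg h2]
      push Not at h1 h2
      constructor
      · intro h
        exact ⟨fun b hb => (h1 b hb).elim, fun b hb => (h2 b hb).elim, fun _ _ => h⟩
      · intro h
        exact h.2.2 h1 h2

def Good (u v : Pt) (x : Set Rhombus) (W : List Wt) : Prop :=
  ∃ F : Set Pt → ℕ, ∀ T ∈ x, ∃ t ∈ W, ∀ k, F (T.edge k) = sg u v T k t

/-! ### the reduction -/

def red {k : ℕ} (u v : Pt) (shapes : Fin k → Rhombus) (W : List Wt) : List (SymbTile k) :=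
  (List.finRange k).flatMap fun i => W.map fun t =>
    (i, sg u v (shapes i) 0 t, sg u v (shapes i) 1 t, sg u v (shapes i) 2 t, sg u v (shapes i) 3 t)

theorem domino_iff {k : ℕ} (u v : Pt) (shapes : Fin k → Rhombus) (X : Set (Set Rhombus))
    (hsub : IsSubshift (Set.range shapes) X) (W : List Wt) :
    DominoPred shapes X (red u v shapes W) ↔ ∃ x ∈ X, Good u v x W := by
  have hcol : ∀ (i : Fin k) (t : Wt), SymbTile.colors ((i, sg u v (shapes i) 0 t, sg u v (shapes i) 1 t,
      sg u v (shapes i) 2 t, sg u v (shapes i) 3 t) : SymbTile k) = fun j => sg u v (shapes i) j t := by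
    intro i t
    funext j
    fin_cases j <;> rfl
  constructor
  · rintro ⟨xc, ⟨htil, hinj, hmatch⟩, hreal, hX⟩
    refine ⟨_, hX, ?_⟩
    classical
    let F : Set Pt → ℕ := fun e => if h : ∃ p : ColoredRhombus × Fin 4, p.1 ∈ xc ∧ p.1.shape.edge p.2 = e
      then (Classical.choose h).1.color (Classical.choose h).2 else 0
    have hF : ∀ t ∈ xc, ∀ j, F (t.shape.edge j) = t.color j := by
      intro t ht j
      have hex : ∃ p : ColoredRhombus × Fin 4, p.1 ∈ xc ∧ p.1.shape.edge p.2 = t.shape.edge j :=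
        ⟨(t, j), ht, rfl⟩
      simp only [F, dif_pos hex]
      obtain ⟨h1, h2⟩ := Classical.choose_spec hex
      generalize Classical.choose hex = p at h1 h2
      by_cases hs : p.1.shape = t.shape
      · have := hinj _ h1 _ ht hs
        rw [this] at h2 ⊢
        rw [edge_injective (htil.1 _ ⟨t, ht, rfl⟩) h2]
      · exact hmatch _ h1 _ ht hs _ _ h2
    refine ⟨F, ?_⟩
    rintro _ ⟨t, ht, rfl⟩
    obtain ⟨p, hp, hs, hc⟩ := hreal t ht
    simp only [red, List.mem_flatMap, List.mem_map] at hp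
    obtain ⟨i, -, w, hw, rfl⟩ := hp
    refine ⟨w, hw, fun j => ?_⟩
    rw [hF t ht, hc, hcol]
    exact (sg_same hs j w).symm
  · rintro ⟨x, hx, F, hF⟩
    have htil := (hsub.1 x hx)
    have herase : eraseColors ((fun T : Rhombus => (⟨T, fun j => F (T.edge j)⟩ : ColoredRhombus)) '' x) = x := by
      unfold eraseColors
      rw [image_image]; simp
    refine ⟨(fun T : Rhombus => (⟨T, fun j => F (T.edge j)⟩ : ColoredRhombus)) '' x, ⟨?_, ?_, ?_⟩, ?_, ?_⟩
    · rw [herase]; exact htil.1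
    · rintro _ ⟨T, hT, rfl⟩ _ ⟨T', hT', rfl⟩ h
      change T = T' at h
      rw [h]
    · rintro _ ⟨T, hT, rfl⟩ _ ⟨T', hT', rfl⟩ _ i j h
      exact congrArg F h
    · rintro _ ⟨T, hT, rfl⟩
      obtain ⟨t, ht, hk⟩ := hF T hT
      obtain ⟨_, ⟨i, rfl⟩, hs⟩ := htil.2 T hT
      refine ⟨_, List.mem_flatMap.2 ⟨i, List.mem_finRange i, List.mem_map.2 ⟨t, ht, rfl⟩⟩, hs, ?_⟩
      rw [hcol]
      funext j
      exact (hk j).trans (sg_same hs j t)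
    · rw [herase]; exact hx

end Geo

namespace Geo

theorem HT.step {x : Set Rhombus} {w : Pt} {h : Pt → ℝ} (H : HT x w h) {T : Rhombus} (hT : T ∈ x) {a y z : Pt}
    (hr : Rep T a y z) : h (a + z) = h a + chi w z := by
  have := H.lin T hT a y z hr 0 (by simp) 1 (by simp)
  simpa using this

theorem cross_fwd {x : Set Rhombus} (hx : FinTiling x) {y z : Pt} {hy hz : Pt → ℝ}
    (Hy : HT x y hy) (Hz : HT x z hz) {R : ℝ} (hR : ∀ p, ∃ T ∈ x, ∃ a, Rep T a y z ∧ ‖a - p‖ ≤ R)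
    {T : Rhombus} (hT : T ∈ x) {a : Pt} (h : Rep T a y z) :
    ∃ T' ∈ x, ∃ a', Rep T' a' y z ∧ hy a' = hy a ∧ hz a' = hz a + 1 := by
  obtain ⟨T', hT', a', h1, h2, h3, -⟩ := next_cross hx Hy Hz hR hT h (fun _ => 0) (fun _ _ _ _ _ _ _ => rfl)
  exact ⟨T', hT', a', h1, h2, h3⟩

theorem cross_bwd {x : Set Rhombus} (hx : FinTiling x) {y z : Pt} {hy hz : Pt → ℝ}
    (Hy : HT x y hy) (Hz : HT x z hz) {R : ℝ} (hR : ∀ p, ∃ T ∈ x, ∃ a, Rep T a y z ∧ ‖a - p‖ ≤ R)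
    {T : Rhombus} (hT : T ∈ x) {a : Pt} (h : Rep T a y z) :
    ∃ T' ∈ x, ∃ a', Rep T' a' y z ∧ hy a' = hy a ∧ hz a' = hz a - 1 := by
  have hd := h.det_ne (hx.1.1 T hT)
  have hR' : ∀ p, ∃ T ∈ x, ∃ a, Rep T a y (-z) ∧ ‖a - p‖ ≤ R + ‖z‖ := by
    intro p
    obtain ⟨T, hT, a, h1, h2⟩ := hR p
    refine ⟨T, hT, a + z, h1.flip, ?_⟩
    rw [add_sub_right_comm]
    exact (norm_add_le _ _).trans (by linarith)
  obtain ⟨T', hT', a', h1, h2, h3⟩ := cross_fwd hx Hy Hz.neg hR' hT h.flip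
  have h1' := h1.flip
  rw [neg_neg] at h1'
  refine ⟨T', hT', a' + -z, h1', ?_, ?_⟩
  · rw [Hy.step hT' h1, h2, Hy.step hT h, chi_neg Hy.ne, chi_of_det hd]; ring
  · have e := Hz.step hT' h1
    have e' := Hz.step hT h
    rw [chi_neg Hz.ne, chi_self] at e
    rw [chi_self] at e'
    linarith

theorem grid {x : Set Rhombus} (hx : FinTiling x) {u v : Pt} {hu hv : Pt → ℝ}
    (Hu : HT x u hu) (Hv : HT x v hv) {R : ℝ} (hR : ∀ p, ∃ T ∈ x, ∃ a, Rep T a u v ∧ ‖a - p‖ ≤ R) :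
    ∃ (T : ℤ → ℤ → Rhombus) (a : ℤ → ℤ → Pt) (c d : ℝ), ∀ m n, T m n ∈ x ∧ Rep (T m n) (a m n) u v ∧
      hv (a m n) = c + m ∧ hu (a m n) = d + n := by
  obtain ⟨T0, hT0, a0, h0, -⟩ := hR 0
  have hRs : ∀ p, ∃ T ∈ x, ∃ a, Rep T a v u ∧ ‖a - p‖ ≤ R := by
    intro p
    obtain ⟨T, hT, a, h1, h2⟩ := hR p
    exact ⟨T, hT, a, h1.swap, h2⟩
  have key1 : ∀ m : ℤ, ∃ T ∈ x, ∃ a, Rep T a u v ∧ hv a = hv a0 + m ∧ hu a = hu a0 := by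
    intro m
    induction m using Int.induction_on with
    | zero => exact ⟨T0, hT0, a0, h0, by simp, rfl⟩
    | succ i ih =>
      obtain ⟨T, hT, a, h, h1, h2⟩ := ih
      obtain ⟨T', hT', a', h', h3, h4⟩ := cross_fwd hx Hu Hv hR hT h
      exact ⟨T', hT', a', h', by rw [h4, h1]; push_cast; ring, h3.trans h2⟩
    | pred i ih =>
      obtain ⟨T, hT, a, h, h1, h2⟩ := ih
      obtain ⟨T', hT', a', h', h3, h4⟩ := cross_bwd hx Hu Hv hR hT h
      exact ⟨T', hT', a', h', by rw [h4, h1]; push_cast; ring, h3.trans h2⟩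
  have key2 : ∀ m n : ℤ, ∃ T ∈ x, ∃ a, Rep T a u v ∧ hv a = hv a0 + m ∧ hu a = hu a0 + n := by
    intro m n
    induction n using Int.induction_on with
    | zero =>
      obtain ⟨T, hT, a, h, h1, h2⟩ := key1 m
      exact ⟨T, hT, a, h, h1, by simpa using h2⟩
    | succ i ih =>
      obtain ⟨T, hT, a, h, h1, h2⟩ := ih
      obtain ⟨T', hT', a', h', h3, h4⟩ := cross_fwd hx Hv Hu hRs hT h.swap
      exact ⟨T', hT', a', h'.swap, h3.trans h1, by rw [h4, h2]; push_cast; ring⟩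
    | pred i ih =>
      obtain ⟨T, hT, a, h, h1, h2⟩ := ih
      obtain ⟨T', hT', a', h', h3, h4⟩ := cross_bwd hx Hv Hu hRs hT h.swap
      exact ⟨T', hT', a', h'.swap, h3.trans h1, by rw [h4, h2]; push_cast; ring⟩
  choose T hT a h using key2
  exact ⟨T, a, hv a0, hu a0, fun m n => ⟨hT m n, h m n⟩⟩

theorem good_to_wang {x : Set Rhombus} (hx : FinTiling x) {u v : Pt} (hd : det u v ≠ 0)
    {R : ℝ} (hR : ∀ p, ∃ T ∈ x, ∃ a, Rep T a u v ∧ ‖a - p‖ ≤ R) {W : List Wt} (hG : Good u v x W) :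
    Hier.WangTiles W := by
  obtain ⟨F, hF⟩ := hG
  have hu0 : u ≠ 0 := by rintro rfl; exact hd (det_zero_left _)
  have hv0 : v ≠ 0 := by rintro rfl; exact hd (det_zero_right _)
  obtain ⟨hu, Hu⟩ := exists_HT hx hu0
  obtain ⟨hv, Hv⟩ := exists_HT hx hv0
  obtain ⟨T, C, c, d, hg⟩ := grid hx Hu Hv hR
  have hRs : ∀ p, ∃ T ∈ x, ∃ a, Rep T a v u ∧ ‖a - p‖ ≤ R := by
    intro p
    obtain ⟨T, hT, a, h1, h2⟩ := hR p
    exact ⟨T, hT, a, h1.swap, h2⟩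
  have uniq : ∀ m n : ℤ, ∀ T' ∈ x, ∀ a', Rep T' a' u v → hv a' = c + m → hu a' = d + n → a' = C m n := by
    intro m n T' hT' a' h' e1 e2
    obtain ⟨g1, g2, g3, g4⟩ := hg m n
    have : T' = T m n := cross_unique hx Hu Hv hT' g1 h' g2 (by rw [e2, g4]; simp) (by rw [e1, g3]; simp)
    rw [this] at h'
    exact corner_unique (hx.1.1 _ g1) h' g2
  have colu : ∀ T ∈ x, ∀ b w, Rep T b u w → w ≠ v → w ≠ -v → F (seg b u) = F (seg (b + w) u) := by
    intro T hT b w hr h1 h2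
    obtain ⟨t, -, ht⟩ := hF T hT
    have hno : ∀ a, ¬ Rep T a u v := fun a ha => by
      rcases ha.third (hx.1.1 T hT) hr with e | e
      · exact h1 e
      · exact h2 e
    rw [sg_other hd hno] at ht
    obtain ⟨k1, e1⟩ := (hr.edges (seg b u)).2 (.inl rfl)
    obtain ⟨k2, e2⟩ := (hr.edges (seg (b + w) u)).2 (.inr (.inl rfl))
    rw [(ht k1).1 b e1, (ht k2).1 _ e2]
  have colv : ∀ T ∈ x, ∀ b w, Rep T b v w → w ≠ u → w ≠ -u → F (seg b v) = F (seg (b + w) v) := by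
    intro T hT b w hr h1 h2
    obtain ⟨t, -, ht⟩ := hF T hT
    have hno : ∀ a, ¬ Rep T a u v := fun a ha => by
      rcases ha.swap.third (hx.1.1 T hT) hr with e | e
      · exact h1 e
      · exact h2 e
    rw [sg_other hd hno] at ht
    obtain ⟨k1, e1⟩ := (hr.edges (seg b v)).2 (.inl rfl)
    obtain ⟨k2, e2⟩ := (hr.edges (seg (b + w) v)).2 (.inr (.inl rfl))
    rw [(ht k1).2.1 b e1, (ht k2).2.1 _ e2]
  refine ⟨fun m n => F (seg (C m n) u), fun m n => F (seg (C m n) v), fun m n => ?_⟩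
  obtain ⟨g1, g2, g3, g4⟩ := hg m n
  have s1 : F (seg (C m n + v) u) = F (seg (C (m + 1) n) u) := by
    obtain ⟨T', hT', a', h1, h2, h3, h4⟩ := next_cross hx Hu Hv hR g1 g2 F colu
    rw [h4, uniq (m + 1) n T' hT' a' h1 (by rw [h3, g3]; push_cast; ring) (h2.trans g4)]
  have s2 : F (seg (C m n + u) v) = F (seg (C m (n + 1)) v) := by
    obtain ⟨T', hT', a', h1, h2, h3, h4⟩ := next_cross hx Hv Hu hRs g1 g2.swap F colv
    rw [h4, uniq m (n + 1) T' hT' a' h1.swap (h2.trans g3) (by rw [h3, g4]; push_cast; ring)]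
  obtain ⟨t, htW, ht⟩ := hF _ g1
  rw [sg_cross (hx.1.1 _ g1) g2] at ht
  rw [s1, s2] at ht
  change (F (seg (C m n) u), F (seg (C (m + 1) n) u), F (seg (C m n) v), F (seg (C m (n + 1)) v)) ∈ W
  rw [ht]; exact htW

theorem wang_to_good {x : Set Rhombus} (hx : FinTiling x) {u v : Pt} (hd : det u v ≠ 0)
    {W : List Wt} (hW : Hier.WangTiles W) : Good u v x W := by
  classical
  obtain ⟨hE, vE, hW⟩ := hW
  have hu0 : u ≠ 0 := by rintro rfl; exact hd (det_zero_left _)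
  have hv0 : v ≠ 0 := by rintro rfl; exact hd (det_zero_right _)
  have hd' : det v u ≠ 0 := by rw [det_swap]; simpa using hd
  obtain ⟨hu, Hu⟩ := exists_HT hx hu0
  obtain ⟨hv, Hv⟩ := exists_HT hx hv0
  let F : Set Pt → ℕ := fun e =>
    if h : ∃ a, e = seg a u then hE ⌊hv h.choose⌋ ⌊hu h.choose⌋
    else if h : ∃ a, e = seg a v then vE ⌊hv h.choose⌋ ⌊hu h.choose⌋ else 0
  have F1 : ∀ a, F (seg a u) = hE ⌊hv a⌋ ⌊hu a⌋ := by
    intro a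
    have h : ∃ b, seg a u = seg b u := ⟨a, rfl⟩
    have e : h.choose = a := (seg_corner hu0 h.choose_spec).symm
    simp only [F, dif_pos h, e]
  have F2 : ∀ a, F (seg a v) = vE ⌊hv a⌋ ⌊hu a⌋ := by
    intro a
    have hn : ¬ ∃ b, seg a v = seg b u := fun ⟨b, hb⟩ => seg_other hd hb
    have h : ∃ b, seg a v = seg b v := ⟨a, rfl⟩
    have e : h.choose = a := (seg_corner hv0 h.choose_spec).symm
    simp only [F, dif_neg hn, dif_pos h, e]
  have F3 : ∀ e, (∀ b, e ≠ seg b u) → (∀ b, e ≠ seg b v) → F e = 0 := by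
    intro e h1 h2
    have n1 : ¬ ∃ b, e = seg b u := fun ⟨b, hb⟩ => h1 b hb
    have n2 : ¬ ∃ b, e = seg b v := fun ⟨b, hb⟩ => h2 b hb
    simp only [F, dif_neg n1, dif_neg n2]
  have floor1 : ∀ r : ℝ, ⌊r + 1⌋ = ⌊r⌋ + 1 := fun r => Int.floor_add_one r
  refine ⟨F, fun T hT => ?_⟩
  by_cases hc : ∃ a, Rep T a u v
  · obtain ⟨a, ha⟩ := hc
    refine ⟨_, hW ⌊hv a⌋ ⌊hu a⌋, ?_⟩
    rw [sg_cross (hx.1.1 T hT) ha, F1, F1, F2, F2, Hv.step hT ha, Hu.step hT ha, Hv.step hT ha.swap,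
      Hu.step hT ha.swap, chi_self, chi_self, chi_of_det hd, chi_of_det' hd, floor1, floor1, add_zero, add_zero]
  push Not at hc
  by_cases h1 : ∃ k b, T.edge k = seg b u
  · obtain ⟨k, b, hk⟩ := h1
    obtain ⟨w, hr⟩ := Rep.of_edge hk
    have hdw := hr.det_ne (hx.1.1 T hT)
    have hw1 : w ≠ v := by rintro rfl; exact hc _ hr
    have hw2 : w ≠ -v := by
      rintro rfl
      have := hr.flip
      rw [neg_neg] at this
      exact hc _ this
    refine ⟨_, hW ⌊hv b⌋ ⌊hu b⌋, ?_⟩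
    rw [sg_other hd hc]
    have val : ∀ b', F (seg b' u) = F (seg b u) ∨ (∀ k, T.edge k ≠ seg b' u) := by
      intro b'
      by_cases h : ∃ k, T.edge k = seg b' u
      · left
        rw [hr.edges] at h
        rcases h with e | e | e | e
        · rw [e]
        · rw [e, F1, F1, Hv.step hT hr, Hu.step hT hr, chi_of_det hdw, chi_other hw1 hw2, add_zero, add_zero]
        · exact (seg_other hdw e.symm).elim
        · exact (seg_other hdw e.symm).elim
      · right; simpa using h
    intro j
    refine ⟨fun b' hb' => ?_, fun b' hb' => ?_, F3 _⟩
    · rcases val b' with e | e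
      · rw [e, F1]
      · exact (e j hb').elim
    · exfalso
      have := (hr.edges (seg b' v)).1 ⟨j, hb'⟩
      rcases this with e | e | e | e
      · exact seg_other hd e
      · exact seg_other hd e
      · rcases seg_inj e with ⟨-, e⟩ | ⟨-, e⟩
        · exact hw1 e.symm
        · exact hw2 (by rw [e, neg_neg])
      · rcases seg_inj e with ⟨-, e⟩ | ⟨-, e⟩
        · exact hw1 e.symm
        · exact hw2 (by rw [e, neg_neg])
  push Not at h1
  by_cases h2 : ∃ k b, T.edge k = seg b v
  · obtain ⟨k, b, hk⟩ := h2
    obtain ⟨w, hr⟩ := Rep.of_edge hk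
    have hdw := hr.det_ne (hx.1.1 T hT)
    have hw1 : w ≠ u := by rintro rfl; exact hc _ hr.swap
    have hw2 : w ≠ -u := by
      rintro rfl
      have := hr.flip
      rw [neg_neg] at this
      exact hc _ this.swap
    refine ⟨_, hW ⌊hv b⌋ ⌊hu b⌋, ?_⟩
    rw [sg_other hd hc]
    intro j
    refine ⟨fun b' hb' => (h1 _ _ hb').elim, fun b' hb' => ?_, F3 _⟩
    have h := (hr.edges (seg b' v)).1 ⟨j, hb'⟩
    change F (seg b' v) = vE _ _
    rcases h with e | e | e | e
    · rw [e, F2]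
    · rw [e, F2, Hv.step hT hr, Hu.step hT hr, chi_of_det hdw, chi_other hw1 hw2, add_zero, add_zero]
    · exact (seg_other hdw e.symm).elim
    · exact (seg_other hdw e.symm).elim
  push Not at h2
  refine ⟨_, hW 0 0, ?_⟩
  rw [sg_other hd hc]
  exact fun j => ⟨fun b hb => (h1 _ _ hb).elim, fun b hb => (h2 _ _ hb).elim, F3 _⟩

end Geo

namespace Geo

theorem good_iff {k : ℕ} (shapes : Fin k → Rhombus) (X : Set (Set Rhombus))
    (hsub : IsSubshift (Set.range shapes) X) (hne : X.Nonempty) (hur : ShapeUniformlyRecurrent X) :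
    ∃ u v : Pt, ∀ W : List Wt, DominoPred shapes X (red u v shapes W) ↔ Hier.WangTiles W := by
  obtain ⟨x0, hx0⟩ := hne
  have fin : ∀ x ∈ X, FinTiling x := by
    intro x hx
    obtain ⟨h1, h2⟩ := hsub.1 x hx
    refine ⟨h1, (Set.finite_range fun i => ((shapes i).u, (shapes i).v)).subset ?_⟩
    rintro _ ⟨T, hT, rfl⟩
    obtain ⟨_, ⟨i, rfl⟩, hs⟩ := h2 T hT
    exact ⟨i, Prod.ext hs.1.symm hs.2.symm⟩
  obtain ⟨r, hr, -⟩ := cover (fin x0 hx0).1 0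
  have hd : det r.u r.v ≠ 0 := det_ne_of_valid ((fin x0 hx0).1.1 r hr)
  refine ⟨r.u, r.v, fun W => ?_⟩
  rw [domino_iff r.u r.v shapes X hsub W]
  constructor
  · rintro ⟨x, hx, hG⟩
    obtain ⟨R, -, hR⟩ := hur r ⟨x0, hx0, r, hr, rfl, rfl⟩ x hx
    refine good_to_wang (fin x hx) hd (R := R) (fun p => ?_) hG
    obtain ⟨s, hs, he, hb⟩ := hR p
    refine ⟨s, hs, s.pos, ?_, ?_⟩
    · rw [← he.1, ← he.2]; exact Rep.base s
    · have := hb (((Rep.base s).mem_support s.pos).2 ⟨0, 0, by simp, by simp, by simp⟩)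
      rwa [mem_closedBall, dist_eq_norm] at this
  · intro hW
    exact ⟨x0, hx0, wang_to_good (fin x0 hx0) hd hW⟩

theorem prim_ite {α : Type} [Primcodable α] (p : Prop) [Decidable p] {f g : α → ℕ} (hf : Primrec f) (hg : Primrec g) :
    Primrec fun a => if p then f a else g a := by
  by_cases h : p
  · simpa only [if_pos h] using hf
  · simpa only [if_neg h] using hg

theorem sg_prim (u v : Pt) (r : Rhombus) (k : Fin 4) : Primrec (sg u v r k) := by
  classical
  have p1 : Primrec fun t : Wt => t.1 := Primrec.fst
  have p2 : Primrec fun t : Wt => t.2.1 := Primrec.fst.comp Primrec.snd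
  have p3 : Primrec fun t : Wt => t.2.2.1 := Primrec.fst.comp (Primrec.snd.comp Primrec.snd)
  have p4 : Primrec fun t : Wt => t.2.2.2 := Primrec.snd.comp (Primrec.snd.comp Primrec.snd)
  exact prim_ite _ p1 (prim_ite _ p2 (prim_ite _ p3 (prim_ite _ p4 (prim_ite _ p1 (prim_ite _ p3 (Primrec.const 0))))))

theorem red_prim {k : ℕ} (u v : Pt) (shapes : Fin k → Rhombus) : Primrec (red u v shapes) := by
  have key : ∀ l : List (Fin k), Primrec fun W : List Wt => l.flatMap fun i => W.map fun t =>
      ((i, sg u v (shapes i) 0 t, sg u v (shapes i) 1 t, sg u v (shapes i) 2 t, sg u v (shapes i) 3 t) :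
        SymbTile k) := by
    intro l
    induction l with
    | nil => exact Primrec.const []
    | cons i l ih =>
      simp only [List.flatMap_cons]
      refine Primrec.list_append.comp (Primrec.list_map Primrec.id ?_) ih
      have : Primrec fun t : Wt => ((i, sg u v (shapes i) 0 t, sg u v (shapes i) 1 t, sg u v (shapes i) 2 t,
          sg u v (shapes i) 3 t) : SymbTile k) :=
        (Primrec.const i).pair ((sg_prim _ _ _ _).pair ((sg_prim _ _ _ _).pair
          ((sg_prim _ _ _ _).pair (sg_prim _ _ _ _))))
      exact this.comp Primrec.snd
  exact key _

theorem hard {k : ℕ} (shapes : Fin k → Rhombus) (X : Set (Set Rhombus))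
    (hsub : IsSubshift (Set.range shapes) X) (hne : X.Nonempty) (hur : ShapeUniformlyRecurrent X) :
    Pi01Hard (DominoPred shapes X) := by
  intro β _ B ⟨f, hf, hB⟩
  obtain ⟨u, v, h⟩ := good_iff shapes X hsub hne hur
  obtain ⟨W, hW, hBW⟩ := Hier.berger B f hf hB
  exact ⟨fun b => red u v shapes (W b), (red_prim u v shapes).to_comp.comp hW, fun b => (hBW b).trans (h _).symm⟩

theorem nothalt_pi01 : Pi01 fun c : Nat.Partrec.Code => ¬ (c.eval 0).Dom := by
  refine ⟨fun c n => !(Nat.Partrec.Code.evaln n c 0).isSome, ?_, ?_⟩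
  · apply Primrec₂.to_comp
    refine Primrec.not.comp (Primrec.option_isSome.comp ?_)
    exact Nat.Partrec.Code.primrec_evaln.comp
      ((Primrec.snd.pair Primrec.fst).pair (Primrec.const 0))
  · intro c
    change (¬ (c.eval 0).Dom) ↔ ∀ n, (!(Nat.Partrec.Code.evaln n c 0).isSome) = true
    rw [Part.dom_iff_mem]
    constructor
    · intro h n
      by_contra hn
      simp only [Bool.not_eq_true', Bool.not_eq_false, Option.isSome_iff_exists] at hn
      obtain ⟨y, hy⟩ := hn
      exact h ⟨y, Nat.Partrec.Code.evaln_sound hy⟩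
    · rintro h ⟨y, hy⟩
      obtain ⟨n, hn⟩ := Nat.Partrec.Code.evaln_complete.1 hy
      have := h n
      rw [Option.mem_def.1 hn] at this
      simp at this

theorem not_computable_of_hard {α : Type} [Primcodable α] {A : α → Prop} (h : Pi01Hard A) :
    ¬ ComputablePred A := by
  intro hA
  have h1 := h _ _ nothalt_pi01
  have h2 : ComputablePred fun c : Nat.Partrec.Code => ¬ (c.eval 0).Dom :=
    ComputablePred.computable_of_manyOneReducible h1 hA
  have h3 := h2.not
  simp only [not_not] at h3
  exact ComputablePred.halting_problem 0 h3

end Geo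

/-- For a non-empty, shape uniformly recurrent subshift `X` of
edge-to-edge rhombus tilings, `Domino(X)` is `Π⁰₁`-hard, hence undecidable. -/
theorem statement_9 (k : ℕ) (shapes : Fin k → Rhombus)
    (hval : ∀ i, (shapes i).IsValid)
    (X : Set (Set Rhombus)) (hsub : IsSubshift (Set.range shapes) X)
    (hne : X.Nonempty) (hur : ShapeUniformlyRecurrent X) :
    Pi01Hard (DominoPred shapes X) ∧ ¬ ComputablePred (DominoPred shapes X) := by
  have h := Geo.hard shapes X hsub hne hur
  exact ⟨h, Geo.not_computable_of_hard h⟩
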